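/- Let K be a compact metric space with dim K = 2 and dim K² = 3 (for instance the Boltyanskiĭ surface), and let σ: K^ℤ → K^ℤ be the full shift on the alphabet K. Then mdim(K^ℤ, σ) = 1; in particular mdim(K^ℤ, σ) < dim K, so the inequality mdim(K^ℤ, σ) ≤ dim K can be strict. -/

import Mathlib

open Filter Set
open scoped ENNReal

namespace MeanDimPaper

variable {X : Type*} [TopologicalSpace X]

/-- `α` is an open cover of `X`. -/
def IsOpenCover (α : Set (Set X)) : Prop :=
  (∀ U ∈ α, IsOpen U) ∧ ⋃₀ α = Set.univ

/-- The order of a cover `α`: the maximum `n ≥ 0` such that there exist `n + 1`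
pairwise distinct members of `α` with nonempty common intersection. -/
noncomputable def ord (α : Set (Set X)) : ℕ∞ :=
  ⨆ n ∈ {n : ℕ | ∃ f : Fin (n + 1) → Set X,
      Function.Injective f ∧ (∀ i, f i ∈ α) ∧ (⋂ i, f i).Nonempty}, (n : ℕ∞)

/-- `β` refines `α`: every member of `β` is contained in some member of `α`. -/
def Refines (β α : Set (Set X)) : Prop := ∀ V ∈ β, ∃ U ∈ α, V ⊆ U

/-- `D(α)`: the minimum of `ord β` over open covers `β` refining `α`. -/
noncomputable def covD (α : Set (Set X)) : ℕ∞ :=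
  ⨅ β ∈ {β : Set (Set X) | IsOpenCover β ∧ Refines β α}, ord β

/-- Topological (covering) dimension: the supremum of `D(α)` over open covers `α`. -/
noncomputable def topDim (X : Type*) [TopologicalSpace X] : ℕ∞ :=
  ⨆ α ∈ {α : Set (Set X) | IsOpenCover α}, covD α

/-- Diameter of a set with respect to a distance function `d`. -/
noncomputable def diamD (d : X → X → ℝ) (U : Set X) : ℝ :=
  sSup {r | ∃ x ∈ U, ∃ y ∈ U, r = d x y}

/-- Mesh of a cover: the supremum of the diameters of its members. -/
noncomputable def mesh (d : X → X → ℝ) (α : Set (Set X)) : ℝ :=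
  sSup (diamD d '' α)

/-- `widim_ε(X, d)`: the minimum of `D(α)` over open covers `α` with `mesh(α, d) < ε`. -/
noncomputable def widim (ε : ℝ) (d : X → X → ℝ) : ℕ∞ :=
  ⨅ α ∈ {α : Set (Set X) | IsOpenCover α ∧ mesh d α < ε}, covD α

/-- `d` is a metric on `X` compatible with the topology of `X`. -/
structure IsCompatMetric {X : Type*} [TopologicalSpace X] (d : X → X → ℝ) : Prop where
  refl : ∀ x, d x x = 0
  eq_of : ∀ x y, d x y = 0 → x = y
  symm : ∀ x y, d x y = d y x
  triangle : ∀ x y z, d x z ≤ d x y + d y z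
  isOpen_iff : ∀ U : Set X, IsOpen U ↔ ∀ x ∈ U, ∃ ε > 0, ∀ y, d x y < ε → y ∈ U

/-- The dynamical distance `d_n(x, y) = max_{0 ≤ i < n} d(Tⁱ x, Tⁱ y)`. -/
noncomputable def dynDist (d : X → X → ℝ) (T : X → X) (n : ℕ) (x y : X) : ℝ :=
  sSup {r | ∃ i < n, r = d (T^[i] x) (T^[i] y)}

/-- Mean dimension `mdim(X, T)` computed with the metric `d`:
`lim_{ε → 0} lim_{n → ∞} widim_ε(X, d_n) / n`.  The inner limit exists (by
subadditivity of `n ↦ widim_ε(X, d_n)`) so it coincides with the liminf, and the inner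
quantity is monotone as `ε` decreases, so the limit as `ε → 0` is the supremum over
`ε > 0`. -/
noncomputable def mdim (T : X → X) (d : X → X → ℝ) : ℝ≥0∞ :=
  ⨆ (ε : ℝ) (_ : 0 < ε),
    Filter.liminf (fun n : ℕ => (widim ε (dynDist d T n) : ℝ≥0∞) / (n : ℝ≥0∞)) Filter.atTop

/-- The full shift `σ` on the alphabet `K`: `σ((xₙ)ₙ) = (xₙ₊₁)ₙ`. -/
def shift (K : Type*) : (ℤ → K) → ℤ → K := fun x n => x (n + 1)

end MeanDimPaper

open Set Filter

namespace MD

section chains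
variable {R : Type*} [CommRing R] {X Y Z : Type*}

/-- augmented ordered chains: finitely supported functions on lists of vertices -/
abbrev Ch (R : Type*) [CommRing R] (X : Type*) := List X →₀ R

/-- basis element -/
noncomputable abbrev el (R : Type*) [CommRing R] {α : Type*} (l : α) : α →₀ R := Finsupp.single l 1

/-- linear extension -/
noncomputable abbrev lin (R : Type*) [CommRing R] {α M : Type*} [AddCommGroup M] [Module R M]
    (f : α → M) : (α →₀ R) →ₗ[R] M := Finsupp.linearCombination R f

/-- chains supported on a predicate -/
abbrev sup (R : Type*) [CommRing R] {α : Type*} (P : α → Prop) : Submodule R (α →₀ R) :=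
  Finsupp.supported R R {l | P l}

theorem lin_el {α M : Type*} [AddCommGroup M] [Module R M] (f : α → M) (l : α) :
    lin R f (el R l) = f l := by simp [lin, el]

theorem ext_el {α M : Type*} [AddCommGroup M] [Module R M] {f g : (α →₀ R) →ₗ[R] M}
    (h : ∀ l, f (el R l) = g (el R l)) : f = g := by
  apply Finsupp.lhom_ext'
  intro l
  ext
  exact h l

theorem el_mem_sup {α : Type*} {P : α → Prop} {l : α} (h : P l) : el R l ∈ sup R P :=
  Finsupp.single_mem_supported R _ h

theorem sup_le_iff {α : Type*} {P : α → Prop} {N : Submodule R (α →₀ R)} :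
    (∀ l, P l → el R l ∈ N) → sup R P ≤ N := by
  intro h
  rw [sup, Finsupp.supported_eq_span_single, Submodule.span_le]
  rintro _ ⟨l, hl, rfl⟩
  exact h l hl

theorem map_sup {α M : Type*} [AddCommGroup M] [Module R M] {P : α → Prop} {N : Submodule R M}
    {f : (α →₀ R) →ₗ[R] M} (h : ∀ l, P l → f (el R l) ∈ N) {c : α →₀ R} (hc : c ∈ sup R P) :
    f c ∈ N := by
  have : sup R P ≤ N.comap f := sup_le_iff h
  exact this hc

theorem eqOn_sup {α M : Type*} [AddCommGroup M] [Module R M] {P : α → Prop}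
    {f g : (α →₀ R) →ₗ[R] M} (h : ∀ l, P l → f (el R l) = g (el R l)) {c : α →₀ R}
    (hc : c ∈ sup R P) : f c = g c := by
  have : sup R P ≤ LinearMap.ker (f - g) := sup_le_iff (by
    intro l hl; simp [LinearMap.mem_ker, h l hl])
  have := this hc
  simpa [LinearMap.mem_ker, sub_eq_zero] using this

theorem zero_sup {α M : Type*} [AddCommGroup M] [Module R M] {P : α → Prop}
    {f : (α →₀ R) →ₗ[R] M} (h : ∀ l, P l → f (el R l) = 0) {c : α →₀ R}
    (hc : c ∈ sup R P) : f c = 0 := by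
  have := eqOn_sup (f := f) (g := 0) (by simpa using h) hc
  simpa using this

theorem sup_mono {α : Type*} {P Q : α → Prop} (h : ∀ l, P l → Q l) : sup R P ≤ sup R Q :=
  Finsupp.supported_mono h

theorem sup_inf {α : Type*} {P Q : α → Prop} {c : α →₀ R} (h1 : c ∈ sup R P) (h2 : c ∈ sup R Q) :
    c ∈ sup R (fun l => P l ∧ Q l) := fun _ hx => ⟨h1 hx, h2 hx⟩

/-- cone -/
noncomputable def cone (x : X) : Ch R X →ₗ[R] Ch R X := lin R (fun l => el R (x :: l))

@[simp] theorem cone_el (x : X) (l : List X) : cone x (el R l) = el R (x :: l) := lin_el _ _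

noncomputable def bdL (R : Type*) [CommRing R] : List X → Ch R X
  | [] => 0
  | x :: l => el R l - cone x (bdL R l)

noncomputable def bd : Ch R X →ₗ[R] Ch R X := lin R (bdL R)

theorem bd_el (l : List X) : bd (el R l) = bdL R l := lin_el _ _
@[simp] theorem bd_nil : bd (el R ([] : List X)) = 0 := by rw [bd_el]; rfl
theorem bd_cons (x : X) (l : List X) : bd (el R (x :: l)) = el R l - cone x (bd (el R l)) := by
  rw [bd_el, bd_el]; rfl

theorem bd_cone (x : X) (c : Ch R X) : bd (cone x c) = c - cone x (bd c) := by
  have : (bd ∘ₗ cone x : Ch R X →ₗ[R] Ch R X) = LinearMap.id - cone x ∘ₗ bd :=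
    ext_el (by intro l; simp [bd_cons])
  exact LinearMap.congr_fun this c

theorem bd_bd_el (l : List X) : bd (bd (el R l)) = 0 := by
  induction l with
  | nil => simp
  | cons x l ih => rw [bd_cons, map_sub, bd_cone, ih]; simp

theorem bd_bd (c : Ch R X) : bd (bd c) = 0 := by
  have : (bd ∘ₗ bd : Ch R X →ₗ[R] Ch R X) = 0 := ext_el (by intro l; simpa using bd_bd_el l)
  exact LinearMap.congr_fun this c

theorem bd_supp (l : List X) :
    bd (el R l) ∈ sup R (fun m => m.length + 1 = l.length ∧ m.Sublist l) := by
  induction l with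
  | nil => simp
  | cons x l ih =>
    rw [bd_cons]
    refine Submodule.sub_mem _ (el_mem_sup (by simp)) ?_
    refine map_sup ?_ ih
    rintro m ⟨h1, h2⟩
    rw [cone_el]
    exact el_mem_sup (by simp [h1, h2])

/-- chain maps -/
structure IsCh (Q : Ch R X →ₗ[R] Ch R Y) : Prop where
  comm : ∀ l, bd (Q (el R l)) = Q (bd (el R l))
  nil : Q (el R []) = el R []
  len : ∀ l, Q (el R l) ∈ sup R (fun m => m.length = l.length)

theorem IsCh.comm' {Q : Ch R X →ₗ[R] Ch R Y} (h : IsCh Q) (c) : bd (Q c) = Q (bd c) := by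
  have : bd ∘ₗ Q = Q ∘ₗ bd := ext_el (by intro l; simpa using h.comm l)
  exact LinearMap.congr_fun this c

theorem IsCh.comp {Q : Ch R X →ₗ[R] Ch R Y} {Q' : Ch R Y →ₗ[R] Ch R Z} (h' : IsCh Q')
    (h : IsCh Q) : IsCh (Q' ∘ₗ Q) where
  comm l := by simp [h'.comm', h.comm']
  nil := by simp [h.nil, h'.nil]
  len l := by
    rw [LinearMap.comp_apply]
    refine map_sup ?_ (h.len l)
    intro m hm
    simpa [hm] using h'.len m

/-- map on vertices -/
noncomputable def mp (φ : X → Y) : Ch R X →ₗ[R] Ch R Y := lin R (fun l => el R (l.map φ))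
@[simp] theorem mp_el (φ : X → Y) (l : List X) : mp φ (el R l) = el R (l.map φ) := lin_el _ _
theorem mp_cone (φ : X → Y) (x : X) (c : Ch R X) : mp φ (cone x c) = cone (φ x) (mp φ c) := by
  have : (mp φ ∘ₗ cone x : Ch R X →ₗ[R] Ch R Y) = cone (φ x) ∘ₗ mp φ :=
    ext_el (by intro l; simp)
  exact LinearMap.congr_fun this c

theorem mp_isCh (φ : X → Y) : IsCh (mp (R := R) φ) where
  comm l := by
    induction l with
    | nil => simp
    | cons x l ih =>
      rw [mp_el, List.map_cons, bd_cons, bd_cons, map_sub, mp_cone, ← ih]; simp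
  nil := by simp
  len l := by rw [mp_el]; exact el_mem_sup (by simp)

/-! homotopy -/
noncomputable def hN (Q : Ch R X →ₗ[R] Ch R X) : ℕ → List X → Ch R X
  | 0, _ => 0
  | _ + 1, [] => 0
  | n + 1, x :: l => cone x (el R (x :: l) - Q (el R (x :: l)) - lin R (hN Q n) (bdL R (x :: l)))

noncomputable def htp (Q : Ch R X →ₗ[R] Ch R X) : Ch R X →ₗ[R] Ch R X :=
  lin R (fun l => hN Q l.length l)

theorem htp_nil (Q : Ch R X →ₗ[R] Ch R X) : htp Q (el R []) = 0 := by
  rw [htp, lin_el]; rfl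

theorem htp_cons (Q : Ch R X →ₗ[R] Ch R X) (x : X) (l : List X) :
    htp Q (el R (x :: l)) = cone x (el R (x :: l) - Q (el R (x :: l)) - htp Q (bd (el R (x :: l)))) := by
  have h : htp Q (bd (el R (x :: l))) = lin R (hN Q l.length) (bdL R (x :: l)) := by
    rw [bd_el]
    refine eqOn_sup (P := fun m : List X => m.length = l.length) ?_ ?_
    · intro m hm; rw [htp, lin_el, lin_el, hm]
    · rw [← bd_el]; exact sup_mono (by simp +contextual) (bd_supp (R := R) (x :: l))
  rw [h, htp, lin_el]; rfl

theorem htp_el {Q : Ch R X →ₗ[R] Ch R X} (hQ : IsCh Q) (l : List X) :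
    bd (htp Q (el R l)) + htp Q (bd (el R l)) = el R l - Q (el R l) := by
  induction h : l.length generalizing l with
  | zero =>
    obtain rfl := List.length_eq_zero_iff.1 h
    simp [htp_nil, hQ.nil]
  | succ n ih =>
    cases l with
    | nil => simp at h
    | cons x l =>
      have key : bd (htp Q (bd (el R (x :: l)))) = bd (el R (x::l)) - Q (bd (el R (x::l))) := by
        have : (bd ∘ₗ htp Q) (bd (el R (x :: l))) =
            (LinearMap.id - Q - htp Q ∘ₗ bd : Ch R X →ₗ[R] Ch R X) (bd (el R (x :: l))) := by
          refine eqOn_sup (P := fun m : List X => m.length = l.length) ?_ ?_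
          · intro m hm
            have := ih m (by simp at h; omega)
            simp only [LinearMap.comp_apply, LinearMap.sub_apply, LinearMap.id_apply]
            rw [← this]; abel
          · exact sup_mono (by simp +contextual) (bd_supp (R := R) (x :: l))
        simpa [bd_bd] using this
      rw [htp_cons, bd_cone, map_sub (bd (R := R) (X := X)), key, map_sub (bd (R := R) (X := X)), hQ.comm']
      simp

theorem htp_eq {Q : Ch R X →ₗ[R] Ch R X} (hQ : IsCh Q) (c : Ch R X) :
    c = Q c + bd (htp Q c) + htp Q (bd c) := by
  have : (LinearMap.id : Ch R X →ₗ[R] Ch R X) = Q + bd ∘ₗ htp Q + htp Q ∘ₗ bd :=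
    ext_el (by
      intro l
      have := htp_el hQ l
      simp only [LinearMap.add_apply, LinearMap.comp_apply, LinearMap.id_apply]
      rw [add_assoc, this]; abel)
  exact LinearMap.congr_fun this c

theorem htp_len {Q : Ch R X →ₗ[R] Ch R X} (hQ : IsCh Q) (l : List X) :
    htp Q (el R l) ∈ sup R (fun m => m.length = l.length + 1) := by
  induction h : l.length generalizing l with
  | zero =>
    obtain rfl := List.length_eq_zero_iff.1 h
    simp [htp_nil]
  | succ n ih =>
    cases l with
    | nil => simp at h
    | cons x l =>
      rw [htp_cons]
      have key : el R (x :: l) - Q (el R (x :: l)) - htp Q (bd (el R (x :: l))) ∈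
          sup R (fun m => m.length = n + 1) := by
        refine Submodule.sub_mem _ (Submodule.sub_mem _ (el_mem_sup h) ?_) ?_
        · rw [← h]; exact hQ.len _
        · refine map_sup ?_ (bd_supp (R := R) (x :: l))
          rintro m ⟨h1, _⟩
          exact ih m (by omega)
      refine map_sup ?_ key
      intro m hm
      rw [cone_el]; exact el_mem_sup (by simp [hm])

end chains

section metric
variable {R : Type*} [CommRing R] {X Y Z : Type*} [MetricSpace X] [MetricSpace Y]

def small (δ : ℝ) (l : List X) : Prop := ∀ u ∈ l, ∀ v ∈ l, dist u v < δ
def near (ε : ℝ) (l m : List X) : Prop := ∀ v ∈ m, ∃ u ∈ l, dist v u < ε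

theorem small.sub {δ : ℝ} {l m : List X} (h : small δ l) (hm : m ⊆ l) : small δ m :=
  fun u hu v hv => h u (hm hu) v (hm hv)

theorem small.mono {δ δ' : ℝ} {l : List X} (h : small δ l) (hd : δ ≤ δ') : small δ' l :=
  fun u hu v hv => (h u hu v hv).trans_le hd

theorem near.mono {δ δ' : ℝ} {l m : List X} (h : near δ l m) (hd : δ ≤ δ') : near δ' l m :=
  fun u hu => let ⟨v, hv, h⟩ := h u hu; ⟨v, hv, h.trans_le hd⟩

theorem near.sub {ε : ℝ} {l l' m : List X} (h : near ε l m) (hl : l ⊆ l') : near ε l' m :=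
  fun u hu => let ⟨v, hv, h⟩ := h u hu; ⟨v, hl hv, h⟩

theorem near.trans {ε ε' : ℝ} {l l' m : List X} (h : near ε l m) (h' : near ε' l' l) :
    near (ε + ε') l' m := fun u hu =>
  let ⟨v, hv, h⟩ := h u hu
  let ⟨w, hw, h'⟩ := h' v hv
  ⟨w, hw, (dist_triangle _ _ _).trans_lt (add_lt_add h h')⟩

theorem near.small {δ ε : ℝ} {l m : List X} (h : near ε l m) (hl : small δ l) :
    small (δ + 2 * ε) m := by
  intro u hu v hv
  obtain ⟨u', hu', h1⟩ := h u hu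
  obtain ⟨v', hv', h2⟩ := h v hv
  have := hl u' hu' v' hv'
  have h3 := dist_triangle4 u u' v' v
  rw [dist_comm v' v] at h3
  linarith

theorem near_self {ε : ℝ} (hε : 0 < ε) {l m : List X} (h : m ⊆ l) : near ε l m :=
  fun u hu => ⟨u, h hu, by simpa⟩

/-- `Q` is `ε`-near the identity on `δ`-small lists -/
def Near (δ ε : ℝ) (Q : Ch R X →ₗ[R] Ch R X) : Prop :=
  ∀ l, small δ l → Q (el R l) ∈ sup R (near ε l)

theorem bd_small {δ : ℝ} {l : List X} (h : small δ l) :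
    bd (el R l) ∈ sup R (fun m => m.length + 1 = l.length ∧ m ⊆ l ∧ small δ m) :=
  sup_mono (fun _ hm => ⟨hm.1, hm.2.subset, h.sub hm.2.subset⟩) (bd_supp (R := R) l)

theorem htp_near {δ ε : ℝ} (hε : 0 < ε) {Q : Ch R X →ₗ[R] Ch R X} (hn : Near δ ε Q) :
    Near δ ε (htp Q) := by
  intro l hl
  induction h : l.length generalizing l with
  | zero =>
    obtain rfl := List.length_eq_zero_iff.1 h
    simp [htp_nil]
  | succ n ih =>
    cases l with
    | nil => simp at h
    | cons x l =>
      rw [htp_cons]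
      have key : el R (x :: l) - Q (el R (x :: l)) - htp Q (bd (el R (x :: l))) ∈
          sup R (near ε (x :: l)) := by
        refine Submodule.sub_mem _ (Submodule.sub_mem _ (el_mem_sup (near_self hε (by simp))) ?_) ?_
        · exact hn _ hl
        · refine map_sup ?_ (bd_small (R := R) hl)
          rintro m ⟨h1, h2, h3⟩
          exact sup_mono (fun _ hm => hm.sub h2) (ih m h3 (by omega))
      refine map_sup ?_ key
      intro m hm
      rw [cone_el]; refine el_mem_sup ?_
      intro v hv
      rcases List.mem_cons.1 hv with rfl | hv
      · exact ⟨v, by simp, by simpa⟩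
      · exact hm v hv

end metric

section alt
variable {R : Type*} [CommRing R] {X Y Z : Type*} [LinearOrder X]

noncomputable def ins (R : Type*) [CommRing R] (x : X) : List X → Ch R X
  | [] => el R [x]
  | y :: m => if x < y then el R (x :: y :: m) else if x = y then 0 else - cone y (ins R x m)

noncomputable def altL (R : Type*) [CommRing R] : List X → Ch R X
  | [] => el R []
  | x :: l => lin R (ins R x) (altL R l)

noncomputable def alt : Ch R X →ₗ[R] Ch R X := lin R (altL R)

theorem alt_el (l : List X) : alt (el R l) = altL R l := lin_el _ _
@[simp] theorem alt_nil : alt (el R ([] : List X)) = el R [] := by rw [alt_el]; rfl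
theorem alt_cons (x : X) (l : List X) : alt (el R (x :: l)) = lin R (ins R x) (alt (el R l)) := by
  rw [alt_el, alt_el]; rfl

theorem ins_lt {x : X} {m : List X} (h : ∀ y ∈ m, x < y) : ins R x m = el R (x :: m) := by
  cases m with
  | nil => rfl
  | cons y m => simp [ins, h y (by simp)]

theorem ins_supp (x : X) (m : List X) (hm : m.Pairwise (· < ·)) :
    ins R x m ∈ sup R (fun n => n.Pairwise (· < ·) ∧ n.length = m.length + 1 ∧
      ∀ y, y ∈ n ↔ (y = x ∨ y ∈ m)) := by
  induction m with
  | nil => exact el_mem_sup (by simp)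
  | cons y m ih =>
    rw [List.pairwise_cons] at hm
    rw [ins]
    split_ifs with h1 h2
    · refine el_mem_sup ⟨?_, by simp, by simp⟩
      simp only [List.pairwise_cons, List.mem_cons]
      refine ⟨?_, hm⟩
      rintro z (rfl | hz)
      · exact h1
      · exact h1.trans (hm.1 z hz)
    · exact Submodule.zero_mem _
    · refine Submodule.neg_mem _ ?_
      refine map_sup ?_ (ih hm.2)
      rintro n ⟨h3, h4, h5⟩
      rw [cone_el]
      refine el_mem_sup ⟨?_, by simp [h4], ?_⟩
      · rw [List.pairwise_cons]
        refine ⟨?_, h3⟩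
        intro z hz
        rcases (h5 z).1 hz with rfl | hz
        · exact lt_of_le_of_ne (not_lt.1 h1) (Ne.symm h2)
        · exact hm.1 z hz
      · intro z
        simp only [List.mem_cons, h5]; tauto

theorem ins_mem_zero {x : X} {m : List X} (hm : m.Pairwise (· < ·)) (hx : x ∈ m) :
    ins R x m = 0 := by
  induction m with
  | nil => simp at hx
  | cons y m ih =>
    rw [List.pairwise_cons] at hm
    rw [ins]
    rcases List.mem_cons.1 hx with rfl | hx
    · simp
    · have := hm.1 x hx
      rw [if_neg (not_lt.2 this.le), if_neg this.ne', ih hm.2 hx]; simp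

theorem ins_cone_gt {x y : X} (h : y < x) (c : Ch R X) :
    lin R (ins R x) (cone y c) = - cone y (lin R (ins R x) c) := by
  have : (lin R (ins R x) ∘ₗ cone y : Ch R X →ₗ[R] Ch R X) = - (cone y ∘ₗ lin R (ins R x)) :=
    ext_el (by
      intro l
      simp only [LinearMap.comp_apply, LinearMap.neg_apply, cone_el, lin_el]
      rw [ins, if_neg (not_lt.2 h.le), if_neg h.ne'])
  exact LinearMap.congr_fun this c

theorem ins_cone_eq (x : X) (c : Ch R X) :
    lin R (ins R x) (cone x c) = 0 := by
  have : (lin R (ins R x) ∘ₗ cone x : Ch R X →ₗ[R] Ch R X) = 0 :=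
    ext_el (by
      intro l
      simp only [LinearMap.comp_apply, LinearMap.zero_apply, cone_el, lin_el]
      rw [ins]; simp)
  exact LinearMap.congr_fun this c

theorem bd_ins (x : X) (m : List X) (hm : m.Pairwise (· < ·)) :
    bd (ins R x m) = el R m - lin R (ins R x) (bd (el R m)) := by
  induction m with
  | nil => rw [ins, bd_cons]; simp
  | cons y m ih =>
    have hm' := hm
    rw [List.pairwise_cons] at hm
    rcases lt_trichotomy x y with h | rfl | h
    · have hall : ∀ z ∈ y :: m, x < z := by
        intro z hz
        rcases List.mem_cons.1 hz with rfl | hz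
        · exact h
        · exact h.trans (hm.1 z hz)
      rw [ins_lt hall, bd_cons]
      congr 1
      refine eqOn_sup ?_ (bd_supp (R := R) (y :: m))
      rintro n ⟨_, h2⟩
      rw [cone_el, lin_el, ins_lt]
      exact fun z hz => hall z (h2.subset hz)
    · rw [ins_mem_zero hm' (by simp), bd_cons, map_sub, ins_cone_eq, lin_el, ins_lt hm.1]
      simp
    · rw [ins, if_neg (not_lt.2 h.le), if_neg h.ne', map_neg, bd_cone, ih hm.2, bd_cons, map_sub,
        map_sub, ins_cone_gt h, lin_el, cone_el]
      abel

theorem alt_supp (l : List X) :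
    alt (el R l) ∈ sup R (fun n => n.Pairwise (· < ·) ∧ n.length = l.length ∧
      ∀ y, y ∈ n ↔ y ∈ l) := by
  induction l with
  | nil => rw [alt_nil]; exact el_mem_sup (by simp)
  | cons x l ih =>
    rw [alt_cons]
    refine map_sup ?_ ih
    rintro m ⟨h1, h2, h3⟩
    rw [lin_el]
    refine sup_mono ?_ (ins_supp x m h1)
    rintro n ⟨h4, h5, h6⟩
    exact ⟨h4, by simp [h5, h2], by intro y; rw [h6, h3]; simp⟩

theorem alt_isCh : IsCh (alt (R := R) (X := X)) where
  comm l := by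
    induction l with
    | nil => simp
    | cons x l ih =>
      have h1 : bd (lin R (ins R x) (alt (el R l))) =
          alt (el R l) - lin R (ins R x) (bd (alt (el R l))) := by
        have := eqOn_sup (f := bd ∘ₗ lin R (ins R x))
          (g := LinearMap.id - lin R (ins R x) ∘ₗ bd) (P := fun n => n.Pairwise (· < ·))
          (fun m hm => by simpa [lin_el] using bd_ins (R := R) x m hm)
          (sup_mono (fun _ h => h.1) (alt_supp (R := R) l))
        simpa using this
      rw [alt_cons, h1, bd_cons, map_sub, ih]
      congr 1
      have : (lin R (ins R x) ∘ₗ alt : Ch R X →ₗ[R] Ch R X) = alt ∘ₗ cone x :=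
        ext_el (by intro m; simp [alt_cons])
      exact LinearMap.congr_fun this _
  nil := by simp
  len l := sup_mono (fun _ h => h.2.1) (alt_supp l)

theorem alt_dup {l : List X} (h : ¬ l.Nodup) : alt (el R l) = 0 := by
  induction l with
  | nil => simp at h
  | cons x l ih =>
    rw [alt_cons]
    by_cases hl : l.Nodup
    · have hx : x ∈ l := by
        by_contra hx; exact h (List.nodup_cons.2 ⟨hx, hl⟩)
      refine zero_sup ?_ (alt_supp (R := R) l)
      rintro m ⟨h1, _, h3⟩
      rw [lin_el, ins_mem_zero h1 ((h3 x).2 hx)]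
    · rw [ih hl]; simp

theorem alt_sorted {l : List X} (h : l.Pairwise (· < ·)) : alt (el R l) = el R l := by
  induction l with
  | nil => simp
  | cons x l ih =>
    rw [List.pairwise_cons] at h
    rw [alt_cons, ih h.2, lin_el, ins_lt h.1]

end alt

end MD

open Set Filter
set_option linter.unusedSectionVars false
set_option linter.style.haveILetI false
set_option linter.unusedSimpArgs false
set_option linter.unusedVariables false

namespace MD
open MeanDimPaper

section covers
variable {X : Type*} [TopologicalSpace X]

theorem ord_le_iff {β : Set (Set X)} {n : ℕ} :
    ord β ≤ n ↔ ∀ x, ∀ L : List (Set X), L.Nodup → (∀ U ∈ L, U ∈ β ∧ x ∈ U) → L.length ≤ n + 1 := by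
  constructor
  · intro h x L hL hm
    by_contra hc
    obtain ⟨m, hmL⟩ : ∃ m, L.length = m + 1 := ⟨L.length - 1, by omega⟩
    have : (m : ℕ∞) ≤ ord β := by
      refine le_iSup₂_of_le (i := m) ?_ le_rfl
      refine ⟨fun i => L.get (i.cast hmL.symm), ?_, ?_, x, ?_⟩
      · intro i j hij
        have := (List.nodup_iff_injective_get.1 hL) hij
        simpa using this
      · intro i; exact (hm _ (List.get_mem _ _)).1
      · simp only [mem_iInter]; intro i; exact (hm _ (List.get_mem _ _)).2
    have h2 := this.trans h
    have : m ≤ n := by exact_mod_cast h2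
    omega
  · intro h
    refine iSup₂_le ?_
    rintro m ⟨f, hf, hm, x, hx⟩
    have := h x (List.ofFn f) (List.nodup_ofFn.2 hf) (by
      intro U hU
      rw [List.mem_ofFn] at hU
      obtain ⟨i, rfl⟩ := hU
      exact ⟨hm i, mem_iInter.1 hx i⟩)
    rw [List.length_ofFn] at this
    exact_mod_cast (by omega : m ≤ n)

theorem ord_range_le {ι : Type*} {U : ι → Set X} {n : ℕ}
    (h : ∀ x, ∀ L : List ι, L.Nodup → (∀ i ∈ L, x ∈ U i) → L.length ≤ n + 1) :
    ord (range U) ≤ n := by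
  rw [ord_le_iff]
  intro x L hL hm
  have hex : ∀ V ∈ L, ∃ i, U i = V := fun V hV => (hm V hV).1
  cases L with
  | nil => simp
  | cons V0 L0 =>
  haveI : Nonempty ι := ⟨(hex V0 (by simp)).choose⟩
  choose! g hg using hex
  have := h x ((V0 :: L0).map g) ?_ ?_
  · simpa using this
  · refine List.Nodup.map_on ?_ hL
    intro V hV W hW hVW
    rw [← hg V hV, ← hg W hW, hVW]
  · intro i hi
    obtain ⟨V, hV, rfl⟩ := List.mem_map.1 hi
    rw [hg V hV]; exact (hm V hV).2

theorem ord_mono {β γ : Set (Set X)} (h : β ⊆ γ) : ord β ≤ ord γ := by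
  refine iSup₂_le ?_
  rintro m ⟨f, hf, hm, hx⟩
  exact le_iSup₂_of_le (i := m) ⟨f, hf, fun i => h (hm i), hx⟩ le_rfl

theorem exists_of_covD_le {α : Set (Set X)} {n : ℕ} (h : covD α ≤ n) :
    ∃ β, IsOpenCover β ∧ Refines β α ∧ ord β ≤ n := by
  have : covD α < (n + 1 : ℕ) := lt_of_le_of_lt h (by exact_mod_cast Nat.lt_succ_self n)
  unfold covD at this
  rw [iInf_lt_iff] at this
  obtain ⟨β, hβ⟩ := this
  rw [iInf_lt_iff] at hβ
  obtain ⟨hβ1, hβ2⟩ := hβ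
  refine ⟨β, hβ1.1, hβ1.2, ?_⟩
  exact Order.le_of_lt_add_one (by simpa using hβ2)

theorem exists_fin_refine [CompactSpace X] {n : ℕ} (h : topDim X ≤ n) {α : Set (Set X)}
    (hα : IsOpenCover α) :
    ∃ β : Set (Set X), β.Finite ∧ IsOpenCover β ∧ Refines β α ∧ ord β ≤ n ∧ ∀ U ∈ β, U.Nonempty := by
  have h1 : covD α ≤ n := le_trans (le_iSup₂_of_le (i := α) hα le_rfl) h
  obtain ⟨β, hβ, hr, ho⟩ := exists_of_covD_le h1
  obtain ⟨γ, hγ1, hγ2, hγ3⟩ := isCompact_univ.elim_finite_subcover_image (b := β) (c := id)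
    (fun U hU => hβ.1 U hU) (by rw [← hβ.2, sUnion_eq_biUnion]; rfl)
  refine ⟨{U ∈ γ | U.Nonempty}, hγ2.subset (sep_subset _ _), ⟨?_, ?_⟩, ?_, ?_, fun U hU => hU.2⟩
  · exact fun U hU => hβ.1 U (hγ1 hU.1)
  · rw [eq_univ_iff_forall]
    intro x
    obtain ⟨U, hU, hx⟩ := mem_iUnion₂.1 (hγ3 (mem_univ x))
    exact ⟨U, ⟨hU, ⟨x, hx⟩⟩, hx⟩
  · exact fun U hU => hr U (hγ1 hU.1)
  · exact (ord_mono ((sep_subset _ _).trans hγ1)).trans ho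

theorem topDim_le_of {n : ℕ∞} (h : ∀ α : Set (Set X), IsOpenCover α →
    ∃ β, IsOpenCover β ∧ Refines β α ∧ ord β ≤ n) : topDim X ≤ n := by
  refine iSup₂_le ?_
  intro α hα
  obtain ⟨β, h1, h2, h3⟩ := h α hα
  exact le_trans (iInf₂_le (i := β) ⟨h1, h2⟩) h3

end covers

section metric
variable {X : Type*} [MetricSpace X]

theorem lebesgue [CompactSpace X] {α : Set (Set X)} (hα : IsOpenCover α) :
    ∃ δ > 0, ∀ x, ∃ U ∈ α, Metric.ball x δ ⊆ U := by
  obtain ⟨δ, hδ, h⟩ := lebesgue_number_lemma_of_metric_sUnion (s := (univ : Set X)) (c := α)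
    isCompact_univ hα.1 (by rw [hα.2])
  exact ⟨δ, hδ, fun x => h x (mem_univ x)⟩

theorem ballCover_isOpenCover {ε : ℝ} (hε : 0 < ε) :
    IsOpenCover (range fun x : X => Metric.ball x ε) := by
  refine ⟨?_, ?_⟩
  · rintro _ ⟨x, rfl⟩; exact Metric.isOpen_ball
  · rw [eq_univ_iff_forall]
    exact fun x => ⟨_, ⟨x, rfl⟩, Metric.mem_ball_self hε⟩

theorem exists_small_cover [CompactSpace X] {n : ℕ} (h : topDim X ≤ n) {ε : ℝ} (hε : 0 < ε) :
    ∃ β : Set (Set X), β.Finite ∧ IsOpenCover β ∧ ord β ≤ n ∧ (∀ U ∈ β, U.Nonempty) ∧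
      ∀ U ∈ β, ∀ x ∈ U, ∀ y ∈ U, dist x y < ε := by
  obtain ⟨β, h1, h2, h3, h4, h5⟩ := exists_fin_refine h (ballCover_isOpenCover (X := X) (half_pos hε))
  refine ⟨β, h1, h2, h4, h5, ?_⟩
  intro U hU x hx y hy
  obtain ⟨_, ⟨z, rfl⟩, hz⟩ := h3 U hU
  have h6 := Metric.mem_ball.1 (hz hx)
  have h7 := Metric.mem_ball'.1 (hz hy)
  linarith [dist_triangle x z y]

theorem topDim_le_of_small [CompactSpace X] {n : ℕ∞} (h : ∀ ε > 0, ∃ β : Set (Set X), IsOpenCover β ∧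
    ord β ≤ n ∧ ∀ U ∈ β, ∀ x ∈ U, ∀ y ∈ U, dist x y < ε) : topDim X ≤ n := by
  refine topDim_le_of fun α hα => ?_
  obtain ⟨δ, hδ, hL⟩ := lebesgue hα
  obtain ⟨β, h1, h2, h3⟩ := h δ hδ
  rcases eq_empty_or_nonempty α with rfl | ⟨V, hV⟩
  · have : IsEmpty X := by
      have := hα.2
      simp only [sUnion_empty] at this
      exact Set.univ_eq_empty_iff.1 this.symm
    exact ⟨∅, hα, by intro U hU; simp at hU, le_trans (ord_mono (empty_subset β)) h2⟩
  refine ⟨β, h1, ?_, h2⟩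
  intro U hU
  rcases eq_empty_or_nonempty U with rfl | ⟨x, hx⟩
  · exact ⟨V, hV, empty_subset _⟩
  · obtain ⟨W, hW, hb⟩ := hL x
    exact ⟨W, hW, fun y hy => hb (by rw [Metric.mem_ball, dist_comm]; exact h3 U hU x hx y hy)⟩

/-- vertex map to the nerve of a cover -/
theorem nerve_map [CompactSpace X] {β : Set (Set X)} (hβ : IsOpenCover β) {n : ℕ} (ho : ord β ≤ n)
    {ε : ℝ} (hm : ∀ U ∈ β, ∀ x ∈ U, ∀ y ∈ U, dist x y < ε) :
    ∃ δ > 0, ∃ φ : X → X, (∀ x, dist (φ x) x < ε) ∧ (β.Finite → (range φ).Finite) ∧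
      ∀ l : List X, small δ l → (l.map φ).Nodup → l.length ≤ n + 1 := by
  classical
  obtain ⟨δ, hδ, hL⟩ := lebesgue hβ
  choose w hw hb using hL
  have hxw : ∀ x, x ∈ w x := fun x => hb x (Metric.mem_ball_self hδ)
  by_cases hX : Nonempty X
  swap
  · refine ⟨δ, hδ, id, fun x => (hX ⟨x⟩).elim, ?_, ?_⟩
    · rw [not_nonempty_iff] at hX; intro _; exact Set.toFinite _
    · intro l hl; cases l with
      | nil => simp
      | cons x l => exact (hX ⟨x⟩).elim
  let p : Set X → X := fun U => if h : U.Nonempty then h.some else Classical.choice hX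
  have hp : ∀ x, p (w x) ∈ w x := by
    intro x
    have : (w x).Nonempty := ⟨x, hxw x⟩
    simp only [p, dif_pos this]; exact this.some_mem
  refine ⟨δ, hδ, fun x => p (w x), fun x => hm _ (hw x) _ (hp x) _ (hxw x), ?_, ?_⟩
  · intro hf
    refine (hf.image p).subset ?_
    rintro _ ⟨x, rfl⟩; exact ⟨w x, hw x, rfl⟩
  · intro l hl hd
    cases l with
    | nil => simp
    | cons x l =>
      have := ord_le_iff.1 ho x ((x :: l).map w) ?_ ?_
      · simpa using this
      · have h2 : (x :: l).map (fun x => p (w x)) = ((x :: l).map w).map p := by simp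
        rw [h2] at hd
        exact List.Nodup.of_map _ hd
      · intro U hU
        obtain ⟨y, hy, rfl⟩ := List.mem_map.1 hU
        exact ⟨hw y, hb y (Metric.mem_ball.2 (hl x (by simp) y hy))⟩

@[reducible] noncomputable def lo (X : Type*) : LinearOrder X :=
  haveI : DecidableRel (WellOrderingRel : X → X → Prop) := Classical.decRel _
  linearOrderOfSTO WellOrderingRel

variable {R : Type*} [CommRing R]

/-- alternated chain map induced by a vertex map -/
noncomputable def altmp (R : Type*) [CommRing R] (φ : X → X) : Ch R X →ₗ[R] Ch R X :=
  (@alt R _ X (lo X)) ∘ₗ mp φ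

theorem altmp_isCh (φ : X → X) : IsCh (altmp R φ) :=
  IsCh.comp (@alt_isCh R _ X (lo X)) (mp_isCh φ)

theorem altmp_supp (φ : X → X) (l : List X) :
    altmp R φ (el R l) ∈ sup R (fun n => n.Nodup ∧ n.length = l.length ∧ ∀ y, y ∈ n ↔ y ∈ l.map φ) := by
  rw [altmp, LinearMap.comp_apply, mp_el]
  letI := lo X
  refine sup_mono ?_ (alt_supp (R := R) (l.map φ))
  rintro n ⟨h1, h2, h3⟩
  exact ⟨h1.imp (fun h => ne_of_lt h), by simpa using h2, h3⟩

theorem altmp_dup {φ : X → X} {l : List X} (h : ¬ (l.map φ).Nodup) : altmp R φ (el R l) = 0 := by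
  rw [altmp, LinearMap.comp_apply, mp_el]
  letI := lo X
  exact alt_dup h

theorem near_map {ε : ℝ} {φ : X → X} (h : ∀ x, dist (φ x) x < ε) {l m : List X}
    (hm : ∀ y ∈ m, y ∈ l.map φ) : near ε l m := by
  intro y hy
  obtain ⟨x, hx, rfl⟩ := List.mem_map.1 (hm y hy)
  exact ⟨x, hx, h x⟩

theorem altmp_near {ε : ℝ} {φ : X → X} (h : ∀ x, dist (φ x) x < ε) (δ : ℝ) :
    Near δ ε (altmp R φ) := by
  intro l _
  exact sup_mono (fun n hn => near_map h fun y hy => (hn.2.2 y).1 hy) (altmp_supp (R := R) φ l)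

/-- approximate dimension at most `n` with coefficients in `R` -/
def AD (R : Type*) [CommRing R] (X : Type*) [MetricSpace X] (n : ℕ) : Prop :=
  ∀ ε > 0, ∃ δ > 0, ∃ Q : Ch R X →ₗ[R] Ch R X, IsCh Q ∧ Near δ ε Q ∧
    ∀ l, small δ l → n + 1 < l.length → Q (el R l) = 0

theorem AD.mono {n m : ℕ} (h : AD R X n) (hm : n ≤ m) : AD R X m := by
  intro ε hε
  obtain ⟨δ, hδ, Q, h1, h2, h3⟩ := h ε hε
  exact ⟨δ, hδ, Q, h1, h2, fun l hl hlen => h3 l hl (by omega)⟩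

theorem AD.of_topDim [CompactSpace X] {n : ℕ} (h : topDim X ≤ n) : AD R X n := by
  intro ε hε
  obtain ⟨β, h1, h2, h3, h4, h5⟩ := exists_small_cover h hε
  obtain ⟨δ, hδ, φ, hφ, _, hn⟩ := nerve_map h2 h3 h5
  refine ⟨δ, hδ, altmp R φ, altmp_isCh φ, altmp_near hφ δ, ?_⟩
  intro l hl hlen
  refine altmp_dup fun hd => ?_
  have := hn l hl hd
  omega

theorem AD.isom {Y : Type*} [MetricSpace Y] (e : X ≃ᵢ Y) {n : ℕ} (h : AD R X n) : AD R Y n := by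
  intro ε hε
  obtain ⟨δ, hδ, Q, h1, h2, h3⟩ := h ε hε
  have hs : ∀ l : List Y, small δ l → small δ (l.map e.symm) := by
    intro l hl u hu v hv
    obtain ⟨u, hu', rfl⟩ := List.mem_map.1 hu
    obtain ⟨v, hv', rfl⟩ := List.mem_map.1 hv
    rw [e.symm.dist_eq]; exact hl u hu' v hv'
  refine ⟨δ, hδ, mp e ∘ₗ Q ∘ₗ mp e.symm, (mp_isCh _).comp (h1.comp (mp_isCh _)), ?_, ?_⟩
  · intro l hl
    simp only [LinearMap.comp_apply, mp_el]
    refine map_sup ?_ (h2 _ (hs l hl))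
    intro m hm
    rw [mp_el]
    refine el_mem_sup ?_
    intro v hv
    obtain ⟨v, hv', rfl⟩ := List.mem_map.1 hv
    obtain ⟨u, hu, huv⟩ := hm v hv'
    obtain ⟨u, hu', rfl⟩ := List.mem_map.1 hu
    refine ⟨u, hu', ?_⟩
    have := e.dist_eq v (e.symm u)
    rw [e.apply_symm_apply] at this
    rwa [this]
  · intro l hl hlen
    simp only [LinearMap.comp_apply, mp_el]
    rw [h3 _ (hs l hl) (by simpa using hlen), map_zero]

end metric
end MD

open Set Filter
set_option linter.unusedSectionVars false
set_option linter.style.haveILetI false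
set_option linter.unusedSimpArgs false
set_option linter.unusedVariables false

namespace MD
open MeanDimPaper

section prod
variable {R : Type*} [CommRing R] {X Y : Type*}

abbrev Bi (R : Type*) [CommRing R] (X Y : Type*) := (List X × List Y) →₀ R

noncomputable def EZL (R : Type*) [CommRing R] : List X → List Y → Ch R (X × Y)
  | [], [] => 0
  | [], [_] => el R []
  | [], _ :: _ :: _ => 0
  | _ :: _, [] => 0
  | x :: s, y :: t => cone (x, y) (EZL R s (y :: t) + (-1 : R) ^ s.length • EZL R (x :: s) t)
termination_by s t => s.length + t.length

theorem EZL_nil (s : List X) : EZL R s ([] : List Y) = 0 := by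
  cases s <;> simp [EZL]

theorem EZL_cons (x : X) (s : List X) (y : Y) (t : List Y) : EZL R (x :: s) (y :: t) =
    cone (x, y) (EZL R s (y :: t) + (-1 : R) ^ s.length • EZL R (x :: s) t) := by
  rw [EZL]

theorem EZL_supp (s : List X) (t : List Y) : EZL R s t ∈ sup R (fun m =>
    m.length + 1 = s.length + t.length ∧ ∀ q ∈ m, q.1 ∈ s ∧ q.2 ∈ t) := by
  induction s, t using EZL.induct with
  | case1 => simp [EZL]
  | case2 y => rw [EZL]; exact el_mem_sup (by simp)
  | case3 => simp [EZL]
  | case4 => simp [EZL]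
  | case5 x s y t ih1 ih2 =>
    rw [EZL_cons]
    have key : EZL R s (y :: t) + (-1 : R) ^ s.length • EZL R (x :: s) t ∈ sup R
        (fun m => m.length + 2 = (x :: s).length + (y :: t).length ∧
          ∀ q ∈ m, q.1 ∈ x :: s ∧ q.2 ∈ y :: t) := by
      refine Submodule.add_mem _ (sup_mono ?_ ih1) (Submodule.smul_mem _ _ (sup_mono ?_ ih2))
      · rintro m ⟨h1, h2⟩
        exact ⟨by simp at h1 ⊢; omega, fun q hq => ⟨List.mem_cons_of_mem _ (h2 q hq).1, (h2 q hq).2⟩⟩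
      · rintro m ⟨h1, h2⟩
        exact ⟨by simp at h1 ⊢; omega, fun q hq => ⟨(h2 q hq).1, List.mem_cons_of_mem _ (h2 q hq).2⟩⟩
    refine map_sup ?_ key
    rintro m ⟨h1, h2⟩
    rw [cone_el]
    refine el_mem_sup ⟨by simp at h1 ⊢; omega, ?_⟩
    intro q hq
    rcases List.mem_cons.1 hq with rfl | hq
    · simp
    · exact h2 q hq

theorem EZL_head (x : X) (s : List X) (t : List Y) :
    EZL R (x :: s) t ∈ sup R (fun m => ∃ y l, m = (x, y) :: l) := by
  cases t with
  | nil => simp [EZL_nil]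
  | cons y t =>
    rw [EZL_cons]
    refine map_sup (P := fun _ => True) ?_ (by simp [sup])
    intro m _
    rw [cone_el]; exact el_mem_sup ⟨y, m, rfl⟩

/-- bilinear extension -/
noncomputable def bil (R : Type*) [CommRing R] {M : Type*} [AddCommGroup M] [Module R M]
    {α β : Type*} (f : α → β → M) : (α →₀ R) →ₗ[R] (β →₀ R) →ₗ[R] M :=
  lin R (fun a => lin R (fun b => f a b))

@[simp] theorem bil_el {M : Type*} [AddCommGroup M] [Module R M] {α β : Type*} (f : α → β → M)
    (a : α) (b : β) : bil R f (el R a) (el R b) = f a b := by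
  rw [bil, lin_el, lin_el]

theorem bil_mem {M : Type*} [AddCommGroup M] [Module R M] {α β : Type*} {P : α → Prop}
    {P' : β → Prop} {N : Submodule R M} {B : (α →₀ R) →ₗ[R] (β →₀ R) →ₗ[R] M}
    (h : ∀ a b, P a → P' b → B (el R a) (el R b) ∈ N) {u v} (hu : u ∈ sup R P) (hv : v ∈ sup R P') :
    B u v ∈ N := by
  refine map_sup (f := B u) ?_ hv
  intro b hb
  refine map_sup (f := B.flip (el R b)) ?_ hu
  intro a ha
  exact h a b ha hb

theorem bil_eq {M : Type*} [AddCommGroup M] [Module R M] {α β : Type*} {P : α → Prop}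
    {P' : β → Prop} {B B' : (α →₀ R) →ₗ[R] (β →₀ R) →ₗ[R] M}
    (h : ∀ a b, P a → P' b → B (el R a) (el R b) = B' (el R a) (el R b)) {u v}
    (hu : u ∈ sup R P) (hv : v ∈ sup R P') :
    B u v = B' u v := by
  refine eqOn_sup (f := B u) (g := B' u) ?_ hv
  intro b hb
  exact eqOn_sup (f := B.flip (el R b)) (g := B'.flip (el R b)) (fun a ha => h a b ha hb) hu

theorem sup_true {α : Type*} (c : α →₀ R) : c ∈ sup R (fun _ : α => True) := by simp [sup]

noncomputable def EZ : Ch R X →ₗ[R] Ch R Y →ₗ[R] Ch R (X × Y) := bil R (EZL R)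

theorem EZ_nil_right (a : Ch R X) : EZ a (el R ([] : List Y)) = 0 := by
  refine zero_sup (f := EZ.flip (el R ([] : List Y))) (P := fun _ => True) ?_ (sup_true _)
  intro l _
  simp [EZ, EZL_nil]

theorem EZ_cone (x : X) (y : Y) (p : ℕ) (a : Ch R X) (ha : a ∈ sup R (fun l => l.length = p))
    (b : Ch R Y) : EZ (cone x a) (cone y b) =
      cone (x, y) (EZ a (cone y b) + (-1 : R) ^ p • EZ (cone x a) b) := by
  have := bil_eq (P := fun l : List X => l.length = p) (P' := fun _ : List Y => True)
    (B := (EZ (R := R)).compl₁₂ (cone x) (cone y))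
    (B' := ((EZ (R := R)).compl₁₂ LinearMap.id (cone y)
      + (-1 : R) ^ p • (EZ (R := R)).compl₁₂ (cone x) LinearMap.id).compr₂ (cone (x, y)))
    (fun s t hs _ => by simp [EZ, EZL_cons, hs]) ha (sup_true b)
  simpa using this

theorem EZ_nil_left (t : List Y) : EZ (el R ([] : List X)) (bd (el R t)) = 0 := by
  match t with
  | [] => simp
  | [y] => rw [bd_cons]; simp [EZ, EZL]
  | [y, y'] => simp [bd_cons, EZ, EZL]
  | y :: y' :: y'' :: t =>
    refine zero_sup (f := EZ (el R ([] : List X))) ?_ (bd_supp (R := R) _)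
    rintro m ⟨h1, _⟩
    match m with
    | [] => simp at h1
    | [a] => simp at h1
    | a :: b :: m => simp [EZ, EZL]

theorem bd_EZ_el (s : List X) (t : List Y) : bd (EZ (el R s) (el R t)) =
    EZ (bd (el R s)) (el R t) + (-1 : R) ^ (s.length + 1) • EZ (el R s) (bd (el R t)) := by
  induction h : s.length + t.length using Nat.strong_induction_on generalizing s t with
  | _ n ih =>
  match s, t with
  | [], t =>
    rw [EZ_nil_left]
    match t with
    | [] => simp [EZ, EZL]
    | [y] => simp [EZ, EZL]
    | y :: y' :: t => simp [EZ, EZL]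
  | x :: s, [] => rw [EZ_nil_right, EZ_nil_right]; simp
  | x :: s, y :: t =>
    have i1 := ih _ (by rw [← h]; simp) s (y :: t) rfl
    have i2 := ih _ (by rw [← h]; simp) (x :: s) t rfl
    have e1 := EZ_cone x y s.length (el R s) (el_mem_sup rfl) (el R t)
    have e2 := EZ_cone x y s.length (el R s) (el_mem_sup rfl) (bd (el R t))
    have e3 : EZ (cone x (bd (el R s))) (cone y (el R t)) = cone (x, y)
      (EZ (bd (el R s)) (cone y (el R t)) - (-1 : R) ^ s.length • EZ (cone x (bd (el R s))) (el R t)) := by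
      cases s with
      | nil => simp
      | cons x' s =>
        rw [EZ_cone x y s.length _ (sup_mono (fun m hm => by simpa using hm.1)
          (bd_supp (R := R) (x' :: s)))]
        simp [pow_succ]
    simp only [cone_el] at e1 e2 e3
    have hp : (-1 : R) ^ s.length * (-1 : R) ^ s.length = 1 := by
      rw [← mul_pow]; simp
    have f1 : EZ (bd (el R (x :: s))) (el R (y :: t)) = EZ (el R s) (el R (y :: t)) -
      EZ (cone x (bd (el R s))) (el R (y :: t)) := by rw [bd_cons x s, map_sub, LinearMap.sub_apply]
    have f2 : EZ (el R (x :: s)) (bd (el R (y :: t))) = EZ (el R (x :: s)) (el R t) -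
      EZ (el R (x :: s)) (cone y (bd (el R t))) := by rw [bd_cons y t, map_sub]
    have f3 : EZ (bd (el R (x :: s))) (el R t) = EZ (el R s) (el R t) -
      EZ (cone x (bd (el R s))) (el R t) := by rw [bd_cons x s, map_sub, LinearMap.sub_apply]
    have f4 : EZ (el R s) (bd (el R (y :: t))) = EZ (el R s) (el R t) -
      EZ (el R s) (cone y (bd (el R t))) := by rw [bd_cons y t, map_sub]
    rw [f3] at i2
    rw [f4] at i1
    rw [e1, bd_cone, map_add, map_smul, i1, i2, f1, f2, e2, e3]
    clear f1 f2 f3 f4 e1 e2 e3 i1 i2 ih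
    generalize EZ (el R s) (el R (y :: t)) = A
    generalize EZ (el R (x :: s)) (el R t) = B
    generalize EZ (bd (el R s)) (el R (y :: t)) = C
    generalize EZ (el R s) (cone y (bd (el R t))) = D
    generalize EZ (el R s) (el R t) = E
    generalize EZ (cone x (bd (el R s))) (el R t) = F
    generalize EZ (el R (x :: s)) (bd (el R t)) = G
    generalize hq : (-1 : R) ^ s.length = q at hp ⊢
    simp only [List.length_cons, pow_succ, hq, map_neg, map_add, map_smul, map_sub, smul_add, smul_sub,
      smul_smul, mul_neg, mul_one, neg_neg, neg_smul, hp, one_smul]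
    abel

theorem bd_EZ (p : ℕ) {a : Ch R X} (ha : a ∈ sup R (fun l => l.length = p)) (b : Ch R Y) :
    bd (EZ a b) = EZ (bd a) b + (-1 : R) ^ (p + 1) • EZ a (bd b) := by
  have := bil_eq (P := fun l : List X => l.length = p) (P' := fun _ : List Y => True)
    (B := (EZ (R := R)).compr₂ bd)
    (B' := ((EZ (R := R)).compl₁₂ bd LinearMap.id
      + (-1 : R) ^ (p + 1) • (EZ (R := R)).compl₁₂ LinearMap.id bd))
    (fun s t hs _ => by simpa [hs] using bd_EZ_el (R := R) s t) ha (sup_true b)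
  simpa using this

/-- Alexander--Whitney -/
noncomputable def conel (x : X) : Bi R X Y →ₗ[R] Bi R X Y := lin R (fun q => el R (x :: q.1, q.2))

noncomputable def AWL (R : Type*) [CommRing R] : List (X × Y) → Bi R X Y
  | [] => 0
  | p :: l => el R ([p.1], (p :: l).map Prod.snd) + conel p.1 (AWL R l)

noncomputable def AW : Ch R (X × Y) →ₗ[R] Bi R X Y := lin R (AWL R)

@[simp] theorem AW_nil : AW (el R ([] : List (X × Y))) = 0 := by rw [AW, lin_el]; rfl
theorem AW_cons (p : X × Y) (l : List (X × Y)) : AW (el R (p :: l)) =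
    el R ([p.1], (p :: l).map Prod.snd) + conel p.1 (AW (el R l)) := by
  rw [AW, lin_el, lin_el]; rfl

@[simp] theorem conel_el (x : X) (q : List X × List Y) :
    conel x (el R q) = el R (x :: q.1, q.2) := lin_el _ _

noncomputable def tens : Ch R X →ₗ[R] Ch R Y →ₗ[R] Bi R X Y := bil R (fun s t => el R (s, t))

noncomputable def bdD : Bi R X Y →ₗ[R] Bi R X Y := lin R (fun q =>
  tens (bd (el R q.1)) (el R q.2) + (-1 : R) ^ (q.1.length + 1) • tens (el R q.1) (bd (el R q.2)))

theorem tens_cone (x : X) (a : Ch R X) (b : Ch R Y) : tens (cone x a) b = conel x (tens a b) := by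
  have := bil_eq (P := fun _ : List X => True) (P' := fun _ : List Y => True)
    (B := (tens (R := R)).compl₁₂ (cone x) LinearMap.id)
    (B' := (tens (R := R)).compr₂ (conel x))
    (fun s t hs _ => by simp [tens]) (sup_true a) (sup_true b)
  simpa using this

theorem bdD_conel (x : X) (w : Bi R X Y) : bdD (conel x w) = w - conel x (bdD w) := by
  have : (bdD ∘ₗ conel x : Bi R X Y →ₗ[R] Bi R X Y) = LinearMap.id - conel x ∘ₗ bdD :=
    ext_el (by
      rintro ⟨s, t⟩
      simp only [LinearMap.comp_apply, conel_el, LinearMap.sub_apply, LinearMap.id_apply]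
      rw [bdD, lin_el, lin_el]
      simp only [bd_cons, map_sub, LinearMap.sub_apply, map_add, map_smul, ← tens_cone, cone_el,
        List.length_cons, pow_succ]
      simp [tens]
      abel)
  exact LinearMap.congr_fun this w

theorem bdD_AW_el (l : List (X × Y)) : bdD (AW (el R l)) = AW (bd (el R l)) +
    el R ([], l.map Prod.snd) + (-1 : R) ^ (l.length + 1) • el R (l.map Prod.fst, []) := by
  induction l with
  | nil => simp
  | cons p l ih =>
    rw [AW_cons, map_add, bdD_conel, ih, bd_cons, map_sub]
    have e : AW (cone p (bd (el R l))) =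
        tens (el R [p.1]) (cone p.2 (bd (el R (l.map Prod.snd)))) + conel p.1 (AW (bd (el R l))) := by
      have h := (mp_isCh (R := R) (Prod.snd : X × Y → Y)).comm l
      rw [mp_el] at h
      rw [h]
      have : (AW ∘ₗ cone p : Ch R (X × Y) →ₗ[R] Bi R X Y) =
        tens (el R [p.1]) ∘ₗ cone p.2 ∘ₗ mp Prod.snd + conel p.1 ∘ₗ AW :=
        ext_el (by intro m; simp [AW_cons, tens])
      exact LinearMap.congr_fun this _
    rw [e, bdD, lin_el]
    simp only [List.map_cons, bd_cons, map_sub, map_add, map_smul, conel_el, List.length_cons,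
      List.length_nil, pow_succ]
    simp [tens]
    abel

theorem AW_supp (l : List (X × Y)) : AW (el R l) ∈ sup R (fun q => q.1 ⊆ l.map Prod.fst ∧
    q.2 ⊆ l.map Prod.snd ∧ q.1.length + q.2.length = l.length + 1) := by
  induction l with
  | nil => simp
  | cons p l ih =>
    rw [AW_cons]
    refine Submodule.add_mem _ (el_mem_sup ⟨by simp, by simp, by simp; omega⟩) ?_
    refine map_sup ?_ ih
    rintro q ⟨h1, h2, h3⟩
    rw [conel_el]
    refine el_mem_sup ⟨?_, ?_, by simp; omega⟩
    · exact List.cons_subset_cons _ h1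
    · exact List.subset_cons_of_subset _ h2

theorem AW_head (p : X × Y) (l : List (X × Y)) :
    AW (el R (p :: l)) ∈ sup R (fun q => ∃ s, q.1 = p.1 :: s) := by
  rw [AW_cons]
  refine Submodule.add_mem _ (el_mem_sup ⟨[], rfl⟩) ?_
  refine map_sup ?_ (sup_true _)
  intro q _
  rw [conel_el]
  exact el_mem_sup ⟨_, rfl⟩

def hasdup (l : List X) : Prop := ∃ a l₁ l₂, l = l₁ ++ a :: a :: l₂

theorem hasdup.cons {l : List X} (x : X) (h : hasdup l) : hasdup (x :: l) := by
  obtain ⟨a, l₁, l₂, rfl⟩ := h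
  exact ⟨a, x :: l₁, l₂, rfl⟩

theorem hasdup_cc (x : X) (l : List X) : hasdup (x :: x :: l) := ⟨x, [], l, rfl⟩

theorem AW_dup {l : List (X × Y)} (h : hasdup l) :
    AW (el R l) ∈ sup R (fun q => hasdup q.1 ∨ hasdup q.2) := by
  obtain ⟨a, l₁, l₂, rfl⟩ := h
  induction l₁ with
  | nil =>
    rw [List.nil_append, AW_cons]
    refine Submodule.add_mem _ (el_mem_sup (Or.inr ?_)) ?_
    · exact hasdup_cc _ _
    · refine map_sup ?_ (AW_head (R := R) _ _)
      rintro q ⟨s, hs⟩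
      rw [conel_el]
      refine el_mem_sup (Or.inl ?_)
      simp only [hs]; exact hasdup_cc _ _
  | cons p l₁ ih =>
    rw [List.cons_append, AW_cons]
    refine Submodule.add_mem _ (el_mem_sup (Or.inr ?_)) ?_
    · exact ⟨a.2, (p :: l₁).map Prod.snd, l₂.map Prod.snd, by simp⟩
    · refine map_sup ?_ ih
      rintro q hq
      rw [conel_el]
      refine el_mem_sup ?_
      rcases hq with hq | hq
      · exact Or.inl (hq.cons _)
      · exact Or.inr hq

/-- evaluation of a product cochain on bichains -/
noncomputable def ev (c : List X → R) (c' : List Y → R) : Bi R X Y →ₗ[R] R :=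
  lin R (fun q => c q.1 * c' q.2)

theorem ev_conel (c : List X → R) (c' : List Y → R) (x : X) (w : Bi R X Y) :
    ev c c' (conel x w) = ev (fun l => c (x :: l)) c' w := by
  have : (ev c c' ∘ₗ conel x : Bi R X Y →ₗ[R] R) = ev (fun l => c (x :: l)) c' :=
    ext_el (by intro q; simp [ev])
  exact LinearMap.congr_fun this w

theorem ev_AW_cone (c : List X → R) (c' : List Y → R) (p : X × Y) (w : Ch R (X × Y)) :
    ev c c' (AW (cone p w)) = c [p.1] * lin R (fun l => c' (p.2 :: l.map Prod.snd)) w +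
      ev (fun l => c (p.1 :: l)) c' (AW w) := by
  have : (ev c c' ∘ₗ AW ∘ₗ cone p : Ch R (X × Y) →ₗ[R] R) =
      c [p.1] • lin R (fun l => c' (p.2 :: l.map Prod.snd)) +
      ev (fun l => c (p.1 :: l)) c' ∘ₗ AW :=
    ext_el (by
      intro l
      simp only [LinearMap.comp_apply, cone_el, AW_cons, map_add, ev_conel, LinearMap.add_apply,
        LinearMap.smul_apply, lin_el, List.map_cons, smul_eq_mul]
      rw [ev, lin_el])
  have := LinearMap.congr_fun this w
  simpa using this

theorem EZL_single (x : X) (t : List Y) (ht : t ≠ []) : EZL R [x] t = el R (t.map (fun y => (x, y))) := by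
  induction t with
  | nil => simp at ht
  | cons y t ih =>
    cases t with
    | nil => simp [EZL]
    | cons y' t => rw [EZL_cons, ih (by simp)]; simp [EZL]

theorem ev_AW_EZ (c : List X → R) (c' : List Y → R) (s : List X) (t : List Y) (hs : s ≠ [])
    (ht : t ≠ [])
    (h1 : ∀ l, l.length ≠ s.length → c l = 0) (h2 : ∀ l, hasdup l → c l = 0) :
    ev c c' (AW (EZL R s t)) = c s * c' t := by
  induction s generalizing c with
  | nil => simp at hs
  | cons x s ih =>
    cases s with
    | nil =>
      rw [EZL_single x t ht]
      cases t with
      | nil => simp at ht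
      | cons y t =>
        rw [List.map_cons, AW_cons, map_add, ev_conel]
        have : ev (fun l => c (x :: l)) c' (AW (el R (t.map (fun y => (x, y))))) = 0 := by
          cases t with
          | nil => simp
          | cons y' t =>
            rw [List.map_cons]
            refine zero_sup ?_ (AW_head (R := R) _ _)
            rintro q ⟨s, hs⟩
            simp only [ev, lin_el]
            rw [hs, h1 _ (by simp)]; simp
        rw [this, ev, lin_el]
        simp [Function.comp_def]
    | cons x' s =>
      cases t with
      | nil => simp at ht
      | cons y t =>
        rw [EZL_cons, ev_AW_cone, h1 [x] (by simp)]
        simp only [map_add, map_smul]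
        rw [ih (fun l => c (x :: l)) (by simp)]
        · have : ev (fun l => c (x :: l)) c' (AW (EZL R (x :: x' :: s) t)) = 0 := by
            refine zero_sup (f := ev (fun l => c (x :: l)) c' ∘ₗ AW) ?_ (EZL_head (R := R) x (x' :: s) t)
            rintro _ ⟨y, l, rfl⟩
            rw [LinearMap.comp_apply]
            refine zero_sup ?_ (AW_head (R := R) _ _)
            rintro q ⟨s, hs⟩
            simp only [ev, lin_el]
            rw [hs, h2 _ (hasdup_cc _ _)]; simp
          rw [this]; simp
        · intro l hl; exact h1 _ (by simpa using hl)
        · intro l hl; exact h2 _ (hl.cons _)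

end prod
end MD

open Set Filter
set_option linter.unusedSectionVars false
set_option linter.style.haveILetI false
set_option linter.unusedSimpArgs false
set_option linter.unusedVariables false

namespace MD
open MeanDimPaper

section adprod
variable {R : Type*} [CommRing R] {X Y : Type*}

/-- `EZ ∘ (Q ⊗ Q')` on bichains -/
noncomputable def EQ (Q : Ch R X →ₗ[R] Ch R X) (Q' : Ch R Y →ₗ[R] Ch R Y) :
    Bi R X Y →ₗ[R] Ch R (X × Y) := lin R (fun q => EZ (Q (el R q.1)) (Q' (el R q.2)))

theorem EQ_tens (Q : Ch R X →ₗ[R] Ch R X) (Q' : Ch R Y →ₗ[R] Ch R Y) (a : Ch R X) (b : Ch R Y) :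
    EQ Q Q' (tens a b) = EZ (Q a) (Q' b) := by
  have := bil_eq (P := fun _ : List X => True) (P' := fun _ : List Y => True)
    (B := (tens (R := R)).compr₂ (EQ Q Q'))
    (B' := (EZ (R := R)).compl₁₂ Q Q')
    (fun s t hs _ => by simp [tens, EQ]) (sup_true a) (sup_true b)
  simpa using this

theorem bd_EQ {Q : Ch R X →ₗ[R] Ch R X} {Q' : Ch R Y →ₗ[R] Ch R Y} (hQ : IsCh Q) (hQ' : IsCh Q')
    (w : Bi R X Y) : bd (EQ Q Q' w) = EQ Q Q' (bdD w) := by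
  have : (bd ∘ₗ EQ Q Q' : Bi R X Y →ₗ[R] _) = EQ Q Q' ∘ₗ bdD :=
    ext_el (by
      rintro ⟨s, t⟩
      simp only [LinearMap.comp_apply]
      rw [EQ, bdD, lin_el, lin_el, ← EQ]
      dsimp only
      rw [bd_EZ s.length (hQ.len s), map_add, map_smul, EQ_tens, EQ_tens, hQ.comm', hQ'.comm'])
  exact LinearMap.congr_fun this w

open Classical in
noncomputable def nilP (R : Type*) [CommRing R] (X : Type*) : Ch R X →ₗ[R] Ch R X :=
  lin R (fun l => if l = [] then el R [] else 0)

noncomputable def prodQ (Q : Ch R X →ₗ[R] Ch R X) (Q' : Ch R Y →ₗ[R] Ch R Y) :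
    Ch R (X × Y) →ₗ[R] Ch R (X × Y) := EQ Q Q' ∘ₗ AW + nilP R (X × Y)

theorem prodQ_nil (Q : Ch R X →ₗ[R] Ch R X) (Q' : Ch R Y →ₗ[R] Ch R Y) :
    prodQ Q Q' (el R []) = el R [] := by
  simp [prodQ, nilP]

theorem prodQ_cons (Q : Ch R X →ₗ[R] Ch R X) (Q' : Ch R Y →ₗ[R] Ch R Y) (l : List (X × Y))
    (hl : l ≠ []) :
    prodQ Q Q' (el R l) = EQ Q Q' (AW (el R l)) := by
  simp [prodQ, nilP, hl]

theorem EZ_nil_left_len {p : ℕ} (hp : p ≠ 1) {b : Ch R Y} (hb : b ∈ sup R (fun l => l.length = p)) :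
    EZ (el R ([] : List X)) b = 0 := by
  refine zero_sup (f := EZ (el R ([] : List X))) ?_ hb
  intro l hl
  match l with
  | [] => simp [EZ, EZL]
  | [y] => simp at hl; omega
  | y :: y' :: t => simp [EZ, EZL]

theorem EZ_nil_left_one {b : Ch R Y} (hb : b ∈ sup R (fun l => l.length = 1)) :
    mp (fun q : X × Y => q.2) (EZ (el R ([] : List X)) b) = bd b := by
  refine eqOn_sup (f := mp (fun q : X × Y => q.2) ∘ₗ EZ (el R ([] : List X))) ?_ hb
  intro l hl
  match l with
  | [y] => simp [EZ, EZL, bd_cons]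

theorem EZ_nil_left_one' {b : Ch R Y} (hb : b ∈ sup R (fun l => l.length = 1))
    (hbd : bd b = el R []) :
    EZ (el R ([] : List X)) b = el R [] := by
  have h1 : EZ (el R ([] : List X)) b = lin R (fun _ => el R ([] : List (X × Y))) b := by
    refine eqOn_sup (f := EZ (el R ([] : List X))) ?_ hb
    intro l hl
    match l with
    | [y] => simp [EZ, EZL]
  have h2 : lin R (fun _ => el R ([] : List (X × Y))) b = lin R (fun _ => el R ([] : List (X × Y))) (bd b) := by
    refine eqOn_sup (g := lin R (fun _ => el R ([] : List (X × Y))) ∘ₗ bd) ?_ hb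
    intro l hl
    match l with
    | [y] => simp [bd_cons]
  rw [h1, h2, hbd, lin_el]

theorem prodQ_isCh {Q : Ch R X →ₗ[R] Ch R X} {Q' : Ch R Y →ₗ[R] Ch R Y} (hQ : IsCh Q)
    (hQ' : IsCh Q') : IsCh (prodQ Q Q') where
  nil := prodQ_nil Q Q'
  len l := by
    by_cases hl : l = []
    · subst hl; rw [prodQ_nil]; exact el_mem_sup rfl
    rw [prodQ_cons _ _ _ hl]
    refine map_sup ?_ (AW_supp (R := R) l)
    rintro ⟨s, t⟩ ⟨_, _, h3⟩
    rw [EQ, lin_el]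
    refine bil_mem ?_ (hQ.len s) (hQ'.len t)
    intro a b ha hb
    rw [EZ, bil_el]
    refine sup_mono ?_ (EZL_supp (R := R) a b)
    rintro m ⟨h4, _⟩
    simp only at h3
    omega
  comm l := by
    by_cases hl : l = []
    · subst hl; rw [prodQ_nil]; simp
    rw [prodQ_cons _ _ _ hl, bd_EQ hQ hQ', bdD_AW_el, map_add, map_add, map_smul]
    have e1 : EQ Q Q' (el R (l.map Prod.fst, [])) = 0 := by
      rw [EQ, lin_el, hQ'.nil, EZ_nil_right]
    have e2 : EQ Q Q' (el R ([], l.map Prod.snd)) = nilP R (X × Y) (bd (el R l)) := by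
      rw [EQ, lin_el, hQ.nil]
      dsimp only
      by_cases h1 : l.length = 1
      · rw [EZ_nil_left_one']
        · match l with
          | [p] => simp [bd_cons, nilP]
        · simpa [h1] using hQ'.len (l.map Prod.snd)
        · rw [hQ'.comm']
          match l with
          | [p] => simp [bd_cons, hQ'.nil]
      · rw [EZ_nil_left_len h1 (by simpa using hQ'.len (l.map Prod.snd))]
        symm
        refine zero_sup ?_ (bd_supp (R := R) l)
        rintro m ⟨h2, _⟩
        have : m ≠ [] := by rintro rfl; simp at h2; omega
        simp [nilP, this]
    rw [e1, e2, prodQ]; simp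

variable {X Y : Type*} [MetricSpace X] [MetricSpace Y]

theorem AD.prod {n m : ℕ} (h : AD R X n) (h' : AD R Y m) : AD R (X × Y) (n + m) := by
  intro ε hε
  obtain ⟨δ, hδ, Q, h1, h2, h3⟩ := h (ε / 2) (by positivity)
  obtain ⟨δ', hδ', Q', h1', h2', h3'⟩ := h' (ε / 2) (by positivity)
  have hs : ∀ {η : ℝ} {l : List (X × Y)}, small η l → small η (l.map Prod.fst) := by
    intro η l hl u hu v hv
    obtain ⟨u, hu', rfl⟩ := List.mem_map.1 hu
    obtain ⟨v, hv', rfl⟩ := List.mem_map.1 hv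
    exact lt_of_le_of_lt (le_max_left _ _) (hl u hu' v hv')
  have hs' : ∀ {η : ℝ} {l : List (X × Y)}, small η l → small η (l.map Prod.snd) := by
    intro η l hl u hu v hv
    obtain ⟨u, hu', rfl⟩ := List.mem_map.1 hu
    obtain ⟨v, hv', rfl⟩ := List.mem_map.1 hv
    exact lt_of_le_of_lt (le_max_right _ _) (hl u hu' v hv')
  refine ⟨min (min δ δ') (ε / 2), by positivity, prodQ Q Q', prodQ_isCh h1 h1', ?_, ?_⟩
  · intro l hl
    by_cases hl0 : l = []
    · subst hl0; rw [prodQ_nil]; exact el_mem_sup (by intro v hv; simp at hv)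
    rw [prodQ_cons _ _ _ hl0]
    refine map_sup ?_ (AW_supp (R := R) l)
    rintro ⟨s, t⟩ ⟨g1, g2, g3⟩
    dsimp only at g1 g2
    rw [EQ, lin_el]
    have hss : small δ s := ((hs hl).sub g1).mono (by simp)
    have htt : small δ' t := ((hs' hl).sub g2).mono (by simp)
    refine bil_mem ?_ (h2 s hss) (h2' t htt)
    intro a b ha hb
    rw [EZ, bil_el]
    refine sup_mono ?_ (EZL_supp (R := R) a b)
    rintro m ⟨_, hm⟩ v hv
    obtain ⟨u1, hu1, d1⟩ := ha v.1 (hm v hv).1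
    obtain ⟨u2, hu2, d2⟩ := hb v.2 (hm v hv).2
    obtain ⟨p, hp, rfl⟩ := List.mem_map.1 (g1 hu1)
    obtain ⟨q, hq, rfl⟩ := List.mem_map.1 (g2 hu2)
    refine ⟨p, hp, ?_⟩
    have hpq : dist q p < ε / 2 := (hl q hq p hp).trans_le (min_le_right _ _)
    have : dist q.2 p.2 ≤ dist q p := le_max_right _ _
    rw [Prod.dist_eq, max_lt_iff]
    constructor
    · linarith
    · linarith [dist_triangle v.2 q.2 p.2]
  · intro l hl hlen
    have hl0 : l ≠ [] := by rintro rfl; simp at hlen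
    rw [prodQ_cons _ _ _ hl0]
    refine zero_sup ?_ (AW_supp (R := R) l)
    rintro ⟨s, t⟩ ⟨g1, g2, g3⟩
    dsimp only at g1 g2 g3
    rw [EQ, lin_el]
    have hss : small δ s := ((hs hl).sub g1).mono (by simp)
    have htt : small δ' t := ((hs' hl).sub g2).mono (by simp)
    by_cases hc : n + 1 < s.length
    · simp [h3 s hss hc]
    · simp [h3' t htt (by omega)]

/-- essential cocycle-cycle pair in degree `n` at scale `ε` -/
def Ess (R : Type*) [CommRing R] (X : Type*) [MetricSpace X] (n : ℕ) (ε : ℝ) : Prop :=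
  ∃ (c : List X → R) (A : Set X),
    (∀ l, small ε l → l.length = n + 2 → lin R c (bd (el R l)) = 0) ∧
    (∀ l, (∃ a ∈ A, ∀ v ∈ l, dist a v < ε) → c l = 0) ∧
    (∀ l, hasdup l → c l = 0) ∧
    (∀ l, l.length ≠ n + 1 → c l = 0) ∧
    ∀ δ > 0, ∃ z ∈ sup R (fun l => small δ l ∧ l.length = n + 1),
      bd z ∈ sup R (fun l => ∀ v ∈ l, v ∈ A) ∧ lin R c z = 1

theorem Ess.mono {n : ℕ} {ε ε' : ℝ} (h : Ess R X n ε) (h' : ε' ≤ ε) : Ess R X n ε' := by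
  obtain ⟨c, A, h1, h2, h3, h4, h5⟩ := h
  refine ⟨c, A, fun l hl => h1 l (hl.mono h'), ?_, h3, h4, h5⟩
  rintro l ⟨a, ha, hv⟩
  exact h2 l ⟨a, ha, fun v hv' => (hv v hv').trans_le h'⟩

theorem ess_order [Nontrivial R] [CompactSpace X] {k : ℕ} {ε : ℝ} (hε : 0 < ε)
    (h : Ess R X (k + 1) ε) {β : Set (Set X)} (hβ : IsOpenCover β) (ho : ord β ≤ k)
    (hm : ∀ U ∈ β, ∀ x ∈ U, ∀ y ∈ U, dist x y < ε / 4) : False := by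
  obtain ⟨c, A, h1, h2, h3, h4, h5⟩ := h
  obtain ⟨δ, hδ, φ, hφ, _, hn⟩ := nerve_map hβ ho hm
  have hd0 : 0 < min δ (ε / 4) := by positivity
  obtain ⟨z, hz, hbz, hcz⟩ := h5 _ hd0
  have hQ : IsCh (altmp R φ) := altmp_isCh φ
  have hN : Near (min δ (ε / 4)) (ε / 4) (altmp R φ) := altmp_near hφ _
  have hH := htp_near (by positivity) hN
  have e1 : altmp R φ z = 0 := by
    refine zero_sup ?_ hz
    rintro l ⟨hl, hlen⟩
    refine altmp_dup fun hd => ?_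
    have := hn l (hl.mono (min_le_left _ _)) hd
    omega
  have e2 : lin R c (bd (htp (altmp R φ) z)) = 0 := by
    refine zero_sup (f := lin R c ∘ₗ bd ∘ₗ htp (altmp R φ)) ?_ hz
    rintro l ⟨hl, hlen⟩
    simp only [LinearMap.comp_apply]
    refine zero_sup (f := lin R c ∘ₗ bd) ?_ (sup_inf (hH l hl) (htp_len hQ l))
    rintro m ⟨g1, g2⟩
    refine h1 m ?_ (by omega)
    have := g1.small hl
    refine this.mono ?_
    have := min_le_right δ (ε / 4)
    linarith
  have hbz' : bd z ∈ sup R (fun l => (small (min δ (ε / 4)) l ∧ l.length = k + 1) ∧ ∀ v ∈ l, v ∈ A) := by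
    refine sup_inf ?_ hbz
    refine map_sup ?_ hz
    rintro l ⟨hl, hlen⟩
    refine sup_mono ?_ (bd_small (R := R) hl)
    rintro m ⟨g1, g2, g3⟩
    exact ⟨g3, by omega⟩
  have e3 : lin R c (htp (altmp R φ) (bd z)) = 0 := by
    refine zero_sup (f := lin R c ∘ₗ htp (altmp R φ)) ?_ hbz'
    rintro l ⟨⟨hl, hlen⟩, hA⟩
    simp only [LinearMap.comp_apply]
    refine zero_sup ?_ (hH l hl)
    intro m hm
    rw [lin_el]
    cases l with
    | nil => simp at hlen
    | cons a l =>
      refine h2 m ⟨a, hA a (by simp), ?_⟩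
      intro v hv
      obtain ⟨u, hu, huv⟩ := hm v hv
      have g1 := hl a (by simp) u hu
      have g2 := min_le_right δ (ε / 4)
      rw [dist_comm] at huv
      linarith [dist_triangle a u v]
  rw [htp_eq hQ z, map_add, map_add, e1, e2, e3] at hcz
  simp at hcz

theorem Ess.prod {n m : ℕ} {ε : ℝ} (h : Ess R X n ε) (h' : Ess R Y m ε) :
    Ess R (X × Y) (n + m) ε := by
  obtain ⟨c, A, h1, h2, h3, h4, h5⟩ := h
  obtain ⟨c', A', h1', h2', h3', h4', h5'⟩ := h'
  have hlin : ∀ w, lin R (fun l => ev c c' (AW (el R l))) w = ev c c' (AW w) := by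
    intro w
    have : lin R (fun l : List (X × Y) => ev c c' (AW (el R l))) = ev c c' ∘ₗ AW :=
      ext_el (by intro l; rw [lin_el]; rfl)
    exact LinearMap.congr_fun this w
  have hs : ∀ {η : ℝ} {l : List (X × Y)}, small η l → small η (l.map Prod.fst) := by
    intro η l hl u hu v hv
    obtain ⟨u, hu', rfl⟩ := List.mem_map.1 hu
    obtain ⟨v, hv', rfl⟩ := List.mem_map.1 hv
    exact lt_of_le_of_lt (le_max_left _ _) (hl u hu' v hv')
  have hs' : ∀ {η : ℝ} {l : List (X × Y)}, small η l → small η (l.map Prod.snd) := by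
    intro η l hl u hu v hv
    obtain ⟨u, hu', rfl⟩ := List.mem_map.1 hu
    obtain ⟨v, hv', rfl⟩ := List.mem_map.1 hv
    exact lt_of_le_of_lt (le_max_right _ _) (hl u hu' v hv')
  refine ⟨fun l => ev c c' (AW (el R l)), {p | p.1 ∈ A ∨ p.2 ∈ A'}, ?_, ?_, ?_, ?_, ?_⟩
  · intro l hl hlen
    rw [hlin]
    have e := congrArg (ev c c') (bdD_AW_el (R := R) l)
    have e0 : ev c c' (bdD (AW (el R l))) = 0 := by
      refine zero_sup (f := ev c c' ∘ₗ bdD) ?_ (AW_supp (R := R) l)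
      rintro ⟨s, t⟩ ⟨g1, g2, g3⟩
      dsimp only at g1 g2 g3
      have hev : ∀ a b, ev c c' (tens a b) = lin R c a * lin R c' b := by
        intro a b
        have := bil_eq (P := fun _ : List X => True) (P' := fun _ : List Y => True)
          (B := (tens (R := R)).compr₂ (ev c c'))
          (B' := (LinearMap.mul R R).compl₁₂ (lin R c) (lin R c'))
          (fun s t hs _ => by simp [tens, ev]) (sup_true a) (sup_true b)
        simpa using this
      rw [LinearMap.comp_apply, bdD, lin_el, map_add, map_smul, hev, hev, lin_el, lin_el]
      dsimp only
      have k1 : lin R c (bd (el R s)) * c' t = 0 := by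
        by_cases ht : t.length = m + 1
        · rw [h1 s ((hs hl).sub g1) (by omega)]; simp
        · rw [h4' t ht]; simp
      have k2 : c s * lin R c' (bd (el R t)) = 0 := by
        by_cases ht : s.length = n + 1
        · rw [h1' t ((hs' hl).sub g2) (by omega)]; simp
        · rw [h4 s ht]; simp
      rw [k1, k2]; simp
    rw [e0, map_add, map_add, map_smul] at e
    simp only [ev, lin_el] at e
    rw [h4 [] (by simp), h4' [] (by simp)] at e
    simpa [ev] using e.symm
  · rintro l ⟨a, ha, hv⟩
    refine zero_sup ?_ (AW_supp (R := R) l)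
    rintro ⟨s, t⟩ ⟨g1, g2, g3⟩
    dsimp only at g1 g2
    rw [ev, lin_el]
    dsimp only
    rcases ha with ha | ha
    · rw [h2 s ⟨a.1, ha, ?_⟩]
      · simp
      intro v hvs
      obtain ⟨p, hp, rfl⟩ := List.mem_map.1 (g1 hvs)
      exact lt_of_le_of_lt (le_max_left _ _) (hv p hp)
    · rw [h2' t ⟨a.2, ha, ?_⟩]
      · simp
      intro v hvs
      obtain ⟨p, hp, rfl⟩ := List.mem_map.1 (g2 hvs)
      exact lt_of_le_of_lt (le_max_right _ _) (hv p hp)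
  · intro l hl
    refine zero_sup ?_ (AW_dup (R := R) hl)
    rintro ⟨s, t⟩ hq
    rw [ev, lin_el]
    rcases hq with hq | hq
    · rw [h3 _ hq]; simp
    · rw [h3' _ hq]; simp
  · intro l hl
    refine zero_sup ?_ (AW_supp (R := R) l)
    rintro ⟨s, t⟩ ⟨_, _, g3⟩
    dsimp only at g3
    rw [ev, lin_el]
    dsimp only
    by_cases ht : t.length = m + 1
    · rw [h4 s (by omega)]; simp
    · rw [h4' t ht]; simp
  · intro δ hδ
    obtain ⟨z, hz, hbz, hcz⟩ := h5 δ hδ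
    obtain ⟨z', hz', hbz', hcz'⟩ := h5' δ hδ
    refine ⟨EZ z z', ?_, ?_, ?_⟩
    · refine bil_mem ?_ hz hz'
      rintro s t ⟨a1, a2⟩ ⟨b1, b2⟩
      rw [EZ, bil_el]
      refine sup_mono ?_ (EZL_supp (R := R) s t)
      rintro l ⟨g1, g2⟩
      refine ⟨?_, by omega⟩
      intro u hu v hv
      rw [Prod.dist_eq, max_lt_iff]
      exact ⟨a1 _ (g2 u hu).1 _ (g2 v hv).1, b1 _ (g2 u hu).2 _ (g2 v hv).2⟩
    · rw [bd_EZ (n + 1) (sup_mono (fun l hl => hl.2) hz)]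
      refine Submodule.add_mem _ ?_ (Submodule.smul_mem _ _ ?_)
      · refine bil_mem ?_ hbz (sup_true z')
        intro s t hs _
        rw [EZ, bil_el]
        refine sup_mono ?_ (EZL_supp (R := R) s t)
        rintro l ⟨g1, g2⟩ v hv
        exact Or.inl (hs _ (g2 v hv).1)
      · refine bil_mem ?_ (sup_true z) hbz'
        intro s t _ hs
        rw [EZ, bil_el]
        refine sup_mono ?_ (EZL_supp (R := R) s t)
        rintro l ⟨g1, g2⟩ v hv
        exact Or.inr (hs _ (g2 v hv).2)
    · rw [hlin]
      have := bil_eq (B := (EZ (R := R)).compr₂ (ev c c' ∘ₗ AW))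
          (B' := (LinearMap.mul R R).compl₁₂ (lin R c) (lin R c'))
          (P := fun l : List X => small δ l ∧ l.length = n + 1)
          (P' := fun l : List Y => small δ l ∧ l.length = m + 1)
          (fun s t hs ht => by
            simp only [LinearMap.compr₂_apply, LinearMap.comp_apply, LinearMap.compl₁₂_apply,
              LinearMap.mul_apply', EZ, bil_el, lin_el]
            refine ev_AW_EZ c c' s t ?_ ?_ ?_ h3
            · rintro rfl; simp at hs
            · rintro rfl; simp at ht
            · intro l hl; exact h4 l (by omega)) hz hz'
      simp only [LinearMap.compr₂_apply, LinearMap.comp_apply, LinearMap.compl₁₂_apply,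
              LinearMap.mul_apply'] at this
      rw [this, hcz, hcz']; simp

theorem Ess.isom (e : X ≃ᵢ Y) {n : ℕ} {ε : ℝ} (h : Ess R X n ε) : Ess R Y n ε := by
  obtain ⟨c, A, h1, h2, h3, h4, h5⟩ := h
  have hlin : ∀ w : Ch R Y, lin R (fun l : List Y => c (l.map e.symm)) w = lin R c (mp e.symm w) := by
    intro w
    have : lin R (fun l : List Y => c (l.map e.symm)) = lin R c ∘ₗ mp e.symm :=
      ext_el (by intro l; simp)
    exact LinearMap.congr_fun this w
  refine ⟨fun l => c (l.map e.symm), e '' A, ?_, ?_, ?_, ?_, ?_⟩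
  · intro l hl hlen
    rw [hlin, ← (mp_isCh (R := R) e.symm).comm', mp_el]
    refine h1 _ ?_ (by simpa using hlen)
    intro u hu v hv
    obtain ⟨u, hu', rfl⟩ := List.mem_map.1 hu
    obtain ⟨v, hv', rfl⟩ := List.mem_map.1 hv
    rw [e.symm.dist_eq]; exact hl u hu' v hv'
  · rintro l ⟨_, ⟨a, ha, rfl⟩, hv⟩
    refine h2 _ ⟨a, ha, ?_⟩
    intro v hv'
    obtain ⟨v, hv'', rfl⟩ := List.mem_map.1 hv'
    have := hv v hv''
    rwa [← e.symm.dist_eq, e.symm_apply_apply] at this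
  · rintro l ⟨a, l₁, l₂, rfl⟩
    exact h3 _ ⟨e.symm a, l₁.map e.symm, l₂.map e.symm, by simp⟩
  · intro l hl; exact h4 _ (by simpa using hl)
  · intro δ hδ
    obtain ⟨z, hz, hbz, hcz⟩ := h5 δ hδ
    refine ⟨mp e z, ?_, ?_, ?_⟩
    · refine map_sup ?_ hz
      rintro l ⟨g1, g2⟩
      rw [mp_el]
      refine el_mem_sup ⟨?_, by simpa using g2⟩
      intro u hu v hv
      obtain ⟨u, hu', rfl⟩ := List.mem_map.1 hu
      obtain ⟨v, hv', rfl⟩ := List.mem_map.1 hv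
      rw [e.dist_eq]; exact g1 u hu' v hv'
    · rw [(mp_isCh (R := R) e).comm']
      refine map_sup ?_ hbz
      intro l hl
      rw [mp_el]
      refine el_mem_sup ?_
      intro v hv
      obtain ⟨v, hv', rfl⟩ := List.mem_map.1 hv
      exact ⟨v, hl v hv', rfl⟩
    · rw [hlin]
      have : (mp e.symm ∘ₗ mp e : Ch R X →ₗ[R] Ch R X) = LinearMap.id :=
        ext_el (by intro l; simp [Function.comp_def])
      have := LinearMap.congr_fun this z
      simp only [LinearMap.comp_apply, LinearMap.id_apply] at this
      rw [this, hcz]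

end adprod
end MD

open Set Filter
set_option linter.unusedSectionVars false
set_option linter.style.haveILetI false
set_option linter.unusedSimpArgs false
set_option linter.unusedVariables false

namespace MD
open MeanDimPaper

section base
variable {R : Type*} [CommRing R] {X : Type*} [MetricSpace X]

theorem AD.subsingleton [Subsingleton X] : AD R X 0 := by
  intro ε hε
  refine ⟨1, one_pos, altmp R id, altmp_isCh id, altmp_near (fun x => by simpa using hε) 1, ?_⟩
  intro l _ hl
  refine altmp_dup ?_
  match l with
  | [] => simp at hl
  | [a] => simp at hl
  | a :: b :: l => simp [Subsingleton.elim a b]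

theorem hasdup_len {α : Type*} {l : List α} (h : hasdup l) : 2 ≤ l.length := by
  obtain ⟨a, l₁, l₂, rfl⟩ := h
  simp; omega

theorem Ess.point (x : X) (ε : ℝ) : Ess R X 0 ε := by
  classical
  refine ⟨fun l => if l.length = 1 then 1 else 0, ∅, ?_, ?_, ?_, ?_, ?_⟩
  · intro l _ hl
    match l with
    | [a, b] => simp [bd_cons]
  · rintro l ⟨a, ha, _⟩; simp at ha
  · intro l hl
    have := hasdup_len hl
    exact if_neg (by omega)
  · intro l hl
    exact if_neg (by omega)
  · intro δ hδ
    refine ⟨el R [x], el_mem_sup ⟨?_, by simp⟩, ?_, ?_⟩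
    · intro u hu v hv
      simp at hu hv
      simp [hu, hv, hδ]
    · rw [bd_cons]; simp only [bd_nil, map_zero, sub_zero]
      exact el_mem_sup (by simp)
    · rw [lin_el]; simp

noncomputable def consIso (K : Type*) [MetricSpace K] (N : ℕ) : (K × (Fin N → K)) ≃ᵢ (Fin (N + 1) → K) where
  toEquiv := (Fin.consEquiv (fun _ : Fin (N + 1) => K))
  isometry_toFun := by
    refine Isometry.of_dist_eq ?_
    rintro ⟨a, f⟩ ⟨b, g⟩
    apply le_antisymm
    · rw [dist_pi_le_iff dist_nonneg]
      intro i
      refine Fin.cases ?_ (fun i => ?_) i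
      · exact le_max_left _ _
      · exact (dist_le_pi_dist f g i).trans (le_max_right _ _)
    · refine max_le ?_ ?_
      · exact dist_le_pi_dist (Fin.cons a f : Fin (N+1) → K) (Fin.cons b g) 0
      · rw [dist_pi_le_iff dist_nonneg]
        intro i
        exact dist_le_pi_dist (Fin.cons a f : Fin (N+1) → K) (Fin.cons b g) i.succ

theorem AD.pow {K : Type*} [MetricSpace K] (h : AD R K 1) (N : ℕ) : AD R (Fin N → K) N := by
  induction N with
  | zero => exact AD.subsingleton
  | succ N ih =>
    have h2 := h.prod ih
    rw [add_comm 1 N] at h2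
    exact h2.isom (consIso K N)

theorem Ess.pow {K : Type*} [MetricSpace K] {ε : ℝ} (h : Ess R K 1 ε) (N : ℕ) :
    Ess R (Fin N → K) N ε := by
  induction N with
  | zero => exact Ess.point (fun i => i.elim0) ε
  | succ N ih =>
    have h2 := h.prod ih
    rw [add_comm 1 N] at h2
    exact h2.isom (consIso K N)

/-- `δ`-chains -/
def chn (δ : ℝ) : X → X → Prop := Relation.ReflTransGen (fun x y => dist x y < δ)

theorem chn.symm {δ : ℝ} {x y : X} (h : chn δ x y) : chn δ y x := by
  induction h with
  | refl => exact Relation.ReflTransGen.refl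
  | tail _ hxy ih => exact Relation.ReflTransGen.head (by rw [dist_comm]; exact hxy) ih

theorem exists_far_chain [CompactSpace X] (h : ¬ topDim X ≤ 0) :
    ∃ a b : X, a ≠ b ∧ ∀ δ > 0, chn δ a b := by
  have h0 : ∃ ε > 0, ∀ δ > 0, ∃ a b : X, ε ≤ dist a b ∧ chn δ a b := by
    by_contra hc
    push Not at hc
    apply h
    refine topDim_le_of_small ?_
    intro ε hε
    obtain ⟨δ, hδ, hd⟩ := hc ε hε
    refine ⟨range (fun x : X => {y | chn δ x y}), ⟨?_, ?_⟩, ?_, ?_⟩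
    · rintro _ ⟨x, rfl⟩
      rw [Metric.isOpen_iff]
      intro y hy
      refine ⟨δ, hδ, fun z hz => ?_⟩
      exact Relation.ReflTransGen.tail hy (by rw [dist_comm]; exact hz)
    · rw [eq_univ_iff_forall]
      exact fun x => ⟨_, ⟨x, rfl⟩, Relation.ReflTransGen.refl⟩
    · have : ord (range (fun x : X => {y | chn δ x y})) ≤ (0 : ℕ) := by
        rw [ord_le_iff]
        intro x L hL hm
        match L with
        | [] => simp
        | [U] => simp
        | U :: V :: L =>
          exfalso
          have hU := hm U (by simp)
          have hV := hm V (by simp)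
          have hne : U ≠ V := by
            simp only [List.nodup_cons, List.mem_cons, not_or] at hL
            exact hL.1.1
          apply hne
          obtain ⟨⟨u, rfl⟩, hxu⟩ := hU
          obtain ⟨⟨v, rfl⟩, hxv⟩ := hV
          have huv : chn δ u v := Relation.ReflTransGen.trans hxu (chn.symm hxv)
          ext y
          exact ⟨fun hy => Relation.ReflTransGen.trans (chn.symm huv) hy,
            fun hy => Relation.ReflTransGen.trans huv hy⟩
      exact_mod_cast this
    · rintro _ ⟨u, rfl⟩ x hx y hy
      by_contra hc
      exact hd x y (not_lt.1 hc) (Relation.ReflTransGen.trans (chn.symm hx) hy)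
  obtain ⟨ε, hε, h0⟩ := h0
  choose a b hab hch using fun n : ℕ => h0 (1 / (n + 1 : ℝ)) (by positivity)
  obtain ⟨⟨p, q⟩, -, φ, hφ, hlim⟩ := isCompact_univ.tendsto_subseq (x := fun n => (a n, b n))
    (fun n => mem_univ _)
  have ha : Tendsto (fun n => a (φ n)) atTop (nhds p) := (continuous_fst.tendsto _).comp hlim
  have hb : Tendsto (fun n => b (φ n)) atTop (nhds q) := (continuous_snd.tendsto _).comp hlim
  refine ⟨p, q, ?_, ?_⟩
  · rintro rfl
    have : Tendsto (fun n => dist (a (φ n)) (b (φ n))) atTop (nhds (dist p p)) := ha.dist hb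
    have := ge_of_tendsto' this (fun n => hab (φ n))
    rw [dist_self] at this
    linarith
  · intro δ hδ
    have e1 : ∀ᶠ n in atTop, dist (a (φ n)) p < δ := (Metric.tendsto_nhds.1 ha) δ hδ
    have e2 : ∀ᶠ n in atTop, dist (b (φ n)) q < δ := (Metric.tendsto_nhds.1 hb) δ hδ
    have e3 : ∀ᶠ n in atTop, 1 / ((φ n : ℝ) + 1) < δ :=
      (tendsto_one_div_add_atTop_nhds_zero_nat.comp hφ.tendsto_atTop).eventually (gt_mem_nhds hδ)
    obtain ⟨n, h1, h2, h3⟩ := (e1.and (e2.and e3)).exists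
    have : chn δ (a (φ n)) (b (φ n)) := Relation.ReflTransGen.mono
      (fun x y (hxy : dist x y < _) => hxy.trans h3) _ _ (hch (φ n))
    refine Relation.ReflTransGen.head (b := a (φ n)) ?_ (Relation.ReflTransGen.tail this h2)
    rw [dist_comm]; exact h1

theorem chain_z {δ : ℝ} (hδ : 0 < δ) {a b : X} (h : chn δ a b) :
    ∃ z ∈ sup R (fun l : List X => small δ l ∧ l.length = 2), bd z = el R [b] - el R [a] := by
  induction h with
  | refl => exact ⟨0, Submodule.zero_mem _, by simp⟩
  | @tail x y _ hxy ih =>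
    obtain ⟨z, hz, hb⟩ := ih
    refine ⟨z + el R [x, y], Submodule.add_mem _ hz (el_mem_sup ⟨?_, by simp⟩), ?_⟩
    · intro u hu v hv
      simp at hu hv
      rcases hu with rfl | rfl <;> rcases hv with rfl | rfl
      · simpa
      · exact hxy
      · rw [dist_comm]; exact hxy
      · simpa
    · rw [map_add, hb]
      simp [bd_cons]

theorem Ess.one [CompactSpace X] (h : ¬ topDim X ≤ 0) : ∃ ε > 0, Ess R X 1 ε := by
  classical
  obtain ⟨a, b, hab, hch⟩ := exists_far_chain h
  have hD : 0 < dist a b := dist_pos.2 hab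
  let lam : X → R := fun x => if dist a b / 2 < dist a x then 1 else 0
  let lam' : List X → R := fun l => match l with
    | [x] => lam x
    | _ => 0
  let c : List X → R := fun l => match l with
    | [x, y] => lam y - lam x
    | _ => 0
  have hc0 : ∀ l : List X, l.length ≠ 2 → c l = 0 := by
    intro l hl
    match l with
    | [] => rfl
    | [x] => rfl
    | [x, y] => simp at hl
    | x :: y :: z :: l => rfl
  have hcl : ∀ w ∈ sup R (fun l : List X => l.length = 2), lin R c w = lin R lam' (bd w) := by
    intro w hw
    refine eqOn_sup (g := lin R lam' ∘ₗ bd) ?_ hw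
    intro l hl
    match l with
    | [x, y] => simp [bd_cons, c, lam']
  refine ⟨dist a b / 4, by positivity, c, {a, b}, ?_, ?_, ?_, hc0, ?_⟩
  · intro l _ hl
    rw [hcl, bd_bd, map_zero]
    exact sup_mono (fun m hm => by omega) (bd_supp (R := R) l)
  · rintro l ⟨p, hp, hv⟩
    match l with
    | [] => rfl
    | [x] => rfl
    | x :: y :: z :: l => rfl
    | [x, y] =>
      have hx := hv x (by simp)
      have hy := hv y (by simp)
      simp only [c, lam]
      rcases hp with rfl | hp
      · rw [if_neg (by linarith), if_neg (by linarith)]; simp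
      · rw [mem_singleton_iff] at hp
        subst hp
        rw [if_pos, if_pos, sub_self]
        · linarith [dist_triangle a x p, dist_comm p x]
        · linarith [dist_triangle a y p, dist_comm p y]
  · rintro l ⟨x, l₁, l₂, rfl⟩
    match l₁, l₂ with
    | [], [] => simp [c]
    | [], y :: l => exact hc0 (x :: x :: y :: l) (by simp)
    | y :: l, l' => exact hc0 ((y :: l) ++ x :: x :: l') (by simp; omega)
  · intro δ hδ
    obtain ⟨z, hz, hb⟩ := chain_z (R := R) hδ (hch δ hδ)
    refine ⟨z, hz, ?_, ?_⟩
    · rw [hb]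
      exact Submodule.sub_mem _ (el_mem_sup (by simp)) (el_mem_sup (by simp))
    · rw [hcl z (sup_mono (fun l hl => hl.2) hz), hb, map_sub, lin_el, lin_el]
      simp only [lam', lam]
      rw [if_pos (by linarith), if_neg (by rw [dist_self]; linarith)]; simp

end base

section lemmaD

theorem coeff_zero {R : Type*} [CommRing R] {α : Type*} {P : α → Prop} {w : α →₀ R} (h : w ∈ sup R P)
    {a : α} (ha : ¬ P a) : w a = 0 := by
  by_contra hc
  exact ha (h (by simpa using hc))

theorem factor_functional {F V W : Type*} [Field F] [AddCommGroup V] [Module F V] [AddCommGroup W]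
    [Module F W] (f : V →ₗ[F] W) (c : V →ₗ[F] F) (h : ∀ v, f v = 0 → c v = 0) :
    ∃ g : W →ₗ[F] F, ∀ v, g (f v) = c v := by
  have : c ∈ (LinearMap.ker f).dualAnnihilator := by
    rw [Submodule.mem_dualAnnihilator]
    exact fun w hw => h w hw
  rw [← LinearMap.range_dualMap_eq_dualAnnihilator_ker] at this
  obtain ⟨g, hg⟩ := this
  exact ⟨g, fun v => by rw [← hg]; rfl⟩

theorem finite_lists {α : Type*} {s : Set α} (hs : s.Finite) (n : ℕ) :
    {l : List α | l.length = n ∧ ∀ v ∈ l, v ∈ s}.Finite := by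
  haveI := hs.to_subtype
  refine ((List.finite_length_eq s n).image (List.map Subtype.val)).subset ?_
  rintro l ⟨h1, h2⟩
  lift l to List s using h2
  exact ⟨l, by simpa using h1, rfl⟩

variable {F : Type*} [Field F] {X : Type*} [MetricSpace X]

theorem factor_sub {F V : Type*} [Field F] [AddCommGroup V] [Module F V] (Z N : Submodule F V)
    (D : V →ₗ[F] V) (c : V →ₗ[F] F) (h : ∀ z ∈ Z, D z ∈ N → c z = 0) :
    ∃ g : V →ₗ[F] F, (∀ v ∈ N, g v = 0) ∧ ∀ z ∈ Z, g (D z) = c z := by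
  obtain ⟨g, hg⟩ := factor_functional (N.mkQ ∘ₗ D ∘ₗ Z.subtype) (c ∘ₗ Z.subtype) (by
    rintro ⟨z, hz⟩ hz0
    simp only [LinearMap.comp_apply, Submodule.subtype_apply, Submodule.mkQ_apply,
      Submodule.Quotient.mk_eq_zero] at hz0 ⊢
    exact h z hz hz0)
  refine ⟨g ∘ₗ N.mkQ, ?_, ?_⟩
  · intro v hv
    have : N.mkQ v = 0 := by
      rw [Submodule.mkQ_apply, Submodule.Quotient.mk_eq_zero]; exact hv
    rw [LinearMap.comp_apply, this, map_zero]
  · intro z hz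
    exact hg ⟨z, hz⟩

theorem exists_local_prim {n : ℕ} {ε : ℝ} (hn : ¬ Ess F X n ε) (c : List X → F) (A : Set X)
    (h1 : ∀ l, small ε l → l.length = n + 2 → lin F c (bd (el F l)) = 0)
    (h2 : ∀ l, (∃ a ∈ A, ∀ v ∈ l, dist a v < ε) → c l = 0)
    (h3 : ∀ l, hasdup l → c l = 0) (h4 : ∀ l, l.length ≠ n + 1 → c l = 0) :
    ∃ δ > 0, ∃ b : List X → F, (∀ m, (∀ v ∈ m, v ∈ A) → b m = 0) ∧
      ∀ l, small δ l → l.length = n + 1 → lin F b (bd (el F l)) = c l := by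
  by_contra hcon
  apply hn
  refine ⟨c, A, h1, h2, h3, h4, ?_⟩
  intro δ hδ
  by_contra hz
  apply hcon
  obtain ⟨g, hg1, hg2⟩ := factor_sub (sup F (fun l : List X => small δ l ∧ l.length = n + 1))
    (sup F (fun l : List X => ∀ v ∈ l, v ∈ A)) bd (lin F c) (by
    intro z hzm hz0
    by_contra hne
    refine hz ⟨(lin F c z)⁻¹ • z, Submodule.smul_mem _ _ hzm, ?_, ?_⟩
    · rw [map_smul]; exact Submodule.smul_mem _ _ hz0
    · rw [map_smul, smul_eq_mul, inv_mul_cancel₀ hne])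
  refine ⟨δ, hδ, fun m => g (el F m), fun m hm => hg1 _ (el_mem_sup hm), ?_⟩
  intro l hl1 hl2
  have e : lin F (fun m => g (el F m)) = g := ext_el (by intro m; rw [lin_el])
  rw [e, hg2 _ (el_mem_sup ⟨hl1, hl2⟩), lin_el]

theorem lemmaD [CompactSpace X] {k : ℕ} (hX : topDim X ≤ (k + 1 : ℕ))
    (hess : ∀ ε > 0, ¬ Ess F X (k + 1) ε) : AD F X k := by
  classical
  intro ε hε
  set e0 := ε / 8 with he0
  have he0p : 0 < e0 := by positivity
  obtain ⟨β, b1, b2, b3, b4, b5⟩ := exists_small_cover hX he0p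
  obtain ⟨d, hd, φ, hφ, hfin, hnod⟩ := nerve_map b2 b3 b5
  have hfin := hfin b1
  set Q := altmp F φ with hQdef
  have hQ : IsCh Q := altmp_isCh φ
  have hQ0 : ∀ l, small d l → k + 2 < l.length → Q (el F l) = 0 := by
    intro l hl hlen
    refine altmp_dup fun hdup => ?_
    have := hnod l hl hdup
    omega
  let S : Finset (List X) := ((finite_lists hfin (k + 2)).subset
    (sep_subset _ (fun l => small (3 * e0) l))).toFinset
  have hS : ∀ ν, ν ∈ S ↔ ((ν.length = k + 2 ∧ ∀ v ∈ ν, v ∈ range φ) ∧ small (3 * e0) ν) := by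
    intro ν; simp only [S, Set.Finite.mem_toFinset]; rfl
  have hprim : ∀ ν ∈ S, ∃ δ > 0, ∃ b : List X → F,
      (∀ m, (∀ v ∈ m, v ∈ {x | ∀ w ∈ ν, 2 * e0 ≤ dist x w}) → b m = 0) ∧
      ∀ l, small δ l → l.length = (k + 1) + 1 → lin F b (bd (el F l)) = Q (el F l) ν := by
    intro ν hν
    rw [hS] at hν
    have hlin : ∀ w, lin F (fun l => Q (el F l) ν) w = Q w ν := by
      intro w
      have : lin F (fun l => Q (el F l) ν) = Finsupp.lapply ν ∘ₗ Q :=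
        ext_el (by intro l; rw [lin_el]; rfl)
      exact LinearMap.congr_fun this w
    have hsupp := fun l => altmp_supp (R := F) φ l
    refine exists_local_prim (hess (min d e0) (by positivity)) (fun l => Q (el F l) ν) _ ?_ ?_ ?_ ?_
    · intro l hl hlen
      rw [hlin, ← hQ.comm', hQ0 l (hl.mono (min_le_left _ _)) (by omega)]
      simp
    · rintro l ⟨a, ha, hv⟩
      refine coeff_zero (hsupp l) ?_
      rintro ⟨-, -, h3⟩
      cases ν with
      | nil => simp at hν
      | cons w ν =>
        have := (h3 w).1 (by simp)
        obtain ⟨u, hu, rfl⟩ := List.mem_map.1 this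
        have g1 := ha (φ u) (by simp)
        have g2 := (hv u hu).trans_le (min_le_right _ _)
        have g3 := hφ u
        linarith [dist_triangle a u (φ u), dist_comm u (φ u)]
    · intro l hl
      have : Q (el F l) = 0 := by
        refine altmp_dup ?_
        obtain ⟨a, l₁, l₂, rfl⟩ := hl
        simp [List.nodup_append]
      rw [this]; simp
    · intro l hl
      refine coeff_zero (hsupp l) ?_
      rintro ⟨-, h2, -⟩
      omega
  choose! dl hdl b hb1 hb2 using hprim
  obtain ⟨d', hd', hd'2⟩ : ∃ d' > 0, ∀ ν ∈ S, d' ≤ dl ν := by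
    rcases S.eq_empty_or_nonempty with hE | hE
    · exact ⟨1, one_pos, by simp [hE]⟩
    · exact ⟨S.inf' hE dl, (Finset.lt_inf'_iff _).2 hdl, fun ν hν => Finset.inf'_le _ hν⟩
  let t : Ch F X →ₗ[F] Ch F X :=
    lin F (fun m => if m.length = k + 1 then ∑ ν ∈ S, b ν m • el F ν else 0)
  have ht : ∀ m, m.length = k + 1 → t (el F m) = ∑ ν ∈ S, b ν m • el F ν := by
    intro m hm; simp only [t]; rw [lin_el, if_pos hm]
  have ht0 : ∀ m, m.length ≠ k + 1 → t (el F m) = 0 := by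
    intro m hm; simp only [t]; rw [lin_el, if_neg hm]
  have htlen : ∀ m, t (el F m) ∈ sup F (fun ν => ν.length = k + 2) := by
    intro m
    by_cases hm : m.length = k + 1
    · rw [ht m hm]
      refine Submodule.sum_mem _ fun ν hν => Submodule.smul_mem _ _ (el_mem_sup ?_)
      exact ((hS ν).1 hν).1.1
    · rw [ht0 m hm]; exact Submodule.zero_mem _
  have htnear : ∀ m, t (el F m) ∈ sup F (near ε m) := by
    intro m
    by_cases hm : m.length = k + 1
    · rw [ht m hm]
      refine Submodule.sum_mem _ fun ν hν => ?_
      by_cases h0 : b ν m = 0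
      · rw [h0, zero_smul]; exact Submodule.zero_mem _
      refine Submodule.smul_mem _ _ (el_mem_sup ?_)
      have : ∃ v ∈ m, ∃ w ∈ ν, dist v w < 2 * e0 := by
        by_contra hcon
        push Not at hcon
        exact h0 (hb1 ν hν m fun v hv => hcon v hv)
      obtain ⟨v, hv, w, hw, hvw⟩ := this
      intro u hu
      refine ⟨v, hv, ?_⟩
      have := ((hS ν).1 hν).2 u hu w hw
      have e8 : ε = 8 * e0 := by rw [he0]; ring
      linarith [dist_triangle u w v, dist_comm v w]
    · rw [ht0 m hm]; exact Submodule.zero_mem _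
  have htbd : ∀ l, l.length ≠ k + 2 → t (bd (el F l)) = 0 := by
    intro l hl
    refine zero_sup ?_ (bd_supp (R := F) l)
    rintro m ⟨hm, _⟩
    exact ht0 m (by omega)
  refine ⟨min (min d d') e0, by positivity, Q - bd ∘ₗ t - t ∘ₗ bd, ?_, ?_, ?_⟩
  · refine ⟨?_, ?_, ?_⟩
    · intro l
      simp [hQ.comm', bd_bd]
    · simp only [LinearMap.sub_apply, LinearMap.comp_apply, hQ.nil, bd_nil, map_zero, sub_zero]
      rw [ht0 [] (by simp)]; simp
    · intro l
      simp only [LinearMap.sub_apply, LinearMap.comp_apply]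
      refine Submodule.sub_mem _ (Submodule.sub_mem _ (hQ.len l) ?_) ?_
      · by_cases hl : l.length = k + 1
        · refine map_sup ?_ (htlen l)
          intro ν hν
          refine sup_mono ?_ (bd_supp (R := F) ν)
          rintro m ⟨hm, _⟩
          omega
        · rw [ht0 l hl]; simp
      · by_cases hl : l.length = k + 2
        · rw [hl]
          refine map_sup (P := fun _ => True) ?_ (sup_true _)
          intro m _
          exact htlen m
        · rw [htbd l hl]; exact Submodule.zero_mem _
  · intro l hl
    simp only [LinearMap.sub_apply, LinearMap.comp_apply]
    refine Submodule.sub_mem _ (Submodule.sub_mem _ ?_ ?_) ?_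
    · exact sup_mono (fun m hm => hm.mono (by linarith)) (altmp_near (R := F) hφ _ l hl)
    · refine map_sup ?_ (htnear l)
      intro ν hν
      refine sup_mono ?_ (bd_supp (R := F) ν)
      rintro m ⟨_, hm⟩ v hv
      exact hν v (hm.subset hv)
    · refine map_sup ?_ (bd_supp (R := F) l)
      rintro m ⟨_, hm⟩
      exact sup_mono (fun ν hν => hν.sub hm.subset) (htnear m)
  · intro l hl hlen
    simp only [LinearMap.sub_apply, LinearMap.comp_apply]
    rw [ht0 l (by omega), map_zero, sub_zero]
    by_cases h2 : l.length = k + 2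
    · have e1 : t (bd (el F l)) = ∑ ν ∈ S, (lin F (b ν) (bd (el F l))) • el F ν := by
        have : ∀ w ∈ sup F (fun m : List X => m.length = k + 1),
            t w = ∑ ν ∈ S, (lin F (b ν) w) • el F ν := by
          intro w hw
          have := eqOn_sup (f := t) (g := ∑ ν ∈ S, (lin F (b ν)).smulRight (el F ν))
            (fun m hm => by rw [ht m hm]; simp) hw
          rw [this]; simp
        exact this _ (sup_mono (fun m hm => by omega) (bd_supp (R := F) l))
      rw [e1, sub_eq_zero]
      have hsp : Q (el F l) ∈ sup F (fun ν => ν ∈ S) := by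
        refine sup_mono ?_ (altmp_supp (R := F) φ l)
        rintro ν ⟨-, h3, h4⟩
        rw [hS]
        refine ⟨⟨by omega, ?_⟩, ?_⟩
        · intro v hv
          obtain ⟨u, _, rfl⟩ := List.mem_map.1 ((h4 v).1 hv)
          exact ⟨u, rfl⟩
        · have := (near_map hφ fun y hy => (h4 y).1 hy).small hl
          refine this.mono ?_
          have := min_le_right (min d d') e0
          linarith
      ext ν
      by_cases hν : ν ∈ S
      · rw [Finsupp.finsetSum_apply, Finset.sum_eq_single ν]
        · rw [hb2 ν hν l (hl.mono ?_) h2]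
          · simp
          · exact (min_le_left _ _).trans ((min_le_right _ _).trans (hd'2 ν hν))
        · intro μ _ hμ
          simp [Finsupp.single_apply, hμ]
        · intro h; exact absurd hν h
      · rw [coeff_zero hsp hν, Finsupp.finsetSum_apply, Finset.sum_eq_zero]
        intro μ hμ
        have : μ ≠ ν := by rintro rfl; exact hν hμ
        simp [Finsupp.single_apply, this]
    · rw [htbd l h2, sub_zero]
      exact hQ0 l (hl.mono ((min_le_left _ _).trans (min_le_left _ _))) (by omega)

end lemmaD
end MD

open Set Filter
set_option linter.unusedSectionVars false
set_option linter.style.haveILetI false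
set_option linter.unusedSimpArgs false
set_option linter.unusedVariables false

namespace MD
open MeanDimPaper

section kill

theorem lin_bd_cons {R : Type*} [CommRing R] {X : Type*} (c : List X → R) (x : X) (l : List X) :
    lin R c (bd (el R (x :: l))) = c l - lin R (fun m => c (x :: m)) (bd (el R l)) := by
  rw [bd_cons, map_sub, lin_el]
  congr 1
  have : lin R c ∘ₗ cone x = lin R (fun m => c (x :: m)) := ext_el (by
    intro m; rw [LinearMap.comp_apply, cone_el, lin_el, lin_el])
  exact LinearMap.congr_fun this _

theorem lin_bd_hom {R R' : Type*} [CommRing R] [CommRing R'] (f : R →+* R') {X : Type*}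
    (c : List X → R) (l : List X) :
    lin R' (fun m => f (c m)) (bd (el R' l)) = f (lin R c (bd (el R l))) := by
  induction l generalizing c with
  | nil => simp [bd_nil]
  | cons x l ih =>
    rw [lin_bd_cons, lin_bd_cons, map_sub, ih (fun m => c (x :: m))]

theorem lin_congr_bd {R : Type*} [CommRing R] {X : Type*} {c c' : List X → R} {l : List X}
    (h : ∀ m, m.length + 1 = l.length → m.Sublist l → c m = c' m) :
    lin R c (bd (el R l)) = lin R c' (bd (el R l)) := by
  refine eqOn_sup ?_ (bd_supp (R := R) l)
  rintro m ⟨h1, h2⟩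
  rw [lin_el, lin_el]; exact h m h1 h2

variable {X : Type*} [MetricSpace X]

theorem kill {R : Type*} [CommRing R] {n : ℕ} (hAD : AD R X n) {c : List X → R} {ε : ℝ} (hε : 0 < ε)
    (hc : ∀ l, small ε l → l.length = n + 3 → lin R c (bd (el R l)) = 0) {S : Set X}
    (hS : ∀ m, small ε m → m.length = n + 2 → c m ≠ 0 → ∀ v ∈ m, v ∈ S) {ρ : ℝ} (hρ : 0 < ρ) :
    ∃ δ > 0, δ ≤ ρ ∧ δ ≤ ε ∧ ∃ b : List X → R,
      (∀ l, small δ l → l.length = n + 2 → lin R b (bd (el R l)) = c l) ∧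
      ∀ m, b m ≠ 0 → ∀ v ∈ m, v ∈ Metric.thickening ρ S := by
  classical
  obtain ⟨d, hd, Q, hQ, hn, hz⟩ := hAD (min (ε / 4) (ρ / 2)) (by positivity)
  set e := min (ε / 4) (ρ / 2) with he
  have hep : 0 < e := by positivity
  have he1 : e ≤ ε / 4 := min_le_left _ _
  have he2 : e ≤ ρ / 2 := min_le_right _ _
  have hn' := htp_near hep hn
  set δ := min d e with hδ
  have hδd : δ ≤ d := min_le_left _ _
  have hδe : δ ≤ e := min_le_right _ _
  refine ⟨δ, by positivity, by linarith, by linarith,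
    fun m => if small δ m ∧ m.length = n + 1 then lin R c (htp Q (el R m)) else 0, ?_, ?_⟩
  · intro l hl hlen
    have e1 : lin R (fun m => if small δ m ∧ m.length = n + 1 then lin R c (htp Q (el R m)) else 0)
        (bd (el R l)) = lin R c (htp Q (bd (el R l))) := by
      refine eqOn_sup (g := lin R c ∘ₗ htp Q) ?_ (bd_supp (R := R) l)
      rintro m ⟨h1, h2⟩
      rw [lin_el, if_pos ⟨hl.sub h2.subset, by omega⟩]; rfl
    rw [e1]
    have e2 := htp_eq hQ (el R l)
    rw [hz l (hl.mono hδd) (by omega), zero_add] at e2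
    have e3 : lin R c (bd (htp Q (el R l))) = 0 := by
      have := sup_inf (hn' l (hl.mono hδd)) (htp_len hQ l)
      refine zero_sup (f := lin R c ∘ₗ bd) ?_ this
      rintro m ⟨h1, h2⟩
      exact hc m ((h1.small hl).mono (by linarith)) (by omega)
    have e4 := congrArg (lin R c) e2
    rw [map_add, e3, zero_add, lin_el] at e4
    exact e4.symm
  · intro m hm v hv
    dsimp only at hm
    by_cases hs : small δ m ∧ m.length = n + 1
    · rw [if_pos hs] at hm
      have : ∃ m', c m' ≠ 0 ∧ near e m m' ∧ m'.length = n + 2 := by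
        by_contra hcon
        push Not at hcon
        apply hm
        refine zero_sup ?_ (sup_inf (hn' m (hs.1.mono hδd)) (htp_len hQ m))
        rintro m' ⟨h1, h2⟩
        rw [lin_el]
        by_contra h0
        exact hcon m' h0 h1 (by omega)
      obtain ⟨m', h1, h2, h3⟩ := this
      cases m' with
      | nil => simp at h3
      | cons w m' =>
        have hw := hS _ ((h2.small hs.1).mono (by linarith)) h3 h1 w (by simp)
        obtain ⟨u, hu, hwu⟩ := h2 w (by simp)
        rw [Metric.mem_thickening_iff]
        refine ⟨w, hw, ?_⟩
        have := hs.1 v hv u hu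
        linarith [dist_triangle v u w, dist_comm u w]
    · rw [if_neg hs] at hm; exact absurd rfl hm

theorem exists_net [CompactSpace X] {ρ : ℝ} (hρ : 0 < ρ) :
    ∃ φ : X → X, (range φ).Finite ∧ ∀ x, dist (φ x) x < ρ := by
  obtain ⟨t, -, ht, hc⟩ := (isCompact_univ (X := X)).finite_cover_balls hρ
  have : ∀ x, ∃ y ∈ t, dist y x < ρ := by
    intro x
    obtain ⟨y, hy, hx⟩ := mem_iUnion₂.1 (hc (mem_univ x))
    exact ⟨y, hy, by rw [dist_comm]; exact hx⟩
  choose φ h1 h2 using this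
  exact ⟨φ, ht.subset (by rintro _ ⟨x, rfl⟩; exact h1 x), h2⟩

theorem near_map' {ε : ℝ} {φ : X → X} (h : ∀ x, dist (φ x) x < ε) (l : List X) :
    near ε l (l.map φ) := near_map h (fun y hy => hy)

theorem zkill_rat [CompactSpace X] {n : ℕ} (hAD : AD ℚ X n) {c : List X → ℤ} {ε : ℝ} (hε : 0 < ε)
    (hc : ∀ l, small ε l → l.length = n + 3 → lin ℤ c (bd (el ℤ l)) = 0) {S : Set X}
    (hS : ∀ m, small ε m → m.length = n + 2 → c m ≠ 0 → ∀ v ∈ m, v ∈ S) {ρ : ℝ} (hρ : 0 < ρ) :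
    ∃ δ > 0, ∃ M : ℕ, 0 < M ∧ ∃ b : List X → ℤ,
      (∀ l, small δ l → l.length = n + 2 → lin ℤ b (bd (el ℤ l)) = M * c l) ∧
      ∀ m, b m ≠ 0 → ∀ v ∈ m, v ∈ Metric.thickening ρ S := by
  classical
  obtain ⟨d, hd, hdρ, hdε, bq, hbq, hbS⟩ := kill hAD (c := fun m => (c m : ℚ)) hε (by
    intro l hl hlen
    have := lin_bd_hom (Int.castRingHom ℚ) c l
    rw [hc l hl hlen, map_zero] at this
    exact this) (S := S) (by
    intro m h1 h2 h3
    exact hS m h1 h2 (by exact_mod_cast h3)) (half_pos hρ)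
  obtain ⟨φ, hfin, hφ⟩ := exists_net (X := X) (ρ := d / 8) (by positivity)
  have hQ : IsCh (mp (R := ℤ) φ) := mp_isCh φ
  have hn : Near (d / 8) (d / 8) (mp (R := ℤ) φ) := by
    intro l hl
    rw [mp_el]; exact el_mem_sup (near_map' hφ l)
  have hn' := htp_near (by positivity) hn
  -- common denominator
  have hF := (finite_lists hfin (n + 1))
  set T := hF.toFinset with hT
  set M : ℕ := ∏ m ∈ T, (bq m).den with hM
  have hMpos : 0 < M := Finset.prod_pos fun m _ => (bq m).den_pos
  have hzint : ∀ m ∈ T, ∃ z : ℤ, (z : ℚ) = M * bq m := by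
    intro m hm
    obtain ⟨q, hq⟩ := Finset.dvd_prod_of_mem (fun m => (bq m).den) hm
    refine ⟨(bq m).num * q, ?_⟩
    rw [hM, hq]
    push_cast
    have : (bq m).den * bq m = (bq m).num := by rw [mul_comm]; exact Rat.mul_den_eq_num _
    rw [mul_right_comm, this]
  have hzint' : ∀ m, ∃ z : ℤ, (m ∈ T → (z : ℚ) = M * bq m) ∧ (m ∉ T → z = 0) := by
    intro m
    by_cases hm : m ∈ T
    · obtain ⟨z, hz⟩ := hzint m hm
      exact ⟨z, fun _ => hz, fun h => absurd hm h⟩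
    · exact ⟨0, fun h => absurd h hm, fun _ => rfl⟩
  choose z hz1 hz2 using hzint'
  have hmT : ∀ m : List X, m.length = n + 1 → m.map φ ∈ T := by
    intro m hm
    rw [hT, Set.Finite.mem_toFinset]
    refine ⟨by simpa using hm, ?_⟩
    intro v hv
    obtain ⟨u, _, rfl⟩ := List.mem_map.1 hv
    exact ⟨u, rfl⟩
  refine ⟨d / 8, by positivity, M, hMpos, fun m => z (m.map φ) +
    (if small (d / 8) m ∧ m.length = n + 1 then M * lin ℤ c (htp (mp φ) (el ℤ m)) else 0), ?_, ?_⟩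
  · intro l hl hlen
    have e1 : lin ℤ (fun m => z (m.map φ) +
        (if small (d / 8) m ∧ m.length = n + 1 then M * lin ℤ c (htp (mp φ) (el ℤ m)) else 0))
        (bd (el ℤ l)) = lin ℤ z (mp φ (bd (el ℤ l))) + M * lin ℤ c (htp (mp φ) (bd (el ℤ l))) := by
      refine eqOn_sup (g := lin ℤ z ∘ₗ mp φ + (M : ℤ) • (lin ℤ c ∘ₗ htp (mp φ))) ?_ (bd_supp (R := ℤ) l)
      rintro m ⟨h1, h2⟩
      rw [lin_el, if_pos ⟨hl.sub h2.subset, by omega⟩]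
      simp only [LinearMap.add_apply, LinearMap.comp_apply, LinearMap.smul_apply, mp_el, lin_el,
        smul_eq_mul]
    rw [e1]
    have e2 := htp_eq hQ (el ℤ l)
    have e3 : lin ℤ c (bd (htp (mp φ) (el ℤ l))) = 0 := by
      have := sup_inf (hn' l hl) (htp_len hQ l)
      refine zero_sup (f := lin ℤ c ∘ₗ bd) ?_ this
      rintro m ⟨h1, h2⟩
      exact hc m ((h1.small hl).mono (by linarith)) (by omega)
    have e4 := congrArg (lin ℤ c) e2
    rw [map_add, map_add, e3, add_zero, lin_el, mp_el, lin_el] at e4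
    have e5 : lin ℤ z (mp φ (bd (el ℤ l))) = M * c (l.map φ) := by
      rw [← hQ.comm', mp_el]
      have hsm : small d (l.map φ) := ((near_map' hφ l).small hl).mono (by linarith)
      have h6 := hbq (l.map φ) hsm (by simpa using hlen)
      have h7 := lin_bd_hom (Int.castRingHom ℚ) z (l.map φ)
      have h8 : lin ℚ (fun m => Int.castRingHom ℚ (z m)) (bd (el ℚ (l.map φ))) =
          M * lin ℚ bq (bd (el ℚ (l.map φ))) := by
        have : lin ℚ (fun m => (M : ℚ) * bq m) = (M : ℚ) • lin ℚ bq := ext_el (by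
          intro m; simp [lin_el])
        rw [show (M : ℚ) * lin ℚ bq (bd (el ℚ (l.map φ))) =
          ((M : ℚ) • lin ℚ bq) (bd (el ℚ (l.map φ))) from rfl, ← this]
        refine lin_congr_bd ?_
        intro m h1 h2
        refine hz1 m ?_
        rw [hT, Set.Finite.mem_toFinset]
        refine ⟨by simp at h1; omega, ?_⟩
        intro v hv
        obtain ⟨u, _, rfl⟩ := List.mem_map.1 (h2.subset hv)
        exact ⟨u, rfl⟩
      rw [h8, h6] at h7
      have h9 : ((lin ℤ z (bd (el ℤ (l.map φ))) : ℤ) : ℚ) = ((M * c (l.map φ) : ℤ) : ℚ) := by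
        push_cast; exact h7.symm
      exact_mod_cast h9
    rw [e5, e4]; ring
  · intro m hm v hv
    dsimp only at hm
    by_cases h0 : z (m.map φ) = 0
    · rw [h0, zero_add] at hm
      by_cases hs : small (d / 8) m ∧ m.length = n + 1
      · rw [if_pos hs] at hm
        have hm := right_ne_zero_of_mul hm
        have : ∃ m', c m' ≠ 0 ∧ near (d / 8) m m' ∧ m'.length = n + 2 := by
          by_contra hcon
          push Not at hcon
          apply hm
          refine zero_sup ?_ (sup_inf (hn' m hs.1) (htp_len hQ m))
          rintro m' ⟨h1, h2⟩
          rw [lin_el]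
          by_contra h0
          exact hcon m' h0 h1 (by omega)
        obtain ⟨m', h1, h2, h3⟩ := this
        cases m' with
        | nil => simp at h3
        | cons w m' =>
          have hw := hS _ ((h2.small hs.1).mono (by linarith)) h3 h1 w (by simp)
          obtain ⟨u, hu, hwu⟩ := h2 w (by simp)
          rw [Metric.mem_thickening_iff]
          refine ⟨w, hw, ?_⟩
          have := hs.1 v hv u hu
          linarith [dist_triangle v u w, dist_comm u w]
      · rw [if_neg hs] at hm; exact absurd rfl hm
    · have hmem : m.map φ ∈ T := by
        by_contra hcon
        exact h0 (hz2 _ hcon)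
      have h1 := hz1 _ hmem
      have h2 : bq (m.map φ) ≠ 0 := by
        intro hcon
        rw [hcon, mul_zero] at h1
        exact h0 (by exact_mod_cast h1)
      have h3 := hbS _ h2 (φ v) (List.mem_map.2 ⟨v, hv, rfl⟩)
      rw [Metric.mem_thickening_iff] at h3 ⊢
      obtain ⟨s, hs, hvs⟩ := h3
      refine ⟨s, hs, ?_⟩
      linarith [dist_triangle v (φ v) s, hφ v, dist_comm v (φ v)]

theorem zkill_step {n p : ℕ} [Fact p.Prime] (hAD : AD (ZMod p) X n) {c : List X → ℤ} {M : ℕ}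
    {b : List X → ℤ} {δ : ℝ} (hδ : 0 < δ) {S : Set X}
    (hb : ∀ l, small δ l → l.length = n + 3 → lin ℤ b (bd (el ℤ l)) = (p * M : ℕ) * c l)
    (hS : ∀ m, b m ≠ 0 → ∀ v ∈ m, v ∈ S) {ρ : ℝ} (hρ : 0 < ρ) :
    ∃ δ > 0, ∃ b : List X → ℤ,
      (∀ l, small δ l → l.length = n + 3 → lin ℤ b (bd (el ℤ l)) = M * c l) ∧
      ∀ m, b m ≠ 0 → ∀ v ∈ m, v ∈ Metric.thickening ρ S := by
  classical
  have hp0 : (p : ℤ) ≠ 0 := by exact_mod_cast (Fact.out : p.Prime).ne_zero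
  obtain ⟨d, hd, hdρ, hdδ, e, he, heS⟩ := kill hAD (c := fun m => (b m : ZMod p)) hδ (by
    intro l hl hlen
    have := lin_bd_hom (Int.castRingHom (ZMod p)) b l
    rw [hb l hl hlen] at this
    refine this.trans ?_
    simp) (S := S) (by
    intro m _ _ h3
    exact hS m (by rintro h; simp [h] at h3)) (half_pos hρ)
  have hlift : ∀ x : ZMod p, ∃ y : ℤ, (y : ZMod p) = x ∧ (x = 0 → y = 0) := by
    intro x
    refine ⟨x.val, by simp, ?_⟩
    rintro rfl; simp
  choose lf hlf1 hlf2 using hlift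
  set e' : List X → ℤ := fun m => lf (e m) with he'
  have hdvd : ∀ m, small d m → m.length = n + 2 → (p : ℤ) ∣ b m - lin ℤ e' (bd (el ℤ m)) := by
    intro m h1 h2
    rw [← ZMod.intCast_zmod_eq_zero_iff_dvd]
    push_cast
    have h3 := lin_bd_hom (Int.castRingHom (ZMod p)) e' m
    have h4 : (fun m => Int.castRingHom (ZMod p) (e' m)) = e := by
      funext m; exact hlf1 _
    rw [h4, he m h1 h2] at h3
    rw [sub_eq_zero]; exact h3
  refine ⟨d, hd, fun m => if small d m ∧ m.length = n + 2 then
    (b m - lin ℤ e' (bd (el ℤ m))) / p else 0, ?_, ?_⟩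
  · intro l hl hlen
    apply mul_left_cancel₀ hp0
    have h1 := hb l (hl.mono hdδ) hlen
    have h2 : (p : ℤ) * lin ℤ (fun m => if small d m ∧ m.length = n + 2 then
        (b m - lin ℤ e' (bd (el ℤ m))) / p else 0) (bd (el ℤ l)) =
        lin ℤ b (bd (el ℤ l)) - lin ℤ e' (bd (bd (el ℤ l))) := by
      refine eqOn_sup (f := (p : ℤ) • lin ℤ _) (g := lin ℤ b - lin ℤ e' ∘ₗ bd) ?_ (bd_supp (R := ℤ) l)
      rintro m ⟨h3, h4⟩
      simp only [LinearMap.smul_apply, lin_el, LinearMap.sub_apply, LinearMap.comp_apply]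
      have hm : small d m ∧ m.length = n + 2 := ⟨hl.sub h4.subset, by omega⟩
      rw [if_pos hm, smul_eq_mul, Int.mul_ediv_cancel' (hdvd m hm.1 hm.2)]
    rw [h2, bd_bd, map_zero, sub_zero, h1]
    push_cast; ring
  · intro m hm v hv
    dsimp only at hm
    by_cases hs : small d m ∧ m.length = n + 2
    swap
    · rw [if_neg hs] at hm; exact absurd rfl hm
    rw [if_pos hs] at hm
    by_cases h0 : b m = 0
    · have h1 : lin ℤ e' (bd (el ℤ m)) ≠ 0 := by
        intro h; rw [h0, h] at hm; simp at hm
      have : ∃ m', e m' ≠ 0 ∧ m'.length + 1 = m.length ∧ m'.Sublist m := by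
        by_contra hcon
        push Not at hcon
        apply h1
        refine zero_sup ?_ (bd_supp (R := ℤ) m)
        rintro m' ⟨h1, h2⟩
        rw [lin_el]
        refine hlf2 _ ?_
        by_contra h3
        exact hcon m' h3 h1 h2
      obtain ⟨m', h2, h3, h4⟩ := this
      cases m' with
      | nil => simp at h3; omega
      | cons w m' =>
        have hw := heS _ h2 w (by simp)
        rw [Metric.mem_thickening_iff] at hw ⊢
        obtain ⟨s, hs', hws⟩ := hw
        refine ⟨s, hs', ?_⟩
        have := hs.1 v hv w (h4.subset (by simp))
        linarith [dist_triangle v w s]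
    · exact Metric.self_subset_thickening hρ S (hS m h0 v hv)

theorem zkill_all {n : ℕ} (hAD : ∀ p : ℕ, [Fact p.Prime] → AD (ZMod p) X n) {c : List X → ℤ} (M : ℕ)
    (hM : 0 < M) :
    ∀ (b : List X → ℤ) (δ : ℝ) (_ : 0 < δ) (S : Set X)
    (_ : ∀ l, small δ l → l.length = n + 3 → lin ℤ b (bd (el ℤ l)) = M * c l)
    (_ : ∀ m, b m ≠ 0 → ∀ v ∈ m, v ∈ S) (ρ : ℝ) (_ : 0 < ρ),
    ∃ δ > 0, ∃ b : List X → ℤ,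
      (∀ l, small δ l → l.length = n + 3 → lin ℤ b (bd (el ℤ l)) = c l) ∧
      ∀ m, b m ≠ 0 → ∀ v ∈ m, v ∈ Metric.thickening ρ S := by
  induction M using induction_on_primes with
  | zero => omega
  | one =>
    intro b δ hδ S hb hS ρ hρ
    exact ⟨δ, hδ, b, by simpa using hb, fun m hm v hv =>
      Metric.self_subset_thickening hρ S (hS m hm v hv)⟩
  | prime_mul p a hp ih =>
    intro b δ hδ S hb hS ρ hρ
    haveI := Fact.mk hp
    obtain ⟨δ', h1, b', h2, h3⟩ := zkill_step (hAD p) (M := a) (c := c) hδ hb hS (half_pos hρ)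
    obtain ⟨δ'', g1, b'', g2, g3⟩ := ih (Nat.pos_of_mul_pos_left hM) b' δ' h1 _ h2 h3 (ρ / 2) (half_pos hρ)
    refine ⟨δ'', g1, b'', g2, fun m hm v hv => ?_⟩
    have := Metric.thickening_thickening_subset _ _ _ (g3 m hm v hv)
    rwa [add_halves] at this

/-- integral cocycles of degree `n + 2` are locally trivial -/
theorem zkill [CompactSpace X] {n : ℕ} (hQ : AD ℚ X n)
    (hAD : ∀ p : ℕ, [Fact p.Prime] → AD (ZMod p) X n) {c : List X → ℤ} {ε : ℝ} (hε : 0 < ε)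
    (hc : ∀ l, small ε l → l.length = n + 4 → lin ℤ c (bd (el ℤ l)) = 0) {S : Set X}
    (hS : ∀ m, small ε m → m.length = n + 3 → c m ≠ 0 → ∀ v ∈ m, v ∈ S) {ρ : ℝ} (hρ : 0 < ρ) :
    ∃ δ > 0, ∃ b : List X → ℤ,
      (∀ l, small δ l → l.length = n + 3 → lin ℤ b (bd (el ℤ l)) = c l) ∧
      ∀ m, b m ≠ 0 → ∀ v ∈ m, v ∈ Metric.thickening ρ S := by
  obtain ⟨δ, hδ, M, hM, b, hb, hbS⟩ := zkill_rat (hQ.mono (Nat.le_succ n)) hε hc hS (half_pos hρ)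
  obtain ⟨δ'', g1, b'', g2, g3⟩ := zkill_all hAD M hM b δ hδ _ hb hbS (ρ / 2) (half_pos hρ)
  refine ⟨δ'', g1, b'', g2, fun m hm v hv => ?_⟩
  have := Metric.thickening_thickening_subset _ _ _ (g3 m hm v hv)
  rwa [add_halves] at this

end kill
end MD

open Set Filter
set_option linter.unusedSectionVars false
set_option linter.style.haveILetI false
set_option linter.unusedSimpArgs false
set_option linter.unusedVariables false

namespace MD

section horn
variable {E : Type*} [TopologicalSpace E]

/-- standard simplex -/
abbrev Dl (m : ℕ) : Set (Fin m → ℝ) := stdSimplex ℝ (Fin m)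

theorem Dl_closed (m : ℕ) : IsClosed (Dl m) := isClosed_stdSimplex ℝ (Fin m)

theorem horn_retract {m : ℕ} (hm : 1 ≤ m) (i : Fin (m + 1)) :
    ∃ r : (Fin (m + 1) → ℝ) → (Fin (m + 1) → ℝ), Continuous r ∧ (∀ t ∈ Dl (m + 1), r t ∈ Dl (m + 1)) ∧
      (∀ t ∈ Dl (m + 1), ∃ j ≠ i, r t j = 0) ∧ ∀ t ∈ Dl (m + 1), ∀ j ≠ i, t j = 0 → r t = t := by
  classical
  have hne : (Finset.univ.erase i).Nonempty := by
    rw [← Finset.card_pos, Finset.card_erase_of_mem (Finset.mem_univ i)]; simp; omega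
  set μ : (Fin (m + 1) → ℝ) → ℝ := fun t => (Finset.univ.erase i).inf' hne t with hμ
  have hμc : Continuous μ := by
    have : μ = (Finset.univ.erase i).inf' hne (fun j (t : Fin (m + 1) → ℝ) => t j) := by
      funext t; simp [hμ, Finset.inf'_apply]
    rw [this]
    exact Continuous.finset_inf' hne (fun j _ => continuous_apply j)
  have hμle : ∀ t j, j ≠ i → μ t ≤ t j := fun t j hj => Finset.inf'_le _ (by simp [hj])
  have hμ0 : ∀ t ∈ Dl (m + 1), 0 ≤ μ t := fun t ht => Finset.le_inf' _ _ fun j _ => ht.1 j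
  refine ⟨fun t j => if j = i then t i + m * μ t else t j - μ t, ?_, ?_, ?_, ?_⟩
  · refine continuous_pi fun j => ?_
    by_cases h : j = i
    · simp only [h, if_true]; fun_prop
    · simp only [h, if_false]; fun_prop
  · intro t ht
    refine ⟨fun j => ?_, ?_⟩
    · dsimp only
      split_ifs with h
      · have := ht.1 i; have := hμ0 t ht; positivity
      · linarith [hμle t j h]
    · rw [← Finset.add_sum_erase _ _ (Finset.mem_univ i)]
      dsimp only
      rw [if_pos rfl]
      rw [Finset.sum_congr rfl (fun j hj => if_neg (Finset.ne_of_mem_erase hj)),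
        Finset.sum_sub_distrib, Finset.sum_const, Finset.card_erase_of_mem (Finset.mem_univ i)]
      simp
      exact ht.2
  · intro t ht
    obtain ⟨j, hj, he⟩ := Finset.exists_mem_eq_inf' hne t
    have hj := Finset.ne_of_mem_erase hj
    refine ⟨j, hj, ?_⟩
    simp only [hj, if_false]
    rw [show μ t = t j from he, sub_self]
  · intro t ht j hj h0
    have : μ t = 0 := le_antisymm (h0 ▸ hμle t j hj) (hμ0 t ht)
    funext l
    simp only [this]
    split_ifs with h
    · simp [h]
    · simp

theorem horn_fill {m : ℕ} (hm : 1 ≤ m) (i : Fin (m + 1)) {S : Set E}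
    (f : Fin (m + 1) → (Fin (m + 1) → ℝ) → E)
    (hc : ∀ j ≠ i, ContinuousOn (f j) (Dl (m + 1) ∩ {t | t j = 0}))
    (hS : ∀ j ≠ i, ∀ t ∈ Dl (m + 1), t j = 0 → f j t ∈ S)
    (hag : ∀ j ≠ i, ∀ l ≠ i, ∀ t ∈ Dl (m + 1), t j = 0 → t l = 0 → f j t = f l t) :
    ∃ F : (Fin (m + 1) → ℝ) → E, ContinuousOn F (Dl (m + 1)) ∧ (∀ t ∈ Dl (m + 1), F t ∈ S) ∧
      ∀ j ≠ i, ∀ t ∈ Dl (m + 1), t j = 0 → F t = f j t := by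
  classical
  obtain ⟨r, hr, h1, h2, h3⟩ := horn_retract hm i
  let h : (Fin (m + 1) → ℝ) → E := fun t =>
    if H : ∃ j, j ≠ i ∧ t j = 0 then f H.choose t else f i t
  have hh : ∀ j ≠ i, ∀ t ∈ Dl (m + 1), t j = 0 → h t = f j t := by
    intro j hj t ht h0
    have H : ∃ j, j ≠ i ∧ t j = 0 := ⟨j, hj, h0⟩
    simp only [h, dif_pos H]
    exact hag _ H.choose_spec.1 _ hj t ht H.choose_spec.2 h0
  have hcont : ContinuousOn h (⋃ j : {j // j ≠ i}, Dl (m + 1) ∩ {t | t j = 0}) := by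
    refine LocallyFinite.continuousOn_iUnion (locallyFinite_of_finite _) ?_ ?_
    · exact fun j => (Dl_closed _).inter (isClosed_eq (continuous_apply _) continuous_const)
    · rintro ⟨j, hj⟩
      exact (hc j hj).congr fun t ht => hh j hj t ht.1 ht.2
  refine ⟨fun t => h (r t), ?_, ?_, ?_⟩
  · refine hcont.comp hr.continuousOn ?_
    intro t ht
    obtain ⟨j, hj, h0⟩ := h2 t ht
    exact mem_iUnion.2 ⟨⟨j, hj⟩, h1 t ht, h0⟩
  · intro t ht
    obtain ⟨j, hj, h0⟩ := h2 t ht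
    dsimp only
    rw [hh j hj _ (h1 t ht) h0]
    exact hS j hj _ (h1 t ht) h0
  · intro j hj t ht h0
    dsimp only
    rw [h3 t ht j hj h0, hh j hj t ht h0]

variable (S : Set E) (y0 : E)

/-- maps of a simplex into `S` collapsing the boundary -/
structure IsG (n : ℕ) (x : (Fin n → ℝ) → E) : Prop where
  cont : ContinuousOn x (Dl n)
  maps : ∀ t ∈ Dl n, x t ∈ S
  bdry : ∀ t ∈ Dl n, ∀ i, t i = 0 → x t = y0

/-- fillable rows -/
def Fil (n : ℕ) (R : Fin (n + 1) → (Fin n → ℝ) → E) : Prop :=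
  ∃ F : (Fin (n + 1) → ℝ) → E, ContinuousOn F (Dl (n + 1)) ∧ (∀ t ∈ Dl (n + 1), F t ∈ S) ∧
    ∀ i, ∀ t ∈ Dl (n + 1), t i = 0 → F t = R i (t ∘ i.succAbove)

variable {S y0}

theorem face_mem {m : ℕ} {t : Fin (m + 1) → ℝ} (ht : t ∈ Dl (m + 1)) {i : Fin (m + 1)} (h : t i = 0) :
    t ∘ i.succAbove ∈ Dl m := by
  refine ⟨fun j => ht.1 _, ?_⟩
  have := ht.2
  rw [Fin.sum_univ_succAbove _ i, h, zero_add] at this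
  exact this

theorem ins_mem {m : ℕ} {t : Fin m → ℝ} (ht : t ∈ Dl m) (i : Fin (m + 1)) :
    (i.insertNth 0 t : Fin (m + 1) → ℝ) ∈ Dl (m + 1) := by
  refine ⟨fun j => ?_, ?_⟩
  · rcases Fin.eq_self_or_eq_succAbove i j with rfl | ⟨j, rfl⟩
    · simp
    · simpa using ht.1 j
  · rw [Fin.sum_univ_succAbove _ i]
    simpa using ht.2

theorem cont_ins {m : ℕ} (i : Fin (m + 1)) :
    Continuous (fun t : Fin m → ℝ => (i.insertNth 0 t : Fin (m + 1) → ℝ)) := by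
  refine continuous_pi fun j => ?_
  rcases Fin.eq_self_or_eq_succAbove i j with rfl | ⟨j, rfl⟩
  · simp; exact continuous_const
  · simp; exact continuous_apply j

theorem cont_face {m : ℕ} (i : Fin (m + 1)) :
    Continuous (fun t : Fin (m + 1) → ℝ => t ∘ i.succAbove) :=
  continuous_pi fun j => continuous_apply _

theorem face_zero {n : ℕ} {x : (Fin n → ℝ) → E} (hx : IsG S y0 n x) {t : Fin (n + 1) → ℝ}
    (ht : t ∈ Dl (n + 1)) {j l : Fin (n + 1)} (hjl : l ≠ j) (h1 : t j = 0) (h2 : t l = 0) :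
    x (t ∘ j.succAbove) = y0 := by
  obtain ⟨p, rfl⟩ := Fin.exists_succAbove_eq hjl
  exact hx.bdry _ (face_mem ht h1) p h2

theorem kan1 {n : ℕ} (hn : 1 ≤ n) (R : Fin (n + 1) → (Fin n → ℝ) → E) (i : Fin (n + 1))
    (hR : ∀ j ≠ i, IsG S y0 n (R j)) :
    ∃ x, IsG S y0 n x ∧ Fil S n (Function.update R i x) := by
  classical
  have hj : ∀ j ≠ i, ContinuousOn (fun t => R j (t ∘ j.succAbove)) (Dl (n + 1) ∩ {t | t j = 0}) :=
    fun j hj => (hR j hj).cont.comp (cont_face j).continuousOn fun t ht => face_mem ht.1 ht.2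
  obtain ⟨F, h1, h2, h3⟩ := horn_fill hn i (S := S) (fun j t => R j (t ∘ j.succAbove)) hj
    (fun j hj t ht h0 => (hR j hj).maps _ (face_mem ht h0)) (by
    intro j hj l hl t ht h0 h0'
    by_cases e : j = l
    · subst e; rfl
    · rw [face_zero (hR j hj) ht (Ne.symm e) h0 h0', face_zero (hR l hl) ht e h0' h0])
  refine ⟨fun s => F (i.insertNth 0 s), ⟨?_, ?_, ?_⟩, F, h1, h2, ?_⟩
  · exact h1.comp (cont_ins i).continuousOn fun t ht => ins_mem ht i
  · exact fun t ht => h2 _ (ins_mem ht i)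
  · intro t ht p hp
    have hne : i.succAbove p ≠ i := Fin.succAbove_ne i p
    rw [h3 _ hne _ (ins_mem ht i) (by simpa using hp)]
    exact face_zero (hR _ hne) (ins_mem ht i) hne.symm (by simpa using hp) (by simp)
  · intro j t ht h0
    by_cases e : j = i
    · subst e
      rw [Function.update_self]
      congr 1
      funext l
      rcases Fin.eq_self_or_eq_succAbove j l with rfl | ⟨l, rfl⟩
      · simp [h0]
      · simp
    · rw [Function.update_of_ne e]
      exact h3 j e t ht h0

theorem succAbove_comm {n : ℕ} {j l : Fin (n + 2)} {p q : Fin (n + 1)} (h1 : j.succAbove p = l)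
    (h2 : l.succAbove q = j) : j.succAbove ∘ p.succAbove = l.succAbove ∘ q.succAbove := by
  refine StrictMono.range_inj ?_ ?_ |>.1 ?_
  · exact (Fin.strictMono_succAbove j).comp (Fin.strictMono_succAbove p)
  · exact (Fin.strictMono_succAbove l).comp (Fin.strictMono_succAbove q)
  · have key : ∀ (j l : Fin (n + 2)) (p : Fin (n + 1)), j.succAbove p = l →
        range (j.succAbove ∘ p.succAbove) = {j, l}ᶜ := by
      rintro j l p rfl
      rw [range_comp, Fin.range_succAbove]
      ext x
      simp only [mem_image, mem_compl_iff, mem_singleton_iff, mem_insert_iff, not_or]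
      constructor
      · rintro ⟨y, hy, rfl⟩
        exact ⟨Fin.succAbove_ne _ _, fun h => hy (Fin.succAbove_right_injective h)⟩
      · rintro ⟨h1, h2⟩
        obtain ⟨y, rfl⟩ := Fin.exists_succAbove_eq h1
        exact ⟨y, fun h => h2 (h ▸ rfl), rfl⟩
    rw [key j l p h1, key l j q h2, pair_comm]

theorem kan2 {n : ℕ} (a : Fin (n + 2) → Fin (n + 2) → (Fin n → ℝ) → E)
    (hs : ∀ j l, a j l = a l j) (i : Fin (n + 2))
    (h : ∀ j ≠ i, Fil S n (fun p => a j (j.succAbove p))) :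
    Fil S n (fun p => a i (i.succAbove p)) := by
  classical
  have h' : ∀ j, ∃ F : (Fin (n + 1) → ℝ) → E, j ≠ i → (ContinuousOn F (Dl (n + 1)) ∧
    (∀ t ∈ Dl (n + 1), F t ∈ S) ∧
    ∀ p, ∀ t ∈ Dl (n + 1), t p = 0 → F t = a j (j.succAbove p) (t ∘ p.succAbove)) := by
    intro j
    by_cases e : j = i
    · exact ⟨fun _ => a i i 0, fun h => absurd e h⟩
    · obtain ⟨F, hF⟩ := h j e
      exact ⟨F, fun _ => hF⟩
  choose F hF using h'
  have key : ∀ (j l : Fin (n + 2)) (p q : Fin (n + 1)), j.succAbove p = l → l.succAbove q = j →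
      ∀ t : Fin (n + 2) → ℝ, a j (j.succAbove p) ((t ∘ j.succAbove) ∘ p.succAbove) =
        a l (l.succAbove q) ((t ∘ l.succAbove) ∘ q.succAbove) := by
    intro j l p q e1 e2 t
    rw [Function.comp_assoc, Function.comp_assoc, succAbove_comm e1 e2, e1, e2, hs]
  obtain ⟨H, h1, h2, h3⟩ := horn_fill (by omega : 1 ≤ n + 1) i (S := S)
    (fun j t => F j (t ∘ j.succAbove))
    (fun j hj => (hF j hj).1.comp (cont_face j).continuousOn fun t ht => face_mem ht.1 ht.2)
    (fun j hj t ht h0 => (hF j hj).2.1 _ (face_mem ht h0)) (by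
    intro j hj l hl t ht h0 h0'
    by_cases e : j = l
    · subst e; rfl
    · obtain ⟨p, hp⟩ := Fin.exists_succAbove_eq (Ne.symm e)
      obtain ⟨q, hq⟩ := Fin.exists_succAbove_eq e
      rw [(hF j hj).2.2 p _ (face_mem ht h0) (by simpa [hp] using h0'),
        (hF l hl).2.2 q _ (face_mem ht h0') (by simpa [hq] using h0), key j l p q hp hq])
  refine ⟨fun s => H (i.insertNth 0 s), h1.comp (cont_ins i).continuousOn fun t ht => ins_mem ht i,
    fun t ht => h2 _ (ins_mem ht i), ?_⟩
  intro p t ht h0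
  have hne : i.succAbove p ≠ i := Fin.succAbove_ne i p
  have hT := ins_mem ht i
  obtain ⟨q, hq⟩ := Fin.exists_succAbove_eq hne.symm
  dsimp only
  rw [h3 _ hne _ hT (by simpa using h0), (hF _ hne).2.2 q _ (face_mem hT (by simpa using h0))
    (by simp [hq]), key _ i q p hq rfl]
  congr 2
  funext x; simp

end horn

end MD

open Set Filter
set_option linter.unusedSectionVars false
set_option linter.style.haveILetI false
set_option linter.unusedSimpArgs false
set_option linter.unusedVariables false

namespace MD

section comb

/-- the `j`-th row of the symmetric matrix with upper triangle `A` -/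
def rowA (A : ℕ → ℕ → ℤ) (j q : ℕ) : ℤ := if q < j then A q j else A j (q + 1)

/-- row with two equal entries -/
def rD (i : ℕ) (m : ℤ) (q : ℕ) : ℤ := if q = i ∨ q = i + 1 then m else 0

/-- row with three entries -/
def rF (p : ℕ) (x y z : ℤ) (q : ℕ) : ℤ :=
  if q = p then x else if q = p + 1 then y else if q = p + 2 then z else 0

/-- row with four entries -/
def rG (p : ℕ) (w x y z : ℤ) (q : ℕ) : ℤ :=
  if q = p then w else if q = p + 1 then x else if q = p + 2 then y else if q = p + 3 then z else 0

/-- upper triangular block of size five -/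
def blk (p : ℕ) (a01 a02 a03 a04 a12 a13 a14 a23 a24 a34 : ℤ) (i j : ℕ) : ℤ :=
  if i = p then (if j = p + 1 then a01 else if j = p + 2 then a02 else if j = p + 3 then a03 else
    if j = p + 4 then a04 else 0)
  else if i = p + 1 then (if j = p + 2 then a12 else if j = p + 3 then a13 else
    if j = p + 4 then a14 else 0)
  else if i = p + 2 then (if j = p + 3 then a23 else if j = p + 4 then a24 else 0)
  else if i = p + 3 then (if j = p + 4 then a34 else 0) else 0

theorem blk_row0 (p : ℕ) (a01 a02 a03 a04 a12 a13 a14 a23 a24 a34 : ℤ) :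
    rowA (blk p a01 a02 a03 a04 a12 a13 a14 a23 a24 a34) p = rG p a01 a02 a03 a04 := by
  funext q
  simp only [rowA, blk, rG]
  split_ifs <;> omega
theorem blk_row1 (p : ℕ) (a01 a02 a03 a04 a12 a13 a14 a23 a24 a34 : ℤ) :
    rowA (blk p a01 a02 a03 a04 a12 a13 a14 a23 a24 a34) (p + 1) = rG p a01 a12 a13 a14 := by
  funext q
  simp only [rowA, blk, rG]
  split_ifs <;> omega
theorem blk_row2 (p : ℕ) (a01 a02 a03 a04 a12 a13 a14 a23 a24 a34 : ℤ) :
    rowA (blk p a01 a02 a03 a04 a12 a13 a14 a23 a24 a34) (p + 2) = rG p a02 a12 a23 a24 := by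
  funext q
  simp only [rowA, blk, rG]
  split_ifs <;> omega
theorem blk_row3 (p : ℕ) (a01 a02 a03 a04 a12 a13 a14 a23 a24 a34 : ℤ) :
    rowA (blk p a01 a02 a03 a04 a12 a13 a14 a23 a24 a34) (p + 3) = rG p a03 a13 a23 a34 := by
  funext q
  simp only [rowA, blk, rG]
  split_ifs <;> omega
theorem blk_row4 (p : ℕ) (a01 a02 a03 a04 a12 a13 a14 a23 a24 a34 : ℤ) :
    rowA (blk p a01 a02 a03 a04 a12 a13 a14 a23 a24 a34) (p + 4) = rG p a04 a14 a24 a34 := by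
  funext q
  simp only [rowA, blk, rG]
  split_ifs <;> omega
theorem blk_row_out (p : ℕ) (a01 a02 a03 a04 a12 a13 a14 a23 a24 a34 : ℤ) {j : ℕ}
    (h : j < p ∨ p + 4 < j) :
    rowA (blk p a01 a02 a03 a04 a12 a13 a14 a23 a24 a34) j = 0 := by
  funext q
  simp only [rowA, blk, Pi.zero_apply]
  split_ifs <;> omega

theorem comb {n : ℕ} (hn : 3 ≤ n) (P : (ℕ → ℤ) → Prop)
    (ext : ∀ r r' : ℕ → ℤ, (∀ p ≤ n, r p = r' p) → P r → P r')
    (kan : ∀ (A : ℕ → ℕ → ℤ) (i : ℕ), i ≤ n + 1 → (∀ j ≤ n + 1, j ≠ i → P (rowA A j)) → P (rowA A i))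
    (D : ∀ i m, i + 1 ≤ n → P (rD i m))
    (step : ∀ m, P (rF 0 1 (m + 1) m)) :
    ∀ r : ℕ → ℤ, ∑ p ∈ Finset.range (n + 1), (-1) ^ p * r p = 0 → P r := by
  have hzero : P 0 := by
    refine ext _ _ ?_ (D 0 0 (by omega))
    intro p _; simp [rD]
  -- rules in terms of blocks
  have rule : ∀ p, p + 3 ≤ n → ∀ a01 a02 a03 a04 a12 a13 a14 a23 a24 a34 : ℤ, ∀ i, i ≤ 4 →
      (i ≠ 0 → P (rG p a01 a02 a03 a04)) → (i ≠ 1 → P (rG p a01 a12 a13 a14)) →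
      (i ≠ 2 → P (rG p a02 a12 a23 a24)) → (i ≠ 3 → P (rG p a03 a13 a23 a34)) →
      (i ≠ 4 → P (rG p a04 a14 a24 a34)) →
      P (rowA (blk p a01 a02 a03 a04 a12 a13 a14 a23 a24 a34) (p + i)) := by
    intro p hp a01 a02 a03 a04 a12 a13 a14 a23 a24 a34 i hi h0 h1 h2 h3 h4
    refine kan _ _ (by omega) ?_
    intro j hj hji
    by_cases hout : j < p ∨ p + 4 < j
    · rw [blk_row_out _ _ _ _ _ _ _ _ _ _ _ hout]; exact hzero
    · obtain rfl | rfl | rfl | rfl | rfl : j = p ∨ j = p + 1 ∨ j = p + 2 ∨ j = p + 3 ∨ j = p + 4 := by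
        omega
      · rw [blk_row0]; exact h0 (by omega)
      · rw [blk_row1]; exact h1 (by omega)
      · rw [blk_row2]; exact h2 (by omega)
      · rw [blk_row3]; exact h3 (by omega)
      · rw [blk_row4]; exact h4 (by omega)
  have eF : ∀ p x y z, rG p x y z 0 = rF p x y z := by
    intro p x y z; funext q; simp only [rG, rF]; split_ifs <;> rfl
  have eF1 : ∀ p x y z, rG p 0 x y z = rF (p + 1) x y z := by
    intro p x y z; funext q; simp only [rG, rF]; split_ifs <;> omega
  have eD0 : ∀ p m, rG p m m 0 0 = rD p m := by
    intro p m; funext q; simp only [rG, rD]; split_ifs <;> omega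
  have eD1 : ∀ p m, rG p 0 m m 0 = rD (p + 1) m := by
    intro p m; funext q; simp only [rG, rD]; split_ifs <;> omega
  have eD2 : ∀ p m, rG p 0 0 m m = rD (p + 2) m := by
    intro p m; funext q; simp only [rG, rD]; split_ifs <;> omega
  have F0 : ∀ z x : ℤ, P (rF 0 x (x + z) z) := by
    intro z x
    induction x using Int.induction_on with
    | zero =>
      rw [zero_add, ← eF, eD1]; exact D _ _ (by omega)
    | succ x ih =>
      have := rule 0 (by omega) 1 (x + 1) x 0 (x + z + 1) (x + z) 0 z 0 0 2 (by omega)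
        (fun _ => by rw [eF]; exact step _) (fun _ => by rw [eF]; exact step _)
        (fun h => absurd rfl h) (fun _ => by rw [eF]; exact ih)
        (fun _ => by rw [eD0]; exact D _ _ (by omega))
      rw [blk_row2, eF] at this
      rw [show (x : ℤ) + 1 + z = x + z + 1 by ring]; exact this
    | pred x ih =>
      have := rule 0 (by omega) 1 (-x) (-x - 1) 0 (-x + z) (-x - 1 + z) 0 z 0 0 3 (by omega)
        (fun _ => by rw [eF]; convert step (-x - 1 : ℤ) using 2; ring)
        (fun _ => by rw [eF]; convert step (-x - 1 + z : ℤ) using 2; ring)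
        (fun _ => by rw [eF]; exact ih) (fun h => absurd rfl h)
        (fun _ => by rw [eD0]; exact D _ _ (by omega))
      rw [blk_row3, eF] at this
      exact this
  have F : ∀ p, p + 2 ≤ n → ∀ x y z : ℤ, y = x + z → P (rF p x y z) := by
    intro p
    induction p with
    | zero => rintro _ x y z rfl; exact F0 z x
    | succ p ih =>
      intro hp
      have G3 : ∀ m, P (rG p m 0 0 m) := by
        intro m
        have := rule p (by omega) m 0 0 m 0 (-m) 0 (-m) (-m) 0 0 (by omega) (fun h => absurd rfl h)
          (fun _ => by rw [eF]; exact ih (by omega) _ _ _ (by ring))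
          (fun _ => by rw [eD2]; exact D _ _ (by omega))
          (fun _ => by rw [eD1]; exact D _ _ (by omega))
          (fun _ => by rw [eF]; exact ih (by omega) _ _ _ (by ring))
        rw [add_zero, blk_row0] at this
        exact this
      intro x y z hy
      have := rule p (by omega) 0 x y z 0 y y 0 x 0 0 (by omega) (fun h => absurd rfl h)
        (fun _ => by rw [eD2]; exact D _ _ (by omega))
        (fun _ => G3 x)
        (fun _ => by rw [eD0]; exact D _ _ (by omega))
        (fun _ => by rw [eF]; exact ih (by omega) _ _ _ (by rw [hy]; ring))
      rw [add_zero, blk_row0, eF1] at this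
      exact this
  have main : ∀ d ≤ n, ∀ r : ℕ → ℤ, (∀ q < n - d, r q = 0) →
      ∑ p ∈ Finset.range (n + 1), (-1) ^ p * r p = 0 → P r := by
    intro d
    induction d with
    | zero =>
      intro _ r hr hsum
      refine ext 0 r ?_ hzero
      intro p hp
      rw [Finset.sum_range_succ, Finset.sum_eq_zero, zero_add] at hsum
      · have h1 : r n = 0 := by
          rcases mul_eq_zero.1 hsum with h | h
          · exact absurd h (pow_ne_zero _ (by norm_num))
          · exact h
        rcases Nat.lt_or_ge p n with h | h
        · simp [hr p (by omega)]
        · obtain rfl : p = n := by omega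
          simp [h1]
      · intro q hq
        rw [hr q (by simpa using hq), mul_zero]
    | succ d ih =>
      intro hd r hr hsum
      obtain ⟨p, hp⟩ : ∃ p, p = n - (d + 1) := ⟨_, rfl⟩
      rw [← hp] at hr
      rcases Nat.eq_zero_or_pos d with rfl | hd0
      · obtain rfl : n = p + 1 := by omega
        refine ext (rD p (r p)) r ?_ (D _ _ (by omega))
        intro q hq
        rw [Finset.sum_range_succ, Finset.sum_range_succ, Finset.sum_eq_zero, zero_add, pow_succ] at hsum
        · have h1 : r (p + 1) = r p := by
            have h2 : (-1 : ℤ) ^ p * (r p - r (p + 1)) = 0 := by linarith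
            rcases mul_eq_zero.1 h2 with h | h
            · exact absurd h (pow_ne_zero _ (by norm_num))
            · linarith
          simp only [rD]
          split_ifs with h
          · rcases h with rfl | rfl
            · rfl
            · exact h1.symm
          · exact (hr q (by omega)).symm
        · intro q hq
          rw [hr q (by simpa using hq), mul_zero]
      · -- general step
        let A : ℕ → ℕ → ℤ := fun i j =>
          if i = p then (if j = p + 1 then r p else if j = p + 3 then - r p else 0)
          else if i = p + 1 then r (j - 1)
          else if i = p + 2 then (if j = p + 3 then r p + r (p + 2) else r (j - 1))
          else 0
        have := kan A (p + 1) (by omega) ?_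
        · refine ext _ _ ?_ this
          intro q hq
          simp only [rowA, A]
          split_ifs <;> first | omega | exact (hr q (by omega)).symm | exact congrArg r (by omega)
        · intro j hj hjp
          by_cases c0 : j < p
          · refine ext 0 _ ?_ hzero
            intro q hq
            simp only [rowA, A, Pi.zero_apply]
            split_ifs <;> omega
          by_cases c1 : j = p
          · refine ext (rF p (r p) 0 (- r p)) _ ?_ (F p (by omega) _ _ _ (by ring))
            intro q hq
            subst c1
            simp only [rowA, A, rF]
            split_ifs <;> omega
          by_cases c2 : j = p + 2
          · refine ih (by omega) _ ?_ ?_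
            · intro q hq
              subst c2
              simp only [rowA, A]
              split_ifs <;> first | omega | exact hr _ (by omega) | skip
            · rw [← hsum]
              have e : ∀ q, q ≤ n → rowA A j q = r q + (if q = p then - r p else 0) +
                  (if q = p + 2 then r p else 0) := by
                intro q hq
                subst c2
                simp only [rowA, A]
                rcases lt_trichotomy q p with h | h | h
                · have := hr q h
                  split_ifs <;> omega
                · subst h; split_ifs <;> omega
                · rcases Nat.lt_or_ge q (p + 2) with h' | h'
                  · obtain rfl : q = p + 1 := by omega
                    simp
                  · rcases Nat.eq_or_lt_of_le h' with h'' | h''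
                    · subst h''; simp; ring
                    · have : q + 1 - 1 = q := by omega
                      rw [this]
                      split_ifs <;> omega
              rw [Finset.sum_congr rfl (fun q hq => by
                rw [e q (by simp at hq; omega), mul_add, mul_add])]
              rw [Finset.sum_add_distrib, Finset.sum_add_distrib]
              simp only [mul_ite, mul_zero, Finset.sum_ite_eq', Finset.mem_range]
              rw [if_pos (by omega), if_pos (by omega)]
              ring
          by_cases c3 : j = p + 3
          · refine ext (rF p (- r p) (r (p + 2)) (r p + r (p + 2))) _ ?_ (F p (by omega) _ _ _ (by ring))
            intro q hq
            subst c3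
            simp only [rowA, A, rF]
            split_ifs <;> first | omega | rfl
          · refine ext (rD (p + 1) (r (j - 1))) _ ?_ (D _ _ (by omega))
            intro q hq
            simp only [rowA, A, rD]
            split_ifs <;> first | omega | rfl
  intro r hr
  exact main n le_rfl r (by intro q hq; omega) hr

end comb
end MD

open Set Filter
set_option linter.unusedSectionVars false
set_option linter.style.haveILetI false
set_option linter.unusedSimpArgs false
set_option linter.unusedVariables false

namespace MD

section hadd
variable {E : Type*} [TopologicalSpace E] {S : Set E} {y0 : E}

theorem IsG.const (hy : y0 ∈ S) (n : ℕ) : IsG S y0 n (fun _ => y0) :=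
  ⟨continuousOn_const, fun _ _ => hy, fun _ _ _ _ => rfl⟩

theorem predAbove_val {n : ℕ} (i : Fin n) (j : Fin (n + 1)) :
    (i.predAbove j).val = if j.val ≤ i.val then j.val else j.val - 1 := by
  by_cases h : j.val ≤ i.val
  · rw [if_pos h, Fin.predAbove_of_le_castSucc _ _ (by simpa [Fin.le_def] using h)]; simp
  · rw [if_neg h, Fin.predAbove_of_castSucc_lt _ _ (by simpa [Fin.lt_def] using h)]; simp

theorem succAbove_val {n : ℕ} (p : Fin (n + 1)) (j : Fin n) :
    (p.succAbove j).val = if j.val < p.val then j.val else j.val + 1 := by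
  by_cases h : j.val < p.val
  · rw [if_pos h, Fin.succAbove_of_castSucc_lt _ _ (by simpa [Fin.lt_def] using h)]; simp
  · rw [if_neg h, Fin.succAbove_of_le_castSucc _ _ (by simpa [Fin.le_def] using h)]; simp

theorem fil_degen {n : ℕ} (hn : 1 ≤ n) {x : (Fin n → ℝ) → E} (hx : IsG S y0 n x) (i : ℕ) (hi : i + 1 ≤ n) :
    Fil S n (fun p : Fin (n + 1) => if p.val = i ∨ p.val = i + 1 then x else fun _ => y0) := by
  classical
  obtain ⟨n, rfl⟩ : ∃ k, n = k + 1 := ⟨n - 1, by omega⟩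
  -- merge map
  let i0 : Fin (n + 1) := ⟨i, by omega⟩
  let mg : (Fin (n + 2) → ℝ) → (Fin (n + 1) → ℝ) := fun t q => ∑ j, if i0.predAbove j = q then t j else 0
  have hmgc : Continuous mg := by
    refine continuous_pi fun q => ?_
    refine continuous_finsetSum _ fun j _ => ?_
    split_ifs
    · exact continuous_apply j
    · exact continuous_const
  have hmg : ∀ t ∈ Dl (n + 2), mg t ∈ Dl (n + 1) := by
    intro t ht
    refine ⟨fun q => Finset.sum_nonneg fun j _ => ?_, ?_⟩
    · split_ifs
      · exact ht.1 j
      · exact le_rfl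
    · simp only [mg]
      rw [Finset.sum_comm]
      simp only [Finset.sum_ite_eq, Finset.mem_univ, if_true]
      exact ht.2
  -- value on faces
  have hface : ∀ (t : Fin (n + 2) → ℝ) (p : Fin (n + 2)), t p = 0 → (p.val = i ∨ p.val = i + 1) →
      mg t = t ∘ p.succAbove := by
    intro t p hp hpi
    funext q
    simp only [mg, Function.comp]
    rw [Fin.sum_univ_succAbove _ p, hp]
    have : ∀ j, i0.predAbove (p.succAbove j) = j := by
      intro j
      apply Fin.ext
      rw [predAbove_val, succAbove_val]
      simp only [i0]
      split_ifs <;> omega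
    simp [this]
  refine ⟨fun t => x (mg t), hx.cont.comp hmgc.continuousOn hmg, fun t ht => hx.maps _ (hmg t ht), ?_⟩
  intro p t ht h0
  dsimp only
  split_ifs with h
  · rw [hface t p h0 h]
  · refine hx.bdry _ (hmg t ht) (i0.predAbove p) ?_
    simp only [mg]
    refine Finset.sum_eq_zero fun j _ => ?_
    split_ifs with hj
    · have : j = p := by
        have h1 := congrArg Fin.val hj
        rw [Fin.ext_iff]
        push Not at h
        rw [predAbove_val, predAbove_val] at h1
        simp only [i0] at h1
        split_ifs at h1 <;> omega
      rw [this, h0]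
    · rfl

theorem exists_cl {n : ℕ} (hn : 2 ≤ n) (hy : y0 ∈ S) {ι : (Fin n → ℝ) → E} (hι : IsG S y0 n ι) :
    ∃ cl : ℤ → (Fin n → ℝ) → E, cl 0 = (fun _ => y0) ∧ cl 1 = ι ∧ (∀ m, IsG S y0 n (cl m)) ∧
      ∀ m, Fil S n (fun p : Fin (n + 1) => if p.val = 0 then ι else if p.val = 1 then cl (m + 1) else
        if p.val = 2 then cl m else fun _ => y0) := by
  classical
  have up : ∀ x : {x // IsG S y0 n x}, ∃ x' : {x // IsG S y0 n x},
      Fil S n (fun p : Fin (n + 1) => if p.val = 0 then ι else if p.val = 1 then x'.1 else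
        if p.val = 2 then x.1 else fun _ => y0) := by
    rintro ⟨x, hx⟩
    obtain ⟨x', hx', hf⟩ := kan1 (S := S) (y0 := y0) (by omega : 1 ≤ n) (fun p : Fin (n + 1) =>
      if p.val = 0 then ι else if p.val = 1 then x else
        if p.val = 2 then x else fun _ => y0) ⟨1, by omega⟩ (by
        intro j hj; split_ifs
        · exact hι
        · exact hx
        · exact hx
        · exact IsG.const hy n)
    refine ⟨⟨x', hx'⟩, ?_⟩
    convert hf using 1
    funext p
    by_cases hp : p = ⟨1, by omega⟩
    · subst hp; simp
    · rw [Function.update_of_ne hp]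
      have : p.val ≠ 1 := fun h => hp (Fin.ext h)
      simp [this]
  have dn : ∀ x : {x // IsG S y0 n x}, ∃ x' : {x // IsG S y0 n x},
      Fil S n (fun p : Fin (n + 1) => if p.val = 0 then ι else if p.val = 1 then x.1 else
        if p.val = 2 then x'.1 else fun _ => y0) := by
    rintro ⟨x, hx⟩
    obtain ⟨x', hx', hf⟩ := kan1 (S := S) (y0 := y0) (by omega : 1 ≤ n) (fun p : Fin (n + 1) =>
      if p.val = 0 then ι else if p.val = 1 then x else
        if p.val = 2 then x else fun _ => y0) ⟨2, by omega⟩ (by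
        intro j hj; split_ifs
        · exact hι
        · exact hx
        · exact hx
        · exact IsG.const hy n)
    refine ⟨⟨x', hx'⟩, ?_⟩
    convert hf using 1
    funext p
    by_cases hp : p = ⟨2, by omega⟩
    · subst hp; simp
    · rw [Function.update_of_ne hp]
      have : p.val ≠ 2 := fun h => hp (Fin.ext h)
      simp [this]
  choose u hu using up
  choose v hv using dn
  let f : ℕ → {x // IsG S y0 n x} := fun k => u^[k] ⟨ι, hι⟩
  let g : ℕ → {x // IsG S y0 n x} := fun k => v^[k] ⟨fun _ => y0, IsG.const hy n⟩
  let cl : ℤ → {x // IsG S y0 n x} := fun m => match m with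
    | Int.ofNat 0 => g 0
    | Int.ofNat (k + 1) => f k
    | Int.negSucc k => g (k + 1)
  refine ⟨fun m => (cl m).1, rfl, rfl, fun m => (cl m).2, ?_⟩
  intro m
  match m with
  | Int.ofNat 0 =>
    have := fil_degen (S := S) (y0 := y0) (by omega) hι 0 (by omega)
    convert this using 1
    funext p
    by_cases h0 : p.val = 0
    · simp [h0]
    · by_cases h1 : p.val = 1
      · simp [h1]; rfl
      · simp [h0, h1]; intro _; rfl
  | Int.ofNat (k + 1) =>
    have := hu (f k)
    have e : u (f k) = cl (Int.ofNat (k + 1) + 1) := by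
      show _ = f (k + 1)
      exact (Function.iterate_succ_apply' u k _).symm
    rw [e] at this
    exact this
  | Int.negSucc k =>
    have := hv (g k)
    have e : v (g k) = cl (Int.negSucc k) := (Function.iterate_succ_apply' v k _).symm
    rw [e] at this
    have e2 : cl (Int.negSucc k + 1) = g k := by
      cases k with
      | zero => rfl
      | succ k => 
        have : Int.negSucc (k + 1) + 1 = Int.negSucc k := by omega
        rw [this]
    dsimp only
    rw [e2]
    exact this

/-- homotopy addition theorem -/
theorem hadd {n : ℕ} (hn : 3 ≤ n) (hy : y0 ∈ S) {ι : (Fin n → ℝ) → E} (hι : IsG S y0 n ι) :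
    ∃ cl : ℤ → (Fin n → ℝ) → E, cl 0 = (fun _ => y0) ∧ cl 1 = ι ∧ (∀ m, IsG S y0 n (cl m)) ∧
      ∀ R : Fin (n + 1) → ℤ, ∑ p, (-1) ^ p.val * R p = 0 → Fil S n (fun p => cl (R p)) := by
  classical
  obtain ⟨cl, h0, h1, hG, hstep⟩ := exists_cl (by omega) hy hι
  refine ⟨cl, h0, h1, hG, ?_⟩
  have key := comb hn (fun r => Fil S n (fun p : Fin (n + 1) => cl (r p))) ?_ ?_ ?_ ?_
  · intro R hR
    have := key (fun p => if h : p < n + 1 then R ⟨p, h⟩ else 0) (by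
      rw [Finset.sum_range]
      simpa only [Fin.is_lt, dite_true, Fin.eta] using hR)
    simpa only [Fin.is_lt, dite_true, Fin.eta] using this
  · intro r r' h
    have : (fun p : Fin (n + 1) => cl (r p)) = (fun p : Fin (n + 1) => cl (r' p)) := by
      funext p; rw [h p (by omega)]
    rw [this]; exact id
  · intro A i hi h
    let a : Fin (n + 2) → Fin (n + 2) → ℤ := fun j l =>
      if j.val < l.val then A j l else A l j
    have hrow : ∀ (j : Fin (n + 2)) (p : Fin (n + 1)), a j (j.succAbove p) = rowA A j p := by
      intro j p
      simp only [a, rowA]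
      by_cases hp : p.val < j.val
      · rw [Fin.succAbove_of_castSucc_lt _ _ (by simpa [Fin.lt_def] using hp)]
        simp [hp, hp.le]
      · rw [Fin.succAbove_of_le_castSucc _ _ (by simpa [Fin.le_def] using hp)]
        have : j.val < p.val + 1 := by omega
        simp [hp, this]
    have := kan2 (S := S) (n := n) (fun j l => cl (a j l)) ?_ ⟨i, by omega⟩ ?_
    · simpa only [hrow] using this
    · intro j l
      congr 1
      simp only [a]
      split_ifs <;> first | omega | rfl | skip
      have : j = l := by apply Fin.ext; omega
      rw [this]
    · intro j hj
      have := h j (by omega) (fun h => hj (Fin.ext h))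
      simpa only [hrow] using this
  · intro i m hi
    have := fil_degen (S := S) (y0 := y0) (by omega) (hG m) i hi
    convert this using 1
    funext p
    simp only [rD]
    split_ifs
    · rfl
    · exact h0
  · intro m
    convert hstep m using 1
    funext p
    simp only [rF]
    split_ifs <;> first | exact h0 | exact h1 | rfl | omega

end hadd
end MD

open Set Filter
set_option linter.unusedSectionVars false
set_option linter.style.haveILetI false
set_option linter.unusedSimpArgs false
set_option linter.unusedVariables false

namespace MD

section cochain

theorem lin_bd_ofFn {R : Type*} [CommRing R] {X : Type*} {n : ℕ} (c : List X → R) (e : Fin (n + 1) → X) :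
    lin R c (bd (el R (List.ofFn e))) = ∑ p : Fin (n + 1), (-1) ^ p.val * c (List.ofFn (e ∘ p.succAbove)) := by
  induction n generalizing c with
  | zero =>
    rw [List.ofFn_succ, lin_bd_cons]
    simp [bd_nil]
  | succ n ih =>
    rw [Fin.sum_univ_succ (n := n + 1), List.ofFn_succ, lin_bd_cons, ih]
    have : ∀ p : Fin (n + 1), List.ofFn (e ∘ (p.succ).succAbove) =
        e 0 :: List.ofFn ((fun i => e i.succ) ∘ p.succAbove) := by
      intro p
      rw [List.ofFn_succ]
      simp [Function.comp_def]
    simp only [this]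
    simp only [Fin.val_zero, pow_zero, one_mul, Fin.val_succ, pow_succ, Fin.succAbove_zero, Function.comp_def]
    rw [sub_eq_add_neg, ← Finset.sum_neg_distrib]
    congr 1
    refine Finset.sum_congr rfl fun p _ => ?_
    ring

theorem sorted_full {k : ℕ} {l : List (Fin (k + 1))} (h : l.Pairwise (· < ·)) (hl : l.length = k + 1) :
    l = List.ofFn (id : Fin (k + 1) → Fin (k + 1)) := by
  have hp : (List.ofFn (id : Fin (k + 1) → Fin (k + 1))).Pairwise (· < ·) := by
    rw [List.pairwise_ofFn]; exact fun i j h => h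
  have hu : l.toFinset = Finset.univ := by
    rw [← Finset.card_eq_iff_eq_univ, List.toFinset_card_of_nodup (h.imp (fun h => h.ne)), hl]; simp
  refine List.Perm.eq_of_pairwise (le := (· < ·)) ?_ h hp ?_
  · intro a b _ _ h1 h2; exact absurd h1 (lt_asymm h2)
  · rw [List.perm_ext_iff_of_nodup (h.imp (fun h => h.ne)) (hp.imp (fun h => h.ne))]
    intro a
    have : a ∈ l.toFinset := by rw [hu]; simp
    exact ⟨fun _ => List.mem_ofFn.2 ⟨a, rfl⟩, fun _ => by simpa using this⟩

variable {X : Type*} {k : ℕ} (lam : X → Fin (k + 1))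

noncomputable def acoc (l : List X) : ℤ := alt (mp lam (el ℤ l)) (List.ofFn (Fin.succ : Fin k → Fin (k + 1)))
noncomputable def ccoc (l : List X) : ℤ := alt (mp lam (el ℤ l)) (List.ofFn (id : Fin (k + 1) → Fin (k + 1)))

theorem lin_alt (L : List (Fin (k + 1))) (x : Ch ℤ X) :
    lin ℤ (fun l => alt (mp lam (el ℤ l)) L) x = alt (mp lam x) L := by
  have : lin ℤ (fun l => alt (mp lam (el ℤ l)) L) = Finsupp.lapply L ∘ₗ alt ∘ₗ mp lam :=
    ext_el (by intro l; rw [lin_el]; rfl)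
  rw [this]; rfl

theorem ccoc_cocycle {l : List X} (hl : l.length = k + 2) : lin ℤ (ccoc lam) (bd (el ℤ l)) = 0 := by
  have := lin_alt lam (List.ofFn (id : Fin (k + 1) → Fin (k + 1))) (bd (el ℤ l))
  refine this.trans ?_
  rw [← (mp_isCh lam).comm', ← alt_isCh.comm', mp_el, alt_dup]
  · simp
  · intro h
    have := h.length_le_card
    simp [hl] at this

theorem ccoc_eq {l : List X} (hl : l.length = k + 1) : lin ℤ (acoc lam) (bd (el ℤ l)) = ccoc lam l := by
  have := lin_alt lam (List.ofFn (Fin.succ : Fin k → Fin (k + 1))) (bd (el ℤ l))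
  refine this.trans ?_
  rw [← (mp_isCh lam).comm', ← alt_isCh.comm', ccoc]
  rw [mp_el]
  have h := alt_supp (R := ℤ) (l.map lam)
  refine eqOn_sup (f := Finsupp.lapply _ ∘ₗ bd) (g := Finsupp.lapply _) ?_ h
  rintro m ⟨h1, h2, -⟩
  obtain rfl := sorted_full h1 (by simpa [hl] using h2)
  classical
  have e : (Finsupp.lapply (List.ofFn (Fin.succ : Fin k → Fin (k + 1))) : Ch ℤ (Fin (k + 1)) →ₗ[ℤ] ℤ) =
      lin ℤ (fun m => if m = (List.ofFn (Fin.succ : Fin k → Fin (k + 1))) then 1 else 0) :=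
    ext_el (by intro l; rw [lin_el]; simp [Finsupp.single_apply])
  rw [LinearMap.comp_apply, e, lin_bd_ofFn, Finset.sum_eq_single 0]
  · simp [Function.comp_def]
  · intro p _ hp
    rw [if_neg, mul_zero]
    intro h
    have := List.ofFn_injective h
    rw [← Fin.succAbove_zero] at this
    exact hp (Fin.succAbove_left_injective this)
  · simp

theorem ccoc_full {l : List X} (h : ccoc lam l ≠ 0) (i : Fin (k + 1)) : ∃ v ∈ l, lam v = i := by
  by_contra hc
  push Not at hc
  apply h
  have h1 := alt_supp (R := ℤ) (l.map lam)
  rw [ccoc, mp_el]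
  refine zero_sup (f := Finsupp.lapply _) ?_ h1
  rintro m ⟨-, -, h3⟩
  have : m ≠ List.ofFn (id : Fin (k + 1) → Fin (k + 1)) := by
    rintro rfl
    have := (h3 i).1 (List.mem_ofFn.2 ⟨i, rfl⟩)
    obtain ⟨v, hv, hvi⟩ := List.mem_map.1 this
    exact hc v hv hvi
  rw [Finsupp.lapply_apply, Finsupp.single_apply, if_neg this]

theorem acoc_one {e : Fin k → X} (h : lam ∘ e = Fin.succ) : acoc lam (List.ofFn e) = 1 := by
  rw [acoc, mp_el, List.map_ofFn, h, alt_sorted]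
  · simp
  · rw [List.pairwise_ofFn]; exact fun i j h => by simpa using h

theorem acoc_zero {e : Fin k → X} (hm : Monotone (lam ∘ e)) (h : lam ∘ e ≠ Fin.succ) :
    acoc lam (List.ofFn e) = 0 := by
  rw [acoc, mp_el, List.map_ofFn]
  by_cases hi : Function.Injective (lam ∘ e)
  · rw [alt_sorted]
    · rw [Finsupp.single_apply, if_neg]
      exact fun h' => h (List.ofFn_injective h')
    · rw [List.pairwise_ofFn]; exact fun i j h => (hm.strictMono_of_injective hi) h
  · rw [alt_dup]
    · simp
    · rwa [List.nodup_ofFn]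

theorem mono_succ {e : Fin k → Fin (k + 1)} (hm : Monotone e) (h : ∀ j : Fin k, ∃ i, e i = j.succ) :
    e = Fin.succ := by
  have hr : univ.image Fin.succ ⊆ range e := by
    rintro _ ⟨j, -, rfl⟩
    exact h j
  choose f hf using h
  have hfi : Function.Injective f := by
    intro a b hab
    have := congrArg e hab
    rw [hf, hf] at this
    exact Fin.succ_injective _ this
  have hfs : Function.Surjective f := Finite.injective_iff_surjective.1 hfi
  have hei : Function.Injective e := by
    intro a b hab
    obtain ⟨a, rfl⟩ := hfs a
    obtain ⟨b, rfl⟩ := hfs b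
    rw [hf, hf] at hab
    rw [Fin.succ_injective _ hab]
  refine (StrictMono.range_inj (hm.strictMono_of_injective hei) (Fin.strictMono_succ)).1 ?_
  apply Set.Subset.antisymm
  · rintro _ ⟨a, rfl⟩
    obtain ⟨a, rfl⟩ := hfs a
    rw [hf]; exact ⟨a, rfl⟩
  · rintro _ ⟨a, rfl⟩; exact ⟨f a, hf a⟩

end cochain

section kap
variable {k : ℕ} [NeZero k]

/-- nonconstant vectors -/
def Nc (k : ℕ) : Set (Fin (k + 1) → ℝ) := {v | ∃ i j, v i ≠ v j}

noncomputable def mu (v : Fin (k + 1) → ℝ) : ℝ := Finset.univ.inf' Finset.univ_nonempty (fun j : Fin k => v j.succ)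

noncomputable def kap (t : ℝ) (v : Fin (k + 1) → ℝ) : Fin (k + 1) → ℝ :=
  fun i => (1 - t) * v i + t * ((if i = 0 then 1 - (k + 1) * mu v else 0) + mu v * v i)

noncomputable def ye (k : ℕ) : Fin (k + 1) → ℝ := fun i => if i = 0 then 1 else 0

theorem mu_cont : Continuous (mu (k := k)) := by
  have : (mu (k := k)) = Finset.univ.inf' Finset.univ_nonempty (fun (j : Fin k) (v : Fin (k + 1) → ℝ) => v j.succ) := by
    funext t; simp [mu, Finset.inf'_apply]
  rw [this]
  exact Continuous.finset_inf' _ (fun j _ => continuous_apply _)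

theorem mu_le (v : Fin (k + 1) → ℝ) (j : Fin k) : mu v ≤ v j.succ := Finset.inf'_le _ (Finset.mem_univ j)

theorem mu_nonneg {v : Fin (k + 1) → ℝ} (hv : ∀ i, 0 ≤ v i) : 0 ≤ mu v := Finset.le_inf' _ _ fun j _ => hv _

theorem mu_zero {v : Fin (k + 1) → ℝ} (hv : ∀ i, 0 ≤ v i) {j : Fin k} (h : v j.succ = 0) : mu v = 0 :=
  le_antisymm (h ▸ mu_le v j) (mu_nonneg hv)

theorem kap_cont : Continuous (fun p : ℝ × (Fin (k + 1) → ℝ) => kap p.1 p.2) := by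
  have := mu_cont (k := k)
  refine continuous_pi fun i => ?_
  unfold kap
  by_cases h : i = 0
  · simp only [h, if_true]; fun_prop
  · simp only [h, if_false]; fun_prop

theorem kap_zero (v : Fin (k + 1) → ℝ) : kap 0 v = v := by
  funext i; simp [kap]

theorem kap_one {v : Fin (k + 1) → ℝ} (hv : ∀ i, 0 ≤ v i) {j : Fin k} (h : v j.succ = 0) : kap 1 v = ye k := by
  funext i; simp [kap, mu_zero hv h, ye]

theorem ye_mem : ye k ∈ Nc k := ⟨0, (0 : Fin k).succ, by simp [ye]⟩

theorem kap_mem {v : Fin (k + 1) → ℝ} (hv : v ∈ Dl (k + 1)) {i : Fin (k + 1)} (hi : v i = 0) {t : ℝ}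
    (h0 : 0 ≤ t) (h1 : t ≤ 1) : kap t v ∈ Nc k := by
  by_contra hc
  simp only [Nc, mem_ofPred_eq, not_exists, not_not] at hc
  have hs := hv.2
  rw [Fin.sum_univ_succ] at hs
  have hk0 : kap t v 0 = (1 - t) * v 0 + t * (1 - (k + 1) * mu v + mu v * v 0) := by simp [kap]
  have hks : ∀ j : Fin k, kap t v j.succ = (1 - t) * v j.succ + t * (mu v * v j.succ) := by
    intro j; simp [kap]
  obtain ⟨j0, -, hj0⟩ := Finset.exists_mem_eq_inf' (Finset.univ_nonempty (α := Fin k)) (fun j : Fin k => v j.succ)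
  have hj0 : mu v = v j0.succ := hj0
  have hmu := mu_nonneg hv.1
  rcases hmu.eq_or_lt with hm | hm
  · -- mu zero
    have e0 : kap t v j0.succ = 0 := by rw [hks, ← hj0, ← hm]; ring
    have e1 : ∀ j : Fin k, (1 - t) * v j.succ = 0 := by
      intro j
      have := hc j.succ j0.succ
      rw [e0, hks, ← hm] at this
      linarith
    have e2 : (1 - t) * v 0 + t = 0 := by
      have := hc 0 j0.succ
      rw [e0, hk0, ← hm] at this
      linarith
    have e3 : (1 - t) * (∑ j : Fin k, v j.succ) = 0 := by
      rw [Finset.mul_sum]; exact Finset.sum_eq_zero fun j _ => e1 j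
    nlinarith
  · have hv0 : v 0 = 0 := by
      refine Fin.cases (motive := fun i => v i = 0 → v 0 = 0) (fun h => h) (fun j hj => ?_) i hi
      have := mu_le v j
      linarith
    have hpos : 0 < 1 - t + t * mu v := by
      rcases h1.eq_or_lt with h | h
      · rw [h]; linarith
      · nlinarith [mul_nonneg h0 hmu]
    have e1 : ∀ j : Fin k, v j.succ = mu v := by
      intro j
      have := hc j.succ j0.succ
      rw [hks, hks, ← hj0] at this
      have : (1 - t + t * mu v) * (v j.succ - mu v) = 0 := by linarith
      rcases mul_eq_zero.1 this with h | h <;> linarith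
    have hk : (k : ℝ) * mu v = 1 := by
      rw [hv0, zero_add, Finset.sum_congr rfl (fun j _ => e1 j)] at hs
      simpa using hs
    have := hc 0 j0.succ
    rw [hk0, hks, ← hj0, hv0] at this
    have h3 : 1 - ((k : ℝ) + 1) * mu v = - mu v := by linarith
    rw [h3] at this
    have h4 : mu v * (1 + t * mu v) = 0 := by linarith
    rcases mul_eq_zero.1 h4 with h | h
    · linarith
    · nlinarith [mul_nonneg h0 hmu]

end kap
end MD

open Set Filter
set_option linter.unusedSectionVars false
set_option linter.style.haveILetI false
set_option linter.unusedSimpArgs false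
set_option linter.unusedVariables false

namespace MD

/-- support of a vector -/
def sp {M : ℕ} (t : Fin M → ℝ) : Set (Fin M) := {w | t w ≠ 0}

theorem restr_sum {M m : ℕ} {t : Fin M → ℝ} {e : Fin m → Fin M} (he : Function.Injective e)
    (hs : sp t ⊆ range e) (f : Fin M → ℝ) : ∑ i, t (e i) * f (e i) = ∑ w, t w * f w := by
  classical
  rw [← Finset.sum_image (s := Finset.univ) (g := e) (f := fun w => t w * f w) (fun a _ b _ h => he h)]
  refine Finset.sum_subset (Finset.subset_univ _) fun w _ hw => ?_
  have : w ∉ sp t := fun h => by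
    obtain ⟨i, rfl⟩ := hs h
    exact hw (Finset.mem_image_of_mem _ (Finset.mem_univ i))
  have : t w = 0 := by simpa [sp] using this
  rw [this, zero_mul]

theorem restr_mem {M m : ℕ} {t : Fin M → ℝ} {e : Fin m → Fin M} (he : Function.Injective e)
    (hs : sp t ⊆ range e) (ht : t ∈ Dl M) : t ∘ e ∈ Dl m := by
  refine ⟨fun i => ht.1 _, ?_⟩
  have := restr_sum he hs (fun _ => 1)
  simp only [mul_one] at this
  exact this.trans ht.2

theorem glue {X E : Type*} [TopologicalSpace X] [TopologicalSpace E] {S : Set E} {y0 : E} (hy : y0 ∈ S)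
    {k M : ℕ} {h : X → Fin M → ℝ} (hc : Continuous h) (hD : ∀ x, h x ∈ Dl M)
    (hcard : ∀ x, (sp (h x)).ncard ≤ k + 1)
    (g : (Fin k → Fin M) → (Fin k → ℝ) → E) (hg : ∀ e, IsG S y0 k (g e))
    (F : (Fin (k + 1) → Fin M) → (Fin (k + 1) → ℝ) → E)
    (hF : ∀ e, StrictMono e → (∃ x, ∀ i, h x (e i) ≠ 0) → ContinuousOn (F e) (Dl (k + 1)) ∧
      (∀ t ∈ Dl (k + 1), F e t ∈ S) ∧ ∀ i, ∀ t ∈ Dl (k + 1), t i = 0 →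
        F e t = g (e ∘ i.succAbove) (t ∘ i.succAbove)) :
    ∃ G : X → E, Continuous G ∧ (∀ x, G x ∈ S) ∧
      (∀ x e, StrictMono e → sp (h x) = range e → G x = g e (h x ∘ e)) ∧
      (∀ x e, StrictMono e → sp (h x) = range e → G x = F e (h x ∘ e)) ∧
      (∀ x, (sp (h x)).ncard < k → G x = y0) := by
  classical
  have hcr : ∀ {m : ℕ} {e : Fin m → Fin M}, StrictMono e → (range e).ncard = m := by
    intro m e he; rw [ncard_range_of_injective he.injective]; simp
  let G : X → E := fun x =>
    if H : ∃ e : Fin (k + 1) → Fin M, StrictMono e ∧ sp (h x) = range e then F H.choose (h x ∘ H.choose)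
    else if H : ∃ e : Fin k → Fin M, StrictMono e ∧ sp (h x) = range e then g H.choose (h x ∘ H.choose)
    else y0
  have g1 : ∀ x (e : Fin (k + 1) → Fin M), StrictMono e → sp (h x) = range e → G x = F e (h x ∘ e) := by
    intro x e he hs
    have H : ∃ e : Fin (k + 1) → Fin M, StrictMono e ∧ sp (h x) = range e := ⟨e, he, hs⟩
    simp only [G, dif_pos H]
    have : H.choose = e := (StrictMono.range_inj H.choose_spec.1 he).1 (H.choose_spec.2.symm.trans hs)
    rw [this]
  have g2 : ∀ x (e : Fin k → Fin M), StrictMono e → sp (h x) = range e → G x = g e (h x ∘ e) := by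
    intro x e he hs
    have H' : ¬ ∃ e : Fin (k + 1) → Fin M, StrictMono e ∧ sp (h x) = range e := by
      rintro ⟨e', he', hs'⟩
      have := hcr he'
      rw [← hs', hs, hcr he] at this
      omega
    have H : ∃ e : Fin k → Fin M, StrictMono e ∧ sp (h x) = range e := ⟨e, he, hs⟩
    simp only [G, dif_neg H', dif_pos H]
    have : H.choose = e := (StrictMono.range_inj H.choose_spec.1 he).1 (H.choose_spec.2.symm.trans hs)
    rw [this]
  have g3 : ∀ x, (sp (h x)).ncard < k → G x = y0 := by
    intro x hx
    have H' : ¬ ∃ e : Fin (k + 1) → Fin M, StrictMono e ∧ sp (h x) = range e := by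
      rintro ⟨e', he', hs'⟩
      rw [hs', hcr he'] at hx
      omega
    have H : ¬ ∃ e : Fin k → Fin M, StrictMono e ∧ sp (h x) = range e := by
      rintro ⟨e', he', hs'⟩
      rw [hs', hcr he'] at hx
      omega
    simp only [G, dif_neg H', dif_neg H]
  have l1 : ∀ x (e : Fin k → Fin M), StrictMono e → sp (h x) ⊆ range e → G x = g e (h x ∘ e) := by
    intro x e he hs
    by_cases hr : sp (h x) = range e
    · exact g2 x e he hr
    have hss : sp (h x) ⊂ range e := hs.ssubset_of_ne hr
    have hlt := ncard_lt_ncard hss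
    rw [hcr he] at hlt
    rw [g3 x hlt]
    obtain ⟨_, ⟨i, rfl⟩, hi⟩ := exists_of_ssubset hss
    exact ((hg e).bdry _ (restr_mem he.injective hs (hD x)) i (by simpa [sp] using hi)).symm
  have l2 : ∀ x (e : Fin (k + 1) → Fin M), StrictMono e → (∃ x, ∀ i, h x (e i) ≠ 0) →
      sp (h x) ⊆ range e → G x = F e (h x ∘ e) := by
    intro x e he hre hs
    by_cases hr : sp (h x) = range e
    · exact g1 x e he hr
    have hss : sp (h x) ⊂ range e := hs.ssubset_of_ne hr
    obtain ⟨_, ⟨i, rfl⟩, hi⟩ := exists_of_ssubset hss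
    rw [(hF e he hre).2.2 i _ (restr_mem he.injective hs (hD x)) (by simpa [sp] using hi)]
    refine l1 x _ (he.comp (Fin.strictMono_succAbove i)) ?_
    intro w hw
    obtain ⟨j, rfl⟩ := hs hw
    have : j ≠ i := by rintro rfl; exact hi hw
    obtain ⟨p, rfl⟩ := Fin.exists_succAbove_eq this
    exact ⟨p, rfl⟩
  have henum : ∀ (x : X) (m : ℕ), (sp (h x)).ncard = m → ∃ e : Fin m → Fin M, StrictMono e ∧ sp (h x) = range e := by
    intro x m hm
    rw [ncard_eq_toFinset_card'] at hm
    refine ⟨(sp (h x)).toFinset.orderEmbOfFin hm, OrderEmbedding.strictMono _, ?_⟩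
    rw [Finset.range_orderEmbOfFin]; simp
  refine ⟨G, ?_, ?_, g2, g1, g3⟩
  · let XT : {T : Set (Fin M) // ∃ x, sp (h x) = T} → Set X := fun T => {x | sp (h x) ⊆ T.1}
    refine LocallyFinite.continuous (f := XT) (locallyFinite_of_finite _) ?_ ?_ ?_
    · rw [eq_univ_iff_forall]
      intro x
      exact mem_iUnion.2 ⟨⟨_, x, rfl⟩, Subset.rfl⟩
    · intro T
      have : XT T = ⋂ w ∈ T.1ᶜ, {x | h x w = 0} := by
        ext x
        simp only [XT, sp, mem_iInter, mem_compl_iff]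
        constructor
        · intro hx w hw
          by_contra hn
          exact hw (hx hn)
        · intro hx w hw
          by_contra hn
          exact hw (hx w hn)
      rw [this]
      refine isClosed_biInter fun w _ => isClosed_eq ((continuous_apply w).comp hc) continuous_const
    · rintro ⟨_, x0, rfl⟩
      show ContinuousOn G {x | sp (h x) ⊆ sp (h x0)}
      have hcomp : ∀ {m : ℕ} (e : Fin m → Fin M), Continuous (fun x => h x ∘ e) := by
        intro m e
        exact continuous_pi fun i => (continuous_apply (e i)).comp hc
      rcases lt_trichotomy (sp (h x0)).ncard k with hk | hk | hk
      · refine (continuousOn_const (c := y0)).congr ?_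
        intro x hx
        exact g3 x (lt_of_le_of_lt (ncard_le_ncard hx) hk)
      · obtain ⟨e, he, hr⟩ := henum x0 k hk
        rw [hr]
        refine ((hg e).cont.comp (hcomp e).continuousOn ?_).congr fun x hx => l1 x e he hx
        intro x hx
        exact restr_mem he.injective hx (hD x)
      · obtain ⟨e, he, hr⟩ := henum x0 (k + 1) (le_antisymm (hcard x0) hk)
        have hre : ∃ x, ∀ i, h x (e i) ≠ 0 := ⟨x0, fun i => by
          have : e i ∈ sp (h x0) := by rw [hr]; exact ⟨i, rfl⟩
          exact this⟩
        rw [hr]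
        refine ((hF e he hre).1.comp (hcomp e).continuousOn ?_).congr fun x hx => l2 x e he hre hx
        intro x hx
        exact restr_mem he.injective hx (hD x)
  · intro x
    rcases lt_trichotomy (sp (h x)).ncard k with hk | hk | hk
    · rw [g3 x hk]; exact hy
    · obtain ⟨e, he, hr⟩ := henum x k hk
      rw [g2 x e he hr]
      exact (hg e).maps _ (restr_mem he.injective hr.subset (hD x))
    · obtain ⟨e, he, hr⟩ := henum x (k + 1) (le_antisymm (hcard x) hk)
      have hre : ∃ x, ∀ i, h x (e i) ≠ 0 := ⟨x, fun i => by
          have : e i ∈ sp (h x) := by rw [hr]; exact ⟨i, rfl⟩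
          exact this⟩
      rw [g1 x e he hr]
      exact (hF e he hre).2.1 _ (restr_mem he.injective hr.subset (hD x))

end MD

open Set Filter
set_option linter.unusedSectionVars false
set_option linter.style.haveILetI false
set_option linter.unusedSimpArgs false
set_option linter.unusedVariables false

namespace MD

section lab
variable {M k : ℕ}

noncomputable def lab (L : Fin M → Fin (k + 1)) (t : Fin M → ℝ) : Fin (k + 1) → ℝ :=
  fun i => ∑ w, t w * (if L w = i then 1 else 0)

theorem lab_cont (L : Fin M → Fin (k + 1)) : Continuous (lab L) := by
  unfold lab; fun_prop

theorem lab_mem (L : Fin M → Fin (k + 1)) {t : Fin M → ℝ} (ht : t ∈ Dl M) : lab L t ∈ Dl (k + 1) := by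
  refine ⟨fun i => Finset.sum_nonneg fun w _ => ?_, ?_⟩
  · have := ht.1 w
    split_ifs <;> simp [this]
  · simp only [lab]
    rw [Finset.sum_comm]
    simpa using ht.2

theorem lab_zero {L : Fin M → Fin (k + 1)} {t : Fin M → ℝ} {i : Fin (k + 1)} (h : ∀ w ∈ sp t, L w ≠ i) :
    lab L t i = 0 := by
  refine Finset.sum_eq_zero fun w _ => ?_
  by_cases hw : t w = 0
  · simp [hw]
  · simp [h w hw]

theorem lab_restr (L : Fin M → Fin (k + 1)) {m : ℕ} {t : Fin M → ℝ} {e : Fin m → Fin M}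
    (he : Function.Injective e) (hs : sp t ⊆ range e) : lab (L ∘ e) (t ∘ e) = lab L t := by
  funext i
  exact restr_sum he hs (fun w => if L w = i then 1 else 0)

end lab

theorem iota_isG {k : ℕ} [NeZero k] :
    IsG (Nc k) (ye k) k (fun t => kap 1 (lab (Fin.succ : Fin k → Fin (k + 1)) t)) where
  cont := (kap_cont.comp (continuous_const.prodMk (lab_cont _))).continuousOn
  maps t ht := kap_mem (lab_mem _ ht) (i := 0) (lab_zero fun w _ => Fin.succ_ne_zero w) zero_le_one le_rfl
  bdry t ht i hi := kap_one (lab_mem _ ht).1 (j := i) (lab_zero fun w hw h => by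
    rw [Fin.succ_inj] at h
    subst h
    exact hw hi)

theorem star_map {X P : Type*} [TopologicalSpace X] {k : ℕ} [NeZero k] (hk : 3 ≤ k) {M : ℕ}
    {h : X → Fin M → ℝ} (hc : Continuous h) (hD : ∀ x, h x ∈ Dl M)
    (hcard : ∀ x, (sp (h x)).ncard ≤ k + 1) (xw : Fin M → P) (lam : P → Fin (k + 1))
    (hmono : Monotone (lam ∘ xw)) (b : List P → ℤ)
    (hb : ∀ e : Fin (k + 1) → Fin M, StrictMono e → (∃ x, ∀ i, h x (e i) ≠ 0) →
      lin ℤ b (bd (el ℤ (List.ofFn (xw ∘ e)))) = ccoc lam (List.ofFn (xw ∘ e))) :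
    ∃ G : X → (Fin (k + 1) → ℝ), Continuous G ∧ (∀ x, G x ∈ Nc k) ∧
      ∀ x, (∃ i, ∀ w ∈ sp (h x), lam (xw w) ≠ i) →
        (∀ e : Fin k → Fin M, range e ⊆ sp (h x) → b (List.ofFn (xw ∘ e)) = 0) →
        G x = kap 1 (lab (lam ∘ xw) (h x)) := by
  classical
  obtain ⟨cl, h0, h1, hG, hfill⟩ := hadd hk ye_mem (iota_isG (k := k))
  set L := lam ∘ xw with hL
  -- key formula for codimension zero simplices
  have key : ∀ e : Fin k → Fin M, StrictMono e → ∀ t ∈ Dl k,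
      cl (acoc lam (List.ofFn (xw ∘ e))) t = kap 1 (lab (L ∘ e) t) := by
    intro e he t ht
    by_cases hs : lam ∘ (xw ∘ e) = Fin.succ
    · rw [acoc_one lam hs, h1]
      show kap 1 (lab _ t) = kap 1 (lab (lam ∘ (xw ∘ e)) t)
      rw [hs]
    · have hm : Monotone (lam ∘ (xw ∘ e)) := hmono.comp he.monotone
      rw [acoc_zero lam hm hs, h0]
      have : ∃ j : Fin k, ∀ i, lam (xw (e i)) ≠ j.succ := by
        by_contra hcon
        push Not at hcon
        exact hs (mono_succ hm hcon)
      obtain ⟨j, hj⟩ := this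
      exact (kap_one (lab_mem _ ht).1 (j := j) (lab_zero fun w _ => hj w)).symm
  let al : (Fin k → Fin M) → ℤ := fun e => acoc lam (List.ofFn (xw ∘ e)) - b (List.ofFn (xw ∘ e))
  let P : (Fin (k + 1) → Fin M) → Prop := fun e => (∃ i, ∀ w, L (e w) ≠ i) ∧
    ∀ p : Fin (k + 1), b (List.ofFn (xw ∘ (e ∘ p.succAbove))) = 0
  have hF : ∀ e : Fin (k + 1) → Fin M, ∃ F : (Fin (k + 1) → ℝ) → (Fin (k + 1) → ℝ),
      (StrictMono e → (∃ x, ∀ i, h x (e i) ≠ 0) → ContinuousOn F (Dl (k + 1)) ∧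
      (∀ t ∈ Dl (k + 1), F t ∈ Nc k) ∧ ∀ i, ∀ t ∈ Dl (k + 1), t i = 0 →
        F t = cl (al (e ∘ i.succAbove)) (t ∘ i.succAbove)) ∧ (P e → F = fun t => kap 1 (lab (L ∘ e) t)) := by
    intro e
    by_cases hP : P e
    · refine ⟨fun t => kap 1 (lab (L ∘ e) t), fun he hre => ⟨?_, ?_, ?_⟩, fun _ => rfl⟩
      · exact (kap_cont.comp (continuous_const.prodMk (lab_cont _))).continuousOn
      · intro t ht
        obtain ⟨i, hi⟩ := hP.1
        exact kap_mem (lab_mem _ ht) (i := i) (lab_zero fun w _ => hi w) zero_le_one le_rfl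
      · intro i t ht hti
        have : al (e ∘ i.succAbove) = acoc lam (List.ofFn (xw ∘ (e ∘ i.succAbove))) := by
          simp only [al]; rw [hP.2 i, sub_zero]
        rw [this, key _ (he.comp (Fin.strictMono_succAbove i)) _ (face_mem ht hti)]
        have := lab_restr (L ∘ e) (t := t) (e := i.succAbove) Fin.succAbove_right_injective (by
          intro w hw
          have : w ≠ i := by rintro rfl; exact hw hti
          obtain ⟨p, rfl⟩ := Fin.exists_succAbove_eq this
          exact ⟨p, rfl⟩)
        dsimp only
        rw [← this]
        rfl
    · by_cases H : StrictMono e ∧ (∃ x, ∀ i, h x (e i) ≠ 0)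
      · obtain ⟨F, f1, f2, f3⟩ := hfill (fun p => al (e ∘ p.succAbove)) (by
          have e1 := hb e H.1 H.2
          have e2 := ccoc_eq lam (l := List.ofFn (xw ∘ e)) (by simp)
          rw [lin_bd_ofFn] at e1 e2
          simp only [al, mul_sub, Finset.sum_sub_distrib]
          rw [sub_eq_zero]
          exact e2.trans e1.symm)
        exact ⟨F, fun _ _ => ⟨f1, f2, f3⟩, fun h => absurd h hP⟩
      · exact ⟨fun _ => ye k, fun a b => absurd ⟨a, b⟩ H, fun h => absurd h hP⟩
  choose F hF1 hF2 using hF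
  obtain ⟨G, hGc, hGS, g1, g2, g3⟩ := glue (ye_mem (k := k)) hc hD hcard (fun e => cl (al e)) (fun e => hG _) F hF1
  refine ⟨G, hGc, hGS, ?_⟩
  intro x hx hbx
  have henum : ∀ (m : ℕ), (sp (h x)).ncard = m → ∃ e : Fin m → Fin M, StrictMono e ∧ sp (h x) = range e := by
    intro m hm
    rw [ncard_eq_toFinset_card'] at hm
    refine ⟨(sp (h x)).toFinset.orderEmbOfFin hm, OrderEmbedding.strictMono _, ?_⟩
    rw [Finset.range_orderEmbOfFin]; simp
  rcases lt_trichotomy (sp (h x)).ncard k with hk' | hk' | hk'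
  · rw [g3 x hk']
    have : ∃ j : Fin k, ∀ w ∈ sp (h x), L w ≠ j.succ := by
      by_contra hcon
      push Not at hcon
      choose f hf1 hf2 using hcon
      have hfi : Function.Injective f := by
        intro a b hab
        have := congrArg L hab
        rw [hf2, hf2] at this
        exact Fin.succ_injective _ this
      have h3 := ncard_le_ncard (range_subset_iff.2 hf1)
      rw [ncard_range_of_injective hfi] at h3
      simp at h3
      omega
    obtain ⟨j, hj⟩ := this
    exact (kap_one (lab_mem _ (hD x)).1 (j := j) (lab_zero hj)).symm
  · obtain ⟨e, he, hr⟩ := henum k hk'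
    rw [g1 x e he hr]
    have : al e = acoc lam (List.ofFn (xw ∘ e)) := by
      simp only [al]; rw [hbx e hr.ge, sub_zero]
    rw [this, key e he _ (restr_mem he.injective hr.subset (hD x)), lab_restr L he.injective hr.subset]
  · obtain ⟨e, he, hr⟩ := henum (k + 1) (le_antisymm (hcard x) hk')
    rw [g2 x e he hr, hF2 e ⟨?_, ?_⟩]
    · dsimp only
      rw [lab_restr L he.injective hr.subset]
    · obtain ⟨i, hi⟩ := hx
      exact ⟨i, fun w => hi (e w) (by rw [hr]; exact ⟨w, rfl⟩)⟩
    · intro p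
      apply hbx
      rw [hr]
      exact range_comp_subset_range _ _

end MD

open Set Filter
set_option linter.unusedSectionVars false
set_option linter.style.haveILetI false
set_option linter.unusedSimpArgs false
set_option linter.unusedVariables false

namespace MD
open MeanDimPaper

theorem vertex_data {X : Type*} [MetricSpace X] [CompactSpace X] {k : ℕ} (hX : topDim X ≤ k) {δ : ℝ} (hδ : 0 < δ)
    {m : ℕ} (lam : X → Fin m) : ∃ (M : ℕ) (h : X → Fin M → ℝ) (xw : Fin M → X), Continuous h ∧
      (∀ x, h x ∈ Dl M) ∧ (∀ x, (sp (h x)).ncard ≤ k + 1) ∧ Monotone (lam ∘ xw) ∧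
      ∀ x w, h x w ≠ 0 → dist x (xw w) < δ := by
  classical
  obtain ⟨β, hfin, hcov, hord, hne, hdist⟩ := exists_small_cover hX hδ
  haveI : Fintype β := hfin.fintype
  have hne' : ∀ U : β, ∃ x, x ∈ U.1 := fun U => hne U.1 U.2
  choose x0 hx0 using hne'
  obtain ⟨f, hf⟩ := PartitionOfUnity.exists_isSubordinate (X := X) isClosed_univ (fun U : β => U.1)
    (fun U => hcov.1 _ U.2) (by
      intro x _
      have : x ∈ ⋃₀ β := by rw [hcov.2]; trivial
      obtain ⟨U, hU, hx⟩ := this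
      exact mem_iUnion.2 ⟨⟨U, hU⟩, hx⟩)
  have hmem : ∀ (U : β) x, f U x ≠ 0 → x ∈ U.1 := fun U x h =>
    hf U (subset_tsupport _ h)
  let e0 : Fin (Fintype.card β) ≃ β := (Fintype.equivFin β).symm
  let En : Fin (Fintype.card β) ≃ β := (Tuple.sort (fun i => lam (x0 (e0 i)))).trans e0
  refine ⟨Fintype.card β, fun x w => f (En w) x, fun w => x0 (En w), ?_, ?_, ?_, ?_, ?_⟩
  · exact continuous_pi fun w => (f (En w)).continuous
  · intro x
    refine ⟨fun w => f.nonneg _ _, ?_⟩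
    have := f.sum_eq_one (mem_univ x)
    rw [finsum_eq_sum_of_fintype] at this
    rw [← this]
    exact Equiv.sum_comp En (fun U => f U x)
  · intro x
    rw [ord_le_iff] at hord
    have hset : sp (fun w => f (En w) x) = ↑(Finset.univ.filter (fun w => f (En w) x ≠ 0)) := by
      ext w; simp [sp]
    rw [hset, ncard_coe_finset]
    have := hord x ((Finset.univ.filter (fun w => f (En w) x ≠ 0)).toList.map (fun w => (En w).1)) ?_ ?_
    · simpa using this
    · refine (Finset.nodup_toList _).map ?_
      exact Subtype.val_injective.comp En.injective
    · intro U hU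
      obtain ⟨w, hw, rfl⟩ := List.mem_map.1 hU
      refine ⟨(En w).2, hmem _ _ ?_⟩
      simpa using hw
  · exact Tuple.monotone_sort (fun i => lam (x0 (e0 i)))
  · intro x w hw
    exact hdist _ (En w).2 _ (hmem _ _ hw) _ (hx0 _)

theorem star {X : Type*} [MetricSpace X] [CompactSpace X] {q : ℕ} (hq : 1 ≤ q) (hX : topDim X ≤ (q + 2 : ℕ))
    (hQ : AD ℚ X q) (hp : ∀ p : ℕ, [Fact p.Prime] → AD (ZMod p) X q) (U : Fin (q + 3) → Set X)
    (hU : ∀ i, IsOpen (U i)) (hcov : ∀ x, ∃ i, x ∈ U i) :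
    ∃ V : Fin (q + 3) → Set X, (∀ i, IsOpen (V i)) ∧ (∀ i, V i ⊆ U i) ∧ (∀ x, ∃ i, x ∈ V i) ∧
      ∀ x, ∃ i, x ∉ V i := by
  classical
  obtain ⟨δ0, hδ0, hleb⟩ := lebesgue (X := X) (α := range U) ⟨by rintro _ ⟨i, rfl⟩; exact hU i, by
    rw [eq_univ_iff_forall]; intro x; obtain ⟨i, hi⟩ := hcov x; exact ⟨U i, ⟨i, rfl⟩, hi⟩⟩
  have : ∀ x, ∃ i, Metric.ball x δ0 ⊆ U i := by
    intro x; obtain ⟨_, ⟨i, rfl⟩, h⟩ := hleb x; exact ⟨i, h⟩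
  choose lam hlam using this
  set ε := δ0 / 4 with hε'
  have hε : 0 < ε := by positivity
  let S : Set X := {v | ∀ i, Metric.ball v (3 * ε) ⊆ U i}
  obtain ⟨δ, hδ, b, hb, hbS⟩ := zkill (n := q) hQ hp (c := ccoc lam) hε
    (fun l _ hl => ccoc_cocycle lam hl) (S := S) (by
      intro m hm hlen hcm v hv i y hy
      obtain ⟨u, hu, rfl⟩ := ccoc_full lam hcm i
      refine hlam u ?_
      rw [Metric.mem_ball] at hy ⊢
      have := dist_triangle y v u
      have := hm v hv u hu
      linarith) (ρ := ε / 2) (by positivity)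
  set δ' := min (ε / 2) (δ / 2) with hδ'
  have hδ'0 : 0 < δ' := by positivity
  have hd1 : δ' ≤ ε / 2 := min_le_left _ _
  have hd2 : δ' ≤ δ / 2 := min_le_right _ _
  obtain ⟨M, h, xw, hc, hD, hcard, hmono, hnear⟩ := vertex_data hX hδ'0 lam
  obtain ⟨G, hGc, hGN, hG⟩ := star_map (k := q + 2) (by omega) hc hD hcard xw lam hmono b (by
    rintro e he ⟨x, hx⟩
    refine hb _ ?_ (by simp)
    intro u hu v hv
    obtain ⟨i, rfl⟩ := List.mem_ofFn.1 hu
    obtain ⟨j, rfl⟩ := List.mem_ofFn.1 hv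
    have h1 := hnear x _ (hx i)
    have h2 := hnear x _ (hx j)
    have := dist_triangle_left (xw (e i)) (xw (e j)) x
    simp only [Function.comp]
    linarith)
  let A : Set X := {x | ∃ i, x ∉ U i}
  have hA : IsClosed A := by
    have : A = ⋃ i, (U i)ᶜ := by ext x; simp [A]
    rw [this]
    exact isClosed_iUnion_of_finite fun i => (hU i).isClosed_compl
  -- shallow points are not full
  have hshallow : ∀ x ∈ Metric.thickening (2 * ε) A, ∃ i, ∀ w ∈ sp (h x), lam (xw w) ≠ i := by
    intro x hx
    obtain ⟨a, ⟨i, hai⟩, hxa⟩ := Metric.mem_thickening_iff.1 hx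
    refine ⟨i, fun w hw hl => hai ?_⟩
    rw [← hl]
    refine hlam _ ?_
    rw [Metric.mem_ball']
    have := hnear x w hw
    have := dist_triangle_left (xw w) a x
    linarith
  have hshallow2 : ∀ x ∈ Metric.thickening (2 * ε) A, G x = kap 1 (lab (lam ∘ xw) (h x)) := by
    intro x hx
    refine hG x (hshallow x hx) ?_
    intro e he
    by_contra hbne
    obtain ⟨a, ⟨i, hai⟩, hxa⟩ := Metric.mem_thickening_iff.1 hx
    have h1 := hbS _ hbne (xw (e 0)) (List.mem_ofFn.2 ⟨0, rfl⟩)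
    obtain ⟨s, hs, hds⟩ := Metric.mem_thickening_iff.1 h1
    refine hai (hs i ?_)
    rw [Metric.mem_ball]
    have h2 := hnear x (e 0) (he ⟨0, rfl⟩)
    have h3 := dist_triangle4 a x (xw (e 0)) s
    rw [dist_comm a x] at h3
    linarith
  obtain ⟨t, ht0, ht1, htI⟩ := exists_continuous_zero_one_of_isClosed (X := X) hA
    (Metric.isOpen_thickening (δ := ε) (E := A)).isClosed_compl (by
      rw [disjoint_compl_right_iff_subset]
      exact Metric.self_subset_thickening hε A)
  let f' : X → (Fin (q + 2 + 1) → ℝ) := fun x =>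
    if x ∈ Metric.thickening ε A then kap (t x) (lab (lam ∘ xw) (h x)) else G x
  have hf'c : Continuous f' := by
    refine continuous_if ?_ ?_ hGc.continuousOn
    · intro x hx
      have hx1 : x ∈ Metric.thickening (2 * ε) A := by
        have : x ∈ closure (Metric.thickening ε A) := frontier_subset_closure hx
        exact Metric.cthickening_subset_thickening' (by positivity) (by linarith) A
          (Metric.closure_thickening_subset_cthickening _ _ this)
      have hx2 : x ∉ Metric.thickening ε A := by
        have : x ∈ frontier (Metric.thickening ε A) := hx
        rw [Metric.isOpen_thickening.frontier_eq] at this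
        exact this.2
      rw [hshallow2 x hx1, ht1 hx2]; rfl
    · refine Continuous.continuousOn ?_
      exact kap_cont.comp (t.continuous.prodMk ((lab_cont _).comp hc))
  have hf'N : ∀ x, f' x ∈ Nc (q + 2) := by
    intro x
    by_cases hx : x ∈ Metric.thickening ε A
    · simp only [f', if_pos hx]
      obtain ⟨i, hi⟩ := hshallow x (Metric.thickening_mono (by linarith) A hx)
      exact kap_mem (lab_mem _ (hD x)) (i := i) (lab_zero hi) (htI x).1 (htI x).2
    · simp only [f', if_neg hx]
      exact hGN x
  refine ⟨fun i => {x | ∃ j, f' x j < f' x i}, ?_, ?_, ?_, ?_⟩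
  · intro i
    have : {x | ∃ j, f' x j < f' x i} = ⋃ j, {x | f' x j < f' x i} := by ext; simp
    show IsOpen {x | ∃ j, f' x j < f' x i}
    rw [this]
    exact isOpen_iUnion fun j => isOpen_lt ((continuous_apply j).comp hf'c) ((continuous_apply i).comp hf'c)
  · rintro i x ⟨j, hj⟩
    by_contra hxi
    have hxA : x ∈ A := ⟨i, hxi⟩
    have hxt : x ∈ Metric.thickening ε A := Metric.self_subset_thickening hε A hxA
    simp only [f', if_pos hxt] at hj
    rw [ht0 hxA] at hj
    simp only [Pi.zero_apply, kap_zero] at hj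
    have h0 := (lab_mem (lam ∘ xw) (hD x)).1 j
    have : lab (lam ∘ xw) (h x) i = 0 := by
      refine lab_zero fun w hw hl => hxi ?_
      rw [← hl]
      refine hlam _ ?_
      rw [Metric.mem_ball]
      have := hnear x w hw
      linarith
    linarith
  · intro x
    obtain ⟨i, j, hij⟩ := hf'N x
    rcases lt_or_gt_of_ne hij with h | h
    · exact ⟨j, i, h⟩
    · exact ⟨i, j, h⟩
  · intro x
    obtain ⟨i, hi⟩ := Finite.exists_min (f' x)
    exact ⟨i, fun ⟨j, hj⟩ => absurd hj (not_lt.2 (hi j))⟩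

end MD

open Set Filter
set_option linter.unusedSectionVars false
set_option linter.style.haveILetI false
set_option linter.unusedSimpArgs false
set_option linter.unusedVariables false

namespace MD
open MeanDimPaper

theorem descent {X : Type*} [MetricSpace X] [CompactSpace X] {q : ℕ} (hq : 1 ≤ q) (hX : topDim X ≤ (q + 2 : ℕ))
    (hQ : AD ℚ X q) (hp : ∀ p : ℕ, [Fact p.Prime] → AD (ZMod p) X q) : topDim X ≤ (q + 1 : ℕ) := by
  classical
  refine topDim_le_of ?_
  intro α hα
  obtain ⟨β, hfin, hcov, href, hord, hne⟩ := exists_fin_refine hX hα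
  haveI : Fintype β := hfin.fintype
  have main : ∀ Ts : Finset (Fin (q + 3) → β), ∃ V : β → Set X, (∀ i, IsOpen (V i)) ∧ (∀ i, V i ⊆ i.1) ∧
      (∀ x, ∃ i, x ∈ V i) ∧ ∀ s ∈ Ts, Function.Injective s → ∀ x, ∃ j, x ∉ V (s j) := by
    intro Ts
    induction Ts using Finset.induction_on with
    | empty =>
      refine ⟨fun i => i.1, fun i => hcov.1 _ i.2, fun i => Subset.rfl, ?_, by simp⟩
      intro x
      have : x ∈ ⋃₀ β := by rw [hcov.2]; trivial
      obtain ⟨U, hU, hx⟩ := this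
      exact ⟨⟨U, hU⟩, hx⟩
    | insert s Ts hs ih =>
      obtain ⟨V, v1, v2, v3, v4⟩ := ih
      by_cases hinj : Function.Injective s
      swap
      · refine ⟨V, v1, v2, v3, ?_⟩
        intro s' hs' hi
        rcases Finset.mem_insert.1 hs' with rfl | h
        · exact absurd hi hinj
        · exact v4 s' h hi
      let W : Fin (q + 3) → Set X := fun j => if j = 0 then V (s 0) ∪ ⋃ i ∈ (range s)ᶜ, V i else V (s j)
      obtain ⟨W', w1, w2, w3, w4⟩ := star hq hX hQ hp W (by
        intro j
        by_cases hj : j = 0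
        · simp only [W, if_pos hj]
          exact (v1 _).union (isOpen_biUnion fun i _ => v1 i)
        · simp only [W, if_neg hj]
          exact v1 _) (by
        intro x
        obtain ⟨i, hi⟩ := v3 x
        by_cases hr : i ∈ range s
        · obtain ⟨j, rfl⟩ := hr
          by_cases hj : j = 0
          · refine ⟨0, ?_⟩
            simp only [W, if_true]
            left; rw [← hj]; exact hi
          · refine ⟨j, ?_⟩
            simp only [W, if_neg hj]; exact hi
        · refine ⟨0, ?_⟩
          simp only [W, if_true]
          right
          exact mem_iUnion₂.2 ⟨i, hr, hi⟩)
      let V' : β → Set X := fun i => if H : ∃ j, s j = i then W' H.choose ∩ V i else V i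
      have hV's : ∀ j, V' (s j) = W' j ∩ V (s j) := by
        intro j
        have H : ∃ j', s j' = s j := ⟨j, rfl⟩
        simp only [V', dif_pos H]
        rw [hinj H.choose_spec]
      have hV'V : ∀ i, V' i ⊆ V i := by
        intro i
        by_cases H : ∃ j, s j = i
        · simp only [V', dif_pos H]; exact inter_subset_right
        · simp only [V', dif_neg H]; exact Subset.rfl
      refine ⟨V', ?_, fun i => (hV'V i).trans (v2 i), ?_, ?_⟩
      · intro i
        by_cases H : ∃ j, s j = i
        · simp only [V', dif_pos H]; exact (w1 _).inter (v1 i)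
        · simp only [V', dif_neg H]; exact v1 i
      · intro x
        obtain ⟨j, hj⟩ := w3 x
        have hjW := w2 j hj
        by_cases hj0 : j = 0
        · simp only [W, if_pos hj0] at hjW
          rcases hjW with h | h
          · refine ⟨s j, ?_⟩
            rw [hV's]
            refine ⟨hj, ?_⟩
            rw [hj0]; exact h
          · obtain ⟨i, hi, hxi⟩ := mem_iUnion₂.1 h
            refine ⟨i, ?_⟩
            have H : ¬ ∃ j, s j = i := fun ⟨j, e⟩ => hi ⟨j, e⟩
            simp only [V', dif_neg H]; exact hxi
        · simp only [W, if_neg hj0] at hjW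
          exact ⟨s j, by rw [hV's]; exact ⟨hj, hjW⟩⟩
      · intro s' hs' hi x
        rcases Finset.mem_insert.1 hs' with rfl | h
        · obtain ⟨j, hj⟩ := w4 x
          exact ⟨j, fun h => hj (by rw [hV's] at h; exact h.1)⟩
        · obtain ⟨j, hj⟩ := v4 s' h hi x
          exact ⟨j, fun h => hj (hV'V _ h)⟩
  obtain ⟨V, v1, v2, v3, v4⟩ := main Finset.univ
  refine ⟨range V, ⟨?_, ?_⟩, ?_, ?_⟩
  · rintro _ ⟨i, rfl⟩; exact v1 i
  · rw [eq_univ_iff_forall]; intro x; obtain ⟨i, hi⟩ := v3 x; exact ⟨V i, ⟨i, rfl⟩, hi⟩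
  · rintro _ ⟨i, rfl⟩
    obtain ⟨U, hU, h⟩ := href i.1 i.2
    exact ⟨U, hU, (v2 i).trans h⟩
  · refine ord_range_le ?_
    intro x L hL hx
    by_contra hcon
    push Not at hcon
    obtain ⟨j, hj⟩ := v4 (fun j => L.get ⟨j.val, by omega⟩) (Finset.mem_univ _) (by
      intro a b hab
      have := (List.nodup_iff_injective_get.1 hL) hab
      simpa [Fin.ext_iff] using this) x
    exact hj (hx _ (List.get_mem _ _))

end MD

open Set Filter
set_option linter.unusedSectionVars false
set_option linter.style.haveILetI false
set_option linter.unusedSimpArgs false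
set_option linter.unusedVariables false

namespace MD
open MeanDimPaper

theorem pow_finite {K : Type*} [MetricSpace K] [CompactSpace K] {n : ℕ} (hK : topDim K ≤ n) (N : ℕ) :
    topDim (Fin N → K) ≤ (((n + 1) ^ N : ℕ) : ℕ∞) := by
  classical
  refine topDim_le_of_small ?_
  intro ε hε
  obtain ⟨β, hfin, hcov, hord, hne, hdist⟩ := exists_small_cover hK hε
  haveI : Fintype β := hfin.fintype
  let U : (Fin N → β) → Set (Fin N → K) := fun s => {x | ∀ i, x i ∈ (s i).1}
  refine ⟨range U, ⟨?_, ?_⟩, ?_, ?_⟩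
  · rintro _ ⟨s, rfl⟩
    have : U s = ⋂ i, (fun x : Fin N → K => x i) ⁻¹' (s i).1 := by ext x; simp [U]
    rw [this]
    exact isOpen_iInter_of_finite fun i => (hcov.1 _ (s i).2).preimage (continuous_apply i)
  · rw [eq_univ_iff_forall]
    intro x
    have : ∀ i, ∃ b : β, x i ∈ b.1 := by
      intro i
      have : x i ∈ ⋃₀ β := by rw [hcov.2]; trivial
      obtain ⟨V, hV, h⟩ := this
      exact ⟨⟨V, hV⟩, h⟩
    choose s hs using this
    exact ⟨U s, ⟨s, rfl⟩, hs⟩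
  · refine ord_range_le ?_
    intro x L hL hx
    have h1 : L.toFinset ⊆ Fintype.piFinset (fun i => Finset.univ.filter (fun b : β => x i ∈ b.1)) := by
      intro s hs
      rw [Fintype.mem_piFinset]
      intro i
      simpa using hx s (by simpa using hs) i
    have h2 := Finset.card_le_card h1
    rw [List.toFinset_card_of_nodup hL, Fintype.card_piFinset] at h2
    have h3 : ∀ i ∈ (Finset.univ : Finset (Fin N)), (Finset.univ.filter (fun b : β => x i ∈ b.1)).card ≤ n + 1 := by
      intro i _
      have := (ord_le_iff.1 hord) (x i) ((Finset.univ.filter (fun b : β => x i ∈ b.1)).toList.map Subtype.val)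
        ((Finset.nodup_toList _).map Subtype.val_injective) (by
          intro V hV
          obtain ⟨b, hb, rfl⟩ := List.mem_map.1 hV
          exact ⟨b.2, by simpa using hb⟩)
      simpa using this
    have h4 := Finset.prod_le_pow_card Finset.univ _ _ h3
    simp only [Finset.card_univ, Fintype.card_fin] at h4
    omega
  · rintro _ ⟨s, rfl⟩ x hx y hy
    rw [dist_pi_lt_iff hε]
    exact fun i => hdist _ (s i).2 _ (hx i) _ (hy i)

theorem dim_pow {K : Type*} [MetricSpace K] [CompactSpace K] {n : ℕ} (hK : topDim K ≤ n)
    (hQ : AD ℚ K 1) (hp : ∀ p : ℕ, [Fact p.Prime] → AD (ZMod p) K 1) {N : ℕ} (hN : 1 ≤ N) :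
    topDim (Fin N → K) ≤ (N + 1 : ℕ) := by
  have key : ∀ j : ℕ, topDim (Fin N → K) ≤ (N + 1 + j : ℕ) → topDim (Fin N → K) ≤ (N + 1 : ℕ) := by
    intro j
    induction j with
    | zero => exact id
    | succ j ih =>
      intro h
      apply ih
      have := descent (X := Fin N → K) (q := N + j) (by omega)
        (by rw [show N + j + 2 = N + 1 + (j + 1) by omega]; exact h)
        ((hQ.pow N).mono (by omega)) (fun p _ => ((hp p).pow N).mono (by omega))
      rw [show N + 1 + j = N + j + 1 by omega]
      exact this
  refine key ((n + 1) ^ N) ((pow_finite hK N).trans ?_)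
  exact_mod_cast (by omega : (n + 1) ^ N ≤ N + 1 + (n + 1) ^ N)

theorem AD_of_sq {F : Type*} [Field F] {K : Type*} [MetricSpace K] [CompactSpace K]
    (h2 : topDim K ≤ 2) (h3 : topDim (K × K) ≤ 3) : AD F K 1 := by
  refine lemmaD (k := 1) (by simpa using h2) ?_
  intro ε hε h
  have hh := h.prod h
  obtain ⟨β, -, hc, ho, -, hd⟩ := exists_small_cover (X := K × K) (n := 3) (by simpa using h3) (by positivity : 0 < ε / 4)
  exact ess_order (k := 3) hε hh hc ho hd

theorem pullback_cover {X Y : Type*} [TopologicalSpace X] [TopologicalSpace Y] {f : X → Y} (hf : Continuous f)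
    {β : Set (Set Y)} (hβ : IsOpenCover β) {n : ℕ} (ho : ord β ≤ n) :
    ∃ α : Set (Set X), IsOpenCover α ∧ ord α ≤ n ∧ ∀ U ∈ α, ∃ V ∈ β, ∀ x ∈ U, f x ∈ V := by
  refine ⟨range (fun V : β => f ⁻¹' V.1), ⟨?_, ?_⟩, ?_, ?_⟩
  · rintro _ ⟨V, rfl⟩; exact (hβ.1 _ V.2).preimage hf
  · rw [eq_univ_iff_forall]
    intro x
    have : f x ∈ ⋃₀ β := by rw [hβ.2]; trivial
    obtain ⟨V, hV, h⟩ := this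
    exact ⟨_, ⟨⟨V, hV⟩, rfl⟩, h⟩
  · refine ord_range_le ?_
    intro x L hL hx
    have := (ord_le_iff.1 ho) (f x) (L.map Subtype.val) (hL.map Subtype.val_injective) (by
      intro V hV
      obtain ⟨b, hb, rfl⟩ := List.mem_map.1 hV
      exact ⟨b.2, hx b hb⟩)
    simpa using this
  · rintro _ ⟨V, rfl⟩
    exact ⟨V.1, V.2, fun x hx => hx⟩

section compat
variable {X : Type*} [TopologicalSpace X] {d : X → X → ℝ}

theorem cm_nonneg (hd : IsCompatMetric d) (x y : X) : 0 ≤ d x y := by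
  have h1 := hd.triangle x y x
  rw [hd.refl, hd.symm y x] at h1
  linarith

theorem cm_ball (hd : IsCompatMetric d) (x : X) (r : ℝ) : IsOpen {y | d x y < r} := by
  rw [hd.isOpen_iff]
  intro y hy
  refine ⟨r - d x y, sub_pos.2 hy, fun z hz => ?_⟩
  have := hd.triangle x y z
  show d x z < r
  linarith

theorem cm_cont (hd : IsCompatMetric d) : Continuous (fun p : X × X => d p.1 p.2) := by
  rw [continuous_iff_continuousAt]
  rintro ⟨x, y⟩
  rw [ContinuousAt, Metric.tendsto_nhds]
  intro ε hε
  have hx : {z | d x z < ε / 2} ∈ nhds x := (cm_ball hd x _).mem_nhds (by simp [hd.refl, hε])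
  have hy : {z | d y z < ε / 2} ∈ nhds y := (cm_ball hd y _).mem_nhds (by simp [hd.refl, hε])
  filter_upwards [prod_mem_nhds hx hy]
  rintro ⟨x', y'⟩ ⟨h1, h2⟩
  have h1 : d x x' < ε / 2 := h1
  have h2 : d y y' < ε / 2 := h2
  rw [Real.dist_eq, abs_lt]
  have a1 := hd.triangle x x' y
  have a2 := hd.triangle x' y' y
  have a3 := hd.triangle x' x y'
  have a4 := hd.triangle x y y'
  rw [hd.symm y' y] at a2
  rw [hd.symm x' x] at a3
  constructor <;> simp only <;> linarith

theorem cm_bdd (hd : IsCompatMetric d) [CompactSpace X] : ∃ C, 0 ≤ C ∧ ∀ x y, d x y ≤ C := by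
  obtain ⟨C, hC⟩ := (isCompact_range (cm_cont hd)).bddAbove
  refine ⟨max C 0, le_max_right _ _, fun x y => (hC ⟨(x, y), rfl⟩).trans (le_max_left _ _)⟩

end compat

end MD

open Set Filter
set_option linter.unusedSectionVars false
set_option linter.style.haveILetI false
set_option linter.unusedSimpArgs false
set_option linter.unusedVariables false
open scoped ENNReal
namespace MD
open MeanDimPaper

theorem shift_iter {K : Type*} (i : ℕ) (x : ℤ → K) (j : ℤ) : ((shift K)^[i] x) j = x (j + i) := by
  induction i generalizing x with
  | zero => simp
  | succ i ih =>
    rw [Function.iterate_succ_apply, ih]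
    simp only [shift]
    congr 1
    push_cast
    ring

section asm
variable {K : Type*} [MetricSpace K] [CompactSpace K] {d : (ℤ → K) → (ℤ → K) → ℝ}

theorem asm_U (hd : IsCompatMetric d) {ε : ℝ} (hε : 0 < ε) :
    ∃ (m : ℕ) (η : ℝ), 0 < η ∧ ∀ x y : ℤ → K, (∀ j : ℤ, |j| ≤ m → dist (x j) (y j) < η) → d x y < ε := by
  let C : ℕ → Set ((ℤ → K) × (ℤ → K)) := fun m =>
    {p | ∀ j : ℤ, |j| ≤ m → dist (p.1 j) (p.2 j) ≤ 1 / ((m : ℝ) + 1)}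
  have hclosed : ∀ m, IsClosed (C m) := by
    intro m
    simp only [C, Set.ofPred_forall]
    refine isClosed_iInter fun j => isClosed_iInter fun _ => ?_
    exact isClosed_le (by fun_prop) continuous_const
  have hanti : ∀ m m', m ≤ m' → C m' ⊆ C m := by
    intro m m' h p hp j hj
    refine (hp j (hj.trans (by exact_mod_cast h))).trans ?_
    exact one_div_le_one_div_of_le (by positivity) (by have : (m : ℝ) ≤ m' := by exact_mod_cast h
                                                       linarith)
  have hdir : Directed (· ⊇ ·) C := fun a b =>
    ⟨max a b, hanti _ _ (le_max_left _ _), hanti _ _ (le_max_right _ _)⟩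
  have hU : IsOpen {p : (ℤ → K) × (ℤ → K) | d p.1 p.2 < ε} :=
    isOpen_lt (cm_cont hd) continuous_const
  obtain ⟨m, hm⟩ := exists_subset_nhds_of_compactSpace hdir hclosed
    (U := {p : (ℤ → K) × (ℤ → K) | d p.1 p.2 < ε}) (by
      rintro ⟨x, y⟩ hp
      refine hU.mem_nhds ?_
      have hxy : x = y := by
        funext j
        refine eq_of_forall_dist_le fun e he => ?_
        obtain ⟨n, hn⟩ := exists_nat_one_div_lt he
        have h1 := mem_iInter.1 hp (max n j.natAbs)
        have h2 := hanti n _ (le_max_left n j.natAbs)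
        have h3 := h1 j (by
          rw [Int.abs_eq_natAbs]
          exact_mod_cast le_max_right _ _)
        refine h3.trans (le_trans ?_ hn.le)
        refine one_div_le_one_div_of_le (by positivity) ?_
        have : (n : ℝ) ≤ (max n j.natAbs : ℕ) := by exact_mod_cast le_max_left _ _
        linarith
      subst hxy
      simpa [hd.refl] using hε)
  refine ⟨m, 1 / ((m : ℝ) + 1), by positivity, fun x y h => ?_⟩
  exact @hm (x, y) (fun j hj => (h j hj).le)

theorem asm_L (hd : IsCompatMetric d) {ε : ℝ} (hε : 0 < ε) :
    ∃ η : ℝ, 0 < η ∧ ∀ x y : ℤ → K, d x y < η → dist (x 0) (y 0) < ε := by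
  let C : ℕ → Set ((ℤ → K) × (ℤ → K)) := fun m =>
    {p | d p.1 p.2 ≤ 1 / ((m : ℝ) + 1)}
  have hclosed : ∀ m, IsClosed (C m) := fun m => isClosed_le (cm_cont hd) continuous_const
  have hanti : ∀ m m', m ≤ m' → C m' ⊆ C m := by
    intro m m' h p hp
    have hp' : d p.1 p.2 ≤ 1 / ((m' : ℝ) + 1) := hp
    refine le_trans hp' ?_
    exact one_div_le_one_div_of_le (by positivity) (by have : (m : ℝ) ≤ m' := by exact_mod_cast h
                                                       linarith)
  have hdir : Directed (· ⊇ ·) C := fun a b =>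
    ⟨max a b, hanti _ _ (le_max_left _ _), hanti _ _ (le_max_right _ _)⟩
  have hU : IsOpen {p : (ℤ → K) × (ℤ → K) | dist (p.1 0) (p.2 0) < ε} :=
    isOpen_lt (by fun_prop) continuous_const
  obtain ⟨m, hm⟩ := exists_subset_nhds_of_compactSpace hdir hclosed
    (U := {p : (ℤ → K) × (ℤ → K) | dist (p.1 0) (p.2 0) < ε}) (by
      rintro ⟨x, y⟩ hp
      refine hU.mem_nhds ?_
      have hxy : x = y := by
        refine hd.eq_of _ _ (le_antisymm ?_ (cm_nonneg hd _ _))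
        refine le_of_forall_pos_le_add fun e he => ?_
        obtain ⟨n, hn⟩ := exists_nat_one_div_lt he
        have h1 : d x y ≤ 1 / ((n : ℝ) + 1) := mem_iInter.1 hp n
        linarith
      subst hxy
      simpa using hε)
  refine ⟨1 / ((m : ℝ) + 1), by positivity, fun x y h => ?_⟩
  exact @hm (x, y) h.le

theorem asm_upper (hd : IsCompatMetric d)
    (hdim : ∀ N : ℕ, 1 ≤ N → topDim (Fin N → K) ≤ (N + 1 : ℕ)) {ε : ℝ} (hε : 0 < ε) :
    ∃ m : ℕ, ∀ n : ℕ, 1 ≤ n → widim ε (dynDist d (shift K) n) ≤ (n + m : ℕ) := by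
  obtain ⟨m, η, hη, hU⟩ := asm_U hd (half_pos hε)
  refine ⟨2 * m + 1, fun n hn => ?_⟩
  obtain ⟨β, -, hc, ho, -, hs⟩ := exists_small_cover (hdim (n + 2 * m) (by omega)) hη
  let f : (ℤ → K) → (Fin (n + 2 * m) → K) := fun x j => x ((j : ℤ) - m)
  have hf : Continuous f := by
    refine continuous_pi fun j => continuous_apply _
  obtain ⟨α, ha, hao, hab⟩ := pullback_cover hf hc ho
  have hcov : covD α ≤ (n + (2 * m + 1) : ℕ) := by
    refine (iInf₂_le (i := α) ⟨ha, fun V hV => ⟨V, hV, subset_rfl⟩⟩).trans ?_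
    exact hao.trans_eq (by congr 1)
  refine (iInf₂_le (i := α) ⟨ha, ?_⟩).trans hcov
  refine lt_of_le_of_lt ?_ (half_lt_self hε)
  refine Real.sSup_le ?_ (half_pos hε).le
  rintro _ ⟨U, hUa, rfl⟩
  refine Real.sSup_le ?_ (half_pos hε).le
  rintro _ ⟨x, hx, y, hy, rfl⟩
  refine Real.sSup_le ?_ (half_pos hε).le
  rintro _ ⟨i, hi, rfl⟩
  refine (hU _ _ fun j hj => ?_).le
  rw [shift_iter, shift_iter]
  obtain ⟨V, hV, hVm⟩ := hab U hUa
  have h1 := hs V hV _ (hVm x hx) _ (hVm y hy)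
  rw [abs_le] at hj
  have hlt : (j + i + m).toNat < n + 2 * m := by omega
  have h2 := (dist_pi_lt_iff hη).1 h1 ⟨(j + i + m).toNat, hlt⟩
  have h3 : (((j + i + m).toNat : ℕ) : ℤ) - m = j + i := by omega
  simp only [f] at h2
  rwa [h3] at h2

theorem asm_lower (hd : IsCompatMetric d) (h : ¬ topDim K ≤ 0) :
    ∃ ε : ℝ, 0 < ε ∧ ∀ n : ℕ, 1 ≤ n → (n : ℕ∞) ≤ widim ε (dynDist d (shift K) n) := by
  have hne : Nonempty K := by
    by_contra hne
    rw [not_nonempty_iff] at hne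
    refine h (topDim_le_of fun α hα => ⟨∅, ⟨by simp, ?_⟩, by simp [Refines], ?_⟩)
    · exact Subsingleton.elim _ _
    · refine iSup₂_le ?_
      rintro n ⟨f, -, hf, -⟩
      exact absurd (hf 0) (by simp)
  obtain ⟨b⟩ := hne
  obtain ⟨ε0, hε0, hE⟩ := Ess.one (R := ℚ) h
  obtain ⟨ε, hε, hL⟩ := asm_L hd (show 0 < ε0 / 4 by positivity)
  obtain ⟨C, hC0, hC⟩ := cm_bdd hd
  refine ⟨ε, hε, fun n hn => ?_⟩
  refine le_iInf₂ ?_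
  rintro α ⟨ha, hmesh⟩
  by_contra hlt
  rw [not_le] at hlt
  obtain ⟨k, rfl⟩ : ∃ k, n = k + 1 := ⟨n - 1, by omega⟩
  have hle : covD α ≤ (k : ℕ) := by
    rw [Nat.cast_add, Nat.cast_one] at hlt
    exact Order.lt_add_one_iff_of_not_isMax (by simp) |>.1 hlt
  obtain ⟨β, hb, hba, hbo⟩ := exists_of_covD_le hle
  let f : (Fin (k + 1) → K) → (ℤ → K) := fun v j =>
    if hj : 0 ≤ j ∧ j < k + 1 then v ⟨j.toNat, by omega⟩ else b
  have hf : Continuous f := by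
    refine continuous_pi fun j => ?_
    by_cases hj : 0 ≤ j ∧ j < k + 1
    · simp only [f, hj, and_self, dite_true]
      exact continuous_apply _
    · simp only [f, hj, dite_false]
      exact continuous_const
  obtain ⟨γ, hg, hgo, hgb⟩ := pullback_cover hf hb hbo
  refine ess_order hε0 (hE.pow (k + 1)) hg hgo ?_
  intro U hU v hv w hw
  obtain ⟨V, hV, hVm⟩ := hgb U hU
  obtain ⟨W, hW, hVW⟩ := hba V hV
  have hdynC : ∀ x y, dynDist d (shift K) (k + 1) x y ≤ C := by
    intro x y
    refine Real.sSup_le ?_ hC0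
    rintro _ ⟨i, _, rfl⟩
    exact hC _ _
  have hdiamC : ∀ W, diamD (dynDist d (shift K) (k + 1)) W ≤ C := by
    intro W
    refine Real.sSup_le ?_ hC0
    rintro _ ⟨x, _, y, _, rfl⟩
    exact hdynC _ _
  rw [dist_pi_lt_iff (by positivity)]
  intro i
  have e1 : d ((shift K)^[(i : ℕ)] (f v)) ((shift K)^[(i : ℕ)] (f w)) ≤
      dynDist d (shift K) (k + 1) (f v) (f w) := by
    refine le_csSup ⟨C, ?_⟩ ⟨i, i.2, rfl⟩
    rintro _ ⟨i, _, rfl⟩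
    exact hC _ _
  have e2 : dynDist d (shift K) (k + 1) (f v) (f w) ≤ diamD (dynDist d (shift K) (k + 1)) W := by
    refine le_csSup ⟨C, ?_⟩ ⟨f v, hVW (hVm v hv), f w, hVW (hVm w hw), rfl⟩
    rintro _ ⟨x, _, y, _, rfl⟩
    exact hdynC _ _
  have e3 : diamD (dynDist d (shift K) (k + 1)) W ≤ mesh (dynDist d (shift K) (k + 1)) α := by
    refine le_csSup ⟨C, ?_⟩ ⟨W, hW, rfl⟩
    rintro _ ⟨W, _, rfl⟩
    exact hdiamC _
  have e4 := hL _ _ (lt_of_le_of_lt (e1.trans (e2.trans e3)) hmesh)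
  rw [shift_iter, shift_iter] at e4
  have hi : (0 : ℤ) ≤ 0 + (i : ℕ) ∧ (0 : ℤ) + (i : ℕ) < k + 1 := by
    have := i.2
    omega
  have hii : (⟨((0 : ℤ) + (i : ℕ)).toNat, by omega⟩ : Fin (k + 1)) = i := by
    ext
    simp
  simp only [f] at e4
  rw [dif_pos hi, dif_pos hi, hii] at e4
  exact e4

theorem main (h2 : topDim K = 2) (h3 : topDim (K × K) = 3) (hd : IsCompatMetric d) :
    mdim (shift K) d = 1 := by
  have hdim : ∀ N : ℕ, 1 ≤ N → topDim (Fin N → K) ≤ (N + 1 : ℕ) := fun N hN =>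
    dim_pow (n := 2) (by rw [h2]; rfl) (AD_of_sq h2.le h3.le) (fun p _ => AD_of_sq h2.le h3.le) hN
  apply le_antisymm
  · refine iSup₂_le fun ε hε => ?_
    obtain ⟨m, hm⟩ := asm_upper hd hdim hε
    have ht : Tendsto (fun n : ℕ => 1 + (m : ℝ≥0∞) / (n : ℝ≥0∞)) atTop (nhds 1) := by
      have h0 : Tendsto (fun n : ℕ => (m : ℝ≥0∞) / (n : ℝ≥0∞)) atTop (nhds 0) := by
        have := ENNReal.Tendsto.const_div (a := (m : ℝ≥0∞)) ENNReal.tendsto_nat_nhds_top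
          (Or.inr (ENNReal.natCast_ne_top m))
        simpa using this
      simpa using h0.const_add 1
    rw [← ht.liminf_eq]
    refine liminf_le_liminf ?_
    filter_upwards [eventually_ge_atTop 1] with n hn
    have hn0 : (n : ℝ≥0∞) ≠ 0 := by
      have : n ≠ 0 := by omega
      exact_mod_cast this
    have hle : (widim ε (dynDist d (shift K) n) : ℝ≥0∞) ≤ (n : ℝ≥0∞) + m := by
      have := ENat.toENNReal_le.2 (hm n hn)
      simpa using this
    calc _ ≤ ((n : ℝ≥0∞) + m) / n := ENNReal.div_le_div_right hle _
      _ = 1 + (m : ℝ≥0∞) / n := by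
        rw [ENNReal.add_div, ENNReal.div_self hn0 (ENNReal.natCast_ne_top n)]
  · obtain ⟨ε, hε, hl⟩ := asm_lower hd (by rw [h2]; simp)
    refine le_trans ?_ (le_iSup₂ (f := fun (ε : ℝ) (_ : 0 < ε) =>
      Filter.liminf (fun n : ℕ => (widim ε (dynDist d (shift K) n) : ℝ≥0∞) / (n : ℝ≥0∞))
        Filter.atTop) ε hε)
    refine le_liminf_of_le (by isBoundedDefault) ?_
    filter_upwards [eventually_ge_atTop 1] with n hn
    have hn0 : (n : ℝ≥0∞) ≠ 0 := by
      have : n ≠ 0 := by omega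
      exact_mod_cast this
    have hle : (n : ℝ≥0∞) ≤ (widim ε (dynDist d (shift K) n) : ℝ≥0∞) := by
      have := ENat.toENNReal_le.2 (hl n hn)
      simpa using this
    rw [← ENNReal.div_self hn0 (ENNReal.natCast_ne_top n)]
    exact ENNReal.div_le_div_right hle _

end asm
end MD

namespace MeanDimPaper

variable {X : Type*} [TopologicalSpace X]

/-- if `K` is a compact metric space with `dim K = 2` and `dim K² = 3`
(e.g. the Boltyanskiĭ surface), then the full shift on the alphabet `K` has mean
dimension `1`; in particular `mdim(K^ℤ, σ) < dim K`. -/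
theorem mdim_fullshift_boltyanskii {K : Type*} [MetricSpace K] [CompactSpace K]
    (h2 : topDim K = 2) (h3 : topDim (K × K) = 3)
    (d : (ℤ → K) → (ℤ → K) → ℝ) (hd : IsCompatMetric d) :
    mdim (shift K) d = 1 ∧ mdim (shift K) d < (topDim K : ℝ≥0∞) := by
  have h := MD.main h2 h3 hd
  refine ⟨h, ?_⟩
  rw [h, h2]
  simp

end MeanDimPaper
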